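/- Let k be a commutative unital ring and ε ∈ k invertible. The morphism Tor_q^{BR_{n-1}(ε)}(𝟙,𝟙) → Tor_q^{BR_n(ε)}(𝟙,𝟙) induced by the inclusion BR_{n-1}(ε) → BR_n(ε) is an isomorphism for n ≥ 2q+1. -/

import Mathlib

open scoped TensorProduct

noncomputable section

/-! ### Bar-complex homology of an augmented algebra

For a `k`-algebra `A` with augmentation `ε : A →ₐ[k] k` (the algebra map corresponding to
the trivial module `𝟙 = k`), we form the (unnormalized) bar complex `C_q = A^{⊗ q}`
(tensors over `k`), with the usual differential
`d(a₁⊗…⊗a_q) = ε(a₁)(a₂⊗…) + Σ (-1)^i (…a_i a_{i+1}…) + (-1)^q ε(a_q)(a₁⊗…)`,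
whose homology is `Tor_*^A(𝟙,𝟙)`. -/

/-- The modules `A^{⊗ q}` of the bar complex. -/
def barC (k : Type) [CommRing k] (A : Type) [Ring A] [Algebra k A] : ℕ → ModuleCat k
  | 0 => ModuleCat.of k k
  | (q + 1) => ModuleCat.of k (A ⊗[k] (barC k A q))

variable (k : Type) [CommRing k] (A : Type) [Ring A] [Algebra k A] (ε : A →ₐ[k] k)

/-- Left multiplication of `A` on the leftmost bar factor (via `ε` in degree `0`). -/
def barAct : ∀ q : ℕ, A →ₗ[k] ((barC k A q : Type) →ₗ[k] (barC k A q : Type))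
  | 0 => (LinearMap.lsmul k k).comp ε.toLinearMap
  | (q + 1) =>
    show A →ₗ[k] ((A ⊗[k] (barC k A q : Type)) →ₗ[k] (A ⊗[k] (barC k A q : Type))) from
    { toFun := fun a => TensorProduct.map (LinearMap.mulLeft k a) LinearMap.id
      map_add' := by
        intro a b
        refine TensorProduct.ext' fun x y => ?_
        simp [add_mul, TensorProduct.add_tmul]
      map_smul' := by
        intro c a
        refine TensorProduct.ext' fun x y => ?_
        simp [TensorProduct.smul_tmul', smul_mul_assoc] }

/-- All terms of the bar differential except the first face. -/
def barB : ∀ q : ℕ, ((A ⊗[k] (barC k A q : Type)) →ₗ[k] (barC k A q : Type))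
  | 0 => - TensorProduct.lift ((LinearMap.lsmul k (barC k A 0 : Type)).comp ε.toLinearMap)
  | (q + 1) =>
    show (A ⊗[k] (A ⊗[k] (barC k A q : Type))) →ₗ[k] (A ⊗[k] (barC k A q : Type)) from
    TensorProduct.lift (LinearMap.mk₂ k
      (fun (a : A) (x : A ⊗[k] (barC k A q : Type)) =>
        -((show A →ₗ[k] ((A ⊗[k] (barC k A q : Type)) →ₗ[k] (A ⊗[k] (barC k A q : Type))) from
            barAct k A ε (q + 1)) a x) - a ⊗ₜ[k] (barB q x))
      (by intro a b x
          have key : ∀ (f : A →ₗ[k] ((A ⊗[k] (barC k A q : Type)) →ₗ[k] (A ⊗[k] (barC k A q : Type))))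
              (g : (A ⊗[k] (barC k A q : Type)) →ₗ[k] (barC k A q : Type)),
              -(f (a + b) x) - (a + b) ⊗ₜ[k] (g x)
                = (-(f a x) - a ⊗ₜ[k] (g x)) + (-(f b x) - b ⊗ₜ[k] (g x)) := by
            intro f g
            simp only [map_add, LinearMap.add_apply, TensorProduct.add_tmul]
            abel
          exact key (barAct k A ε (q + 1)) (barB q))
      (by intro c a x
          have key : ∀ (f : A →ₗ[k] ((A ⊗[k] (barC k A q : Type)) →ₗ[k] (A ⊗[k] (barC k A q : Type))))
              (g : (A ⊗[k] (barC k A q : Type)) →ₗ[k] (barC k A q : Type)),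
              -(f (c • a) x) - (c • a) ⊗ₜ[k] (g x)
                = c • (-(f a x) - a ⊗ₜ[k] (g x)) := by
            intro f g
            simp only [map_smul, LinearMap.smul_apply, smul_sub, smul_neg,
              TensorProduct.smul_tmul']
          exact key (barAct k A ε (q + 1)) (barB q))
      (by intro a x y
          simp only [map_add, LinearMap.map_add, TensorProduct.tmul_add]
          try abel)
      (by intro c a x
          simp only [map_smul, LinearMap.map_smul, TensorProduct.tmul_smul, smul_sub, smul_neg]
          try abel))

/-- The bar differential `C_{q+1} = A ⊗ C_q → C_q`. -/
def bard (q : ℕ) : (A ⊗[k] (barC k A q : Type)) →ₗ[k] (barC k A q : Type) :=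
  TensorProduct.lift ((LinearMap.lsmul k (barC k A q : Type)).comp ε.toLinearMap)
  + barB k A ε q

/-- Cycles of the bar complex. -/
def barCycles : ∀ q : ℕ, Submodule k (barC k A q : Type)
  | 0 => ⊤
  | (q + 1) =>
    show Submodule k (barC k A (q + 1) : Type) from LinearMap.ker (bard k A ε q)

/-- `Tor_q^A(𝟙, 𝟙)`, the homology of the algebra `A` with augmentation (trivial module) `ε`,
computed by the bar complex. -/
def barTor (q : ℕ) : Type :=
  (barCycles k A ε q) ⧸
    (Submodule.comap (barCycles k A ε q).subtype (LinearMap.range (bard k A ε q)))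

instance (q : ℕ) : AddCommGroup (barTor k A ε q) :=
  inferInstanceAs (AddCommGroup ((barCycles k A ε q) ⧸
    (Submodule.comap (barCycles k A ε q).subtype (LinearMap.range (bard k A ε q)))))

instance (q : ℕ) : Module k (barTor k A ε q) :=
  inferInstanceAs (Module k ((barCycles k A ε q) ⧸
    (Submodule.comap (barCycles k A ε q).subtype (LinearMap.range (bard k A ε q)))))

/-- The augmentation of a group algebra `k[G]`, corresponding to the trivial action of `G`
on `k`. -/
def groupAug (G : Type) [Group G] : MonoidAlgebra k G →ₐ[k] k :=
  MonoidAlgebra.lift k k G 1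

/-- Group homology `H_*(G; k) = Tor_*^{k[G]}(k, k)` (with the trivial action on `k`). -/
abbrev groupTor (G : Type) [Group G] (q : ℕ) : Type :=
  barTor k (MonoidAlgebra k G) (groupAug k G) q

section TorFunctoriality

variable (k : Type) [CommRing k]

/-- `barAct` in positive degrees, with its domain and codomain presented as tensor
products. -/
noncomputable abbrev barActT (A : Type) [Ring A] [Algebra k A] (ε : A →ₐ[k] k) (q : ℕ) :
    A →ₗ[k] ((A ⊗[k] (barC k A q : Type)) →ₗ[k] (A ⊗[k] (barC k A q : Type))) :=
  barAct k A ε (q + 1)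

theorem barActT_tmul (A : Type) [Ring A] [Algebra k A] (ε : A →ₐ[k] k) (q : ℕ)
    (a b : A) (x : (barC k A q : Type)) :
    barActT k A ε q a (b ⊗ₜ[k] x) = (a * b) ⊗ₜ[k] x := rfl

theorem barB_zero_apply (A : Type) [Ring A] [Algebra k A] (ε : A →ₐ[k] k)
    (a : A) (c : (barC k A 0 : Type)) :
    barB k A ε 0 (a ⊗ₜ[k] c) = -(ε a • c) := rfl

theorem barB_succ_apply (A : Type) [Ring A] [Algebra k A] (ε : A →ₐ[k] k) (q : ℕ)
    (a : A) (x : A ⊗[k] (barC k A q : Type)) :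
    barB k A ε (q + 1) (a ⊗ₜ[k] x)
      = -(barActT k A ε q a x) - a ⊗ₜ[k] (barB k A ε q x) := by
  rfl

variable {A₁ A₂ : Type} [Ring A₁] [Algebra k A₁] [Ring A₂] [Algebra k A₂]

/-- The chain map between bar complexes induced by an algebra map. -/
noncomputable def barMap (φ : A₁ →ₐ[k] A₂) :
    ∀ q : ℕ, (barC k A₁ q : Type) →ₗ[k] (barC k A₂ q : Type)
  | 0 => LinearMap.id
  | (q + 1) =>
    show (A₁ ⊗[k] (barC k A₁ q : Type)) →ₗ[k] (A₂ ⊗[k] (barC k A₂ q : Type)) from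
      TensorProduct.map φ.toLinearMap (barMap φ q)

theorem barActT_comm (ε₁ : A₁ →ₐ[k] k) (ε₂ : A₂ →ₐ[k] k) (φ : A₁ →ₐ[k] A₂)
    (q : ℕ) (a : A₁) :
    (barActT k A₂ ε₂ q (φ a)).comp (TensorProduct.map φ.toLinearMap (barMap k φ q))
      = (TensorProduct.map φ.toLinearMap (barMap k φ q)).comp (barActT k A₁ ε₁ q a) := by
  refine TensorProduct.ext' fun b y => ?_
  simp only [LinearMap.coe_comp, Function.comp_apply, TensorProduct.map_tmul]
  rw [barActT_tmul, barActT_tmul, TensorProduct.map_tmul]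
  simp [map_mul]

theorem barB_comm (ε₁ : A₁ →ₐ[k] k) (ε₂ : A₂ →ₐ[k] k) (φ : A₁ →ₐ[k] A₂)
    (hφ : ε₂.comp φ = ε₁) : ∀ q : ℕ,
    (barB k A₂ ε₂ q).comp (TensorProduct.map φ.toLinearMap (barMap k φ q))
      = (barMap k φ q).comp (barB k A₁ ε₁ q)
  | 0 => by
    have key : ∀ a : A₁, ε₂ (φ a) = ε₁ a := fun a => by
      have := AlgHom.congr_fun hφ a
      simpa using this
    refine TensorProduct.ext' fun a c => ?_
    simp only [LinearMap.coe_comp, Function.comp_apply, TensorProduct.map_tmul]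
    rw [barB_zero_apply]
    show -(ε₂ (φ.toLinearMap a) • (barMap k φ 0 c)) = barMap k φ 0 (barB k A₁ ε₁ 0 (a ⊗ₜ[k] c))
    rw [barB_zero_apply]
    show -(ε₂ (φ a) • c) = -(ε₁ a • c)
    rw [key a]
  | (q + 1) => by
    refine TensorProduct.ext' fun a (x : A₁ ⊗[k] (barC k A₁ q : Type)) => ?_
    have h1 := LinearMap.congr_fun (barActT_comm k ε₁ ε₂ φ q a) x
    simp only [LinearMap.coe_comp, Function.comp_apply] at h1
    have h2 := LinearMap.congr_fun (barB_comm ε₁ ε₂ φ hφ q) x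
    simp only [LinearMap.coe_comp, Function.comp_apply] at h2
    refine (barB_succ_apply k A₂ ε₂ q (φ.toLinearMap a)
      (TensorProduct.map φ.toLinearMap (barMap k φ q) x)).trans ?_
    refine Eq.trans ?_ (congrArg (barMap k φ (q + 1)) (barB_succ_apply k A₁ ε₁ q a x)).symm
    show -(barActT k A₂ ε₂ q (φ.toLinearMap a)
            ((TensorProduct.map φ.toLinearMap (barMap k φ q)) x))
        - (φ.toLinearMap a) ⊗ₜ[k]
            (barB k A₂ ε₂ q ((TensorProduct.map φ.toLinearMap (barMap k φ q)) x))
      = TensorProduct.map φ.toLinearMap (barMap k φ q)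
          (-(barActT k A₁ ε₁ q a x) - a ⊗ₜ[k] (barB k A₁ ε₁ q x))
    rw [map_sub, map_neg, TensorProduct.map_tmul]
    simp only [AlgHom.toLinearMap_apply]
    rw [h1, h2]

/-- The chain map induced by an augmentation-preserving algebra map commutes with the
bar differential. -/
theorem barMap_comm (ε₁ : A₁ →ₐ[k] k) (ε₂ : A₂ →ₐ[k] k) (φ : A₁ →ₐ[k] A₂)
    (hφ : ε₂.comp φ = ε₁) (q : ℕ) :
    (bard k A₂ ε₂ q).comp (TensorProduct.map φ.toLinearMap (barMap k φ q))
      = (barMap k φ q).comp (bard k A₁ ε₁ q) := by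
  have key : ∀ a : A₁, ε₂ (φ a) = ε₁ a := fun a => by
    have := AlgHom.congr_fun hφ a
    simpa using this
  unfold bard
  rw [LinearMap.add_comp, LinearMap.comp_add, barB_comm k ε₁ ε₂ φ hφ q]
  congr 1
  refine TensorProduct.ext' fun a x => ?_
  simp only [LinearMap.coe_comp, Function.comp_apply, TensorProduct.map_tmul,
    TensorProduct.lift.tmul, LinearMap.lsmul_apply, AlgHom.toLinearMap_apply,
    LinearMap.map_smul]
  rw [key a]

theorem barMap_cycles (ε₁ : A₁ →ₐ[k] k) (ε₂ : A₂ →ₐ[k] k) (φ : A₁ →ₐ[k] A₂)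
    (hφ : ε₂.comp φ = ε₁) (q : ℕ) :
    ∀ x ∈ barCycles k A₁ ε₁ q, barMap k φ q x ∈ barCycles k A₂ ε₂ q := by
  intro x hx
  cases q with
  | zero => trivial
  | succ q =>
    show barMap k φ (q+1) x ∈ LinearMap.ker (bard k A₂ ε₂ q)
    have hx' : bard k A₁ ε₁ q x = 0 := hx
    have h := LinearMap.congr_fun (barMap_comm k ε₁ ε₂ φ hφ q) x
    simp only [LinearMap.coe_comp, Function.comp_apply] at h
    show bard k A₂ ε₂ q (TensorProduct.map φ.toLinearMap (barMap k φ q) x) = 0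
    exact h.trans ((congrArg (barMap k φ q) hx').trans (map_zero _))

/-- The map on `Tor_q(𝟙,𝟙)` induced by an augmentation-preserving algebra map. -/
noncomputable def torMap (ε₁ : A₁ →ₐ[k] k) (ε₂ : A₂ →ₐ[k] k) (φ : A₁ →ₐ[k] A₂)
    (hφ : ε₂.comp φ = ε₁) (q : ℕ) :
    barTor k A₁ ε₁ q →ₗ[k] barTor k A₂ ε₂ q := by
  refine Submodule.mapQ _ _
    ((barMap k φ q).restrict (barMap_cycles k ε₁ ε₂ φ hφ q)) ?_
  intro x hx
  simp only [Submodule.mem_comap, LinearMap.mem_range] at hx ⊢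
  obtain ⟨y, hy⟩ := hx
  refine ⟨TensorProduct.map φ.toLinearMap (barMap k φ q) y, ?_⟩
  have h := LinearMap.congr_fun (barMap_comm k ε₁ ε₂ φ hφ q) y
  simp only [LinearMap.coe_comp, Function.comp_apply] at h
  rw [h, hy]
  rfl

end TorFunctoriality

section BRsection

/-! The braided rook algebra `BR_n(ε)`: generators `b i`/`bi i` (positive/negative
crossings of strands `i, i+1`) and `p j` (the identity diagram with strand `j` deleted);
an isolated middle vertex arising in a composition is a contractible component and
contributes the factor `ε`. -/

inductive BRGen (n : ℕ) : Type
  | b : Fin (n - 1) → BRGen n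
  | bi : Fin (n - 1) → BRGen n
  | p : Fin n → BRGen n

variable (k : Type) [CommRing k] (n : ℕ) (ε : k)

abbrev BRb (i : Fin (n - 1)) : FreeAlgebra k (BRGen n) := FreeAlgebra.ι k (BRGen.b i)
abbrev BRbi (i : Fin (n - 1)) : FreeAlgebra k (BRGen n) := FreeAlgebra.ι k (BRGen.bi i)
abbrev BRp (j : Fin n) : FreeAlgebra k (BRGen n) := FreeAlgebra.ι k (BRGen.p j)

/-- The diagrammatic relations. -/
inductive BRRel : FreeAlgebra k (BRGen n) → FreeAlgebra k (BRGen n) → Prop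
  | b_inv_r (i : Fin (n - 1)) :
      BRRel (BRb k n i * BRbi k n i) (1)
  | b_inv_l (i : Fin (n - 1)) :
      BRRel (BRbi k n i * BRb k n i) (1)
  | b_braid (i j : Fin (n - 1)) (h : (j : ℕ) = (i : ℕ) + 1) :
      BRRel (BRb k n i * BRb k n j * BRb k n i) (BRb k n j * BRb k n i * BRb k n j)
  | bb_comm (i j : Fin (n - 1)) (h : (i : ℕ) + 1 < (j : ℕ)) :
      BRRel (BRb k n i * BRb k n j) (BRb k n j * BRb k n i)
  | p_sq (j : Fin n) :
      BRRel (BRp k n j * BRp k n j) (ε • BRp k n j)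
  | pp_comm (j l : Fin n) (h : (j : ℕ) < (l : ℕ)) :
      BRRel (BRp k n j * BRp k n l) (BRp k n l * BRp k n j)
  | bp_comm (i : Fin (n - 1)) (l : Fin n) (h : (l : ℕ) ≠ (i : ℕ) ∧ (l : ℕ) ≠ (i : ℕ) + 1) :
      BRRel (BRb k n i * BRp k n l) (BRp k n l * BRb k n i)
  | bp_slide (i : Fin (n - 1)) (j j' : Fin n) (h : (j : ℕ) = (i : ℕ)) (h' : (j' : ℕ) = (i : ℕ) + 1) :
      BRRel (BRb k n i * BRp k n j) (BRp k n j' * BRb k n i)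
  | bp_slide' (i : Fin (n - 1)) (j j' : Fin n) (h : (j : ℕ) = (i : ℕ)) (h' : (j' : ℕ) = (i : ℕ) + 1) :
      BRRel (BRb k n i * BRp k n j') (BRp k n j * BRb k n i)
  | pbp (i : Fin (n - 1)) (j j' : Fin n) (h : (j : ℕ) = (i : ℕ)) (h' : (j' : ℕ) = (i : ℕ) + 1) :
      BRRel (BRp k n j * BRb k n i * BRp k n j) (BRp k n j * BRp k n j')
  | pbb (i : Fin (n - 1)) (j : Fin n) (h : (j : ℕ) = (i : ℕ)) :
      BRRel (BRp k n j * BRb k n i * BRb k n i) (BRp k n j)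
  | pbb' (i : Fin (n - 1)) (j' : Fin n) (h' : (j' : ℕ) = (i : ℕ) + 1) :
      BRRel (BRp k n j' * BRb k n i * BRb k n i) (BRp k n j')

/-- The diagram algebra: the quotient of the free algebra on the diagram generators by
the diagrammatic relations. -/
abbrev BRAlg : Type := RingQuot (BRRel k n ε)

/-- The augmentation corresponding to the trivial module `𝟙`: a diagram acts by `1`
if it has `n` left-to-right connections, and by `0` otherwise. -/
noncomputable def BRaug : BRAlg k n ε →ₐ[k] k :=
  RingQuot.liftAlgHom k ⟨FreeAlgebra.lift k
      (fun x => match x with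
        | BRGen.b _ => (1 : k)
        | BRGen.bi _ => (1 : k)
        | BRGen.p _ => (0 : k)),
    by rintro x y h
       induction h <;>
         simp [BRb, BRbi, BRp, FreeAlgebra.lift_ι_apply]⟩

end BRsection

section BRinclsection

variable (k : Type) [CommRing k] (n : ℕ) (ε : k)

/-- Extending a diagram by an extra horizontal strand at the bottom, on generators. -/
def BRGenMap : BRGen (n - 1) → BRGen n
  | .b i => .b (Fin.castLE (by omega) i)
  | .bi i => .bi (Fin.castLE (by omega) i)
  | .p i => .p (Fin.castLE (by omega) i)

/-- The diagrammatic relations are preserved by the extension of diagrams. -/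
theorem BRRel_map {x y : FreeAlgebra k (BRGen (n - 1))} (h : BRRel k (n - 1) ε x y) :
    BRRel k n ε
      ((FreeAlgebra.lift k fun g => FreeAlgebra.ι k (BRGenMap n g)) x)
      ((FreeAlgebra.lift k fun g => FreeAlgebra.ι k (BRGenMap n g)) y) := by
  induction h with
  | b_inv_r i =>
    simp only [map_mul, map_one, map_smul, FreeAlgebra.lift_ι_apply, BRGenMap]
    exact BRRel.b_inv_r _
  | b_inv_l i =>
    simp only [map_mul, map_one, map_smul, FreeAlgebra.lift_ι_apply, BRGenMap]
    exact BRRel.b_inv_l _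
  | b_braid i j h =>
    simp only [map_mul, map_one, map_smul, FreeAlgebra.lift_ι_apply, BRGenMap]
    exact BRRel.b_braid _ _ (by simp_all [Fin.ext_iff, Fin.coe_castLE] <;> omega)
  | bb_comm i j h =>
    simp only [map_mul, map_one, map_smul, FreeAlgebra.lift_ι_apply, BRGenMap]
    exact BRRel.bb_comm _ _ (by simp_all [Fin.ext_iff, Fin.coe_castLE] <;> omega)
  | p_sq j =>
    simp only [map_mul, map_one, map_smul, FreeAlgebra.lift_ι_apply, BRGenMap]
    exact BRRel.p_sq _
  | pp_comm j l h =>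
    simp only [map_mul, map_one, map_smul, FreeAlgebra.lift_ι_apply, BRGenMap]
    exact BRRel.pp_comm _ _ (by simp_all [Fin.ext_iff, Fin.coe_castLE] <;> omega)
  | bp_comm i l h =>
    simp only [map_mul, map_one, map_smul, FreeAlgebra.lift_ι_apply, BRGenMap]
    exact BRRel.bp_comm _ _ (by simp_all [Fin.ext_iff, Fin.coe_castLE] <;> omega)
  | bp_slide i j j' h h' =>
    simp only [map_mul, map_one, map_smul, FreeAlgebra.lift_ι_apply, BRGenMap]
    exact BRRel.bp_slide _ _ _ (by simp_all [Fin.ext_iff, Fin.coe_castLE] <;> omega) (by simp_all [Fin.ext_iff, Fin.coe_castLE] <;> omega)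
  | bp_slide' i j j' h h' =>
    simp only [map_mul, map_one, map_smul, FreeAlgebra.lift_ι_apply, BRGenMap]
    exact BRRel.bp_slide' _ _ _ (by simp_all [Fin.ext_iff, Fin.coe_castLE] <;> omega) (by simp_all [Fin.ext_iff, Fin.coe_castLE] <;> omega)
  | pbp i j j' h h' =>
    simp only [map_mul, map_one, map_smul, FreeAlgebra.lift_ι_apply, BRGenMap]
    exact BRRel.pbp _ _ _ (by simp_all [Fin.ext_iff, Fin.coe_castLE] <;> omega) (by simp_all [Fin.ext_iff, Fin.coe_castLE] <;> omega)
  | pbb i j h =>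
    simp only [map_mul, map_one, map_smul, FreeAlgebra.lift_ι_apply, BRGenMap]
    exact BRRel.pbb _ _ (by simp_all [Fin.ext_iff, Fin.coe_castLE] <;> omega)
  | pbb' i j' h' =>
    simp only [map_mul, map_one, map_smul, FreeAlgebra.lift_ι_apply, BRGenMap]
    exact BRRel.pbb' _ _ (by simp_all [Fin.ext_iff, Fin.coe_castLE] <;> omega)

/-- The inclusion of diagram algebras given by adding an extra horizontal strand
(labelled by `1 ∈ G` in the equivariant case) at the bottom of a diagram. -/
noncomputable def BRincl : BRAlg k (n - 1) ε →ₐ[k] BRAlg k n ε :=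
  RingQuot.liftAlgHom k ⟨(RingQuot.mkAlgHom k (BRRel k n ε)).comp
      (FreeAlgebra.lift k (fun x => FreeAlgebra.ι k (BRGenMap n x))),
    by intro x y h
       simp only [AlgHom.coe_comp, Function.comp_apply]
       exact RingQuot.mkAlgHom_rel k (BRRel_map k n ε h)⟩

/-- The inclusion is compatible with the augmentations (trivial modules). -/
theorem BRaug_incl : (BRaug k n ε).comp (BRincl k n ε) = BRaug k (n - 1) ε := by
  apply RingQuot.ringQuot_ext'
  apply FreeAlgebra.hom_ext
  funext x
  cases x <;>
    simp [BRincl, BRaug, BRGenMap, Function.comp, RingQuot.liftAlgHom_mkAlgHom_apply,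
      FreeAlgebra.lift_ι_apply]

end BRinclsection

/-!
When `ε` is invertible, `f = ∏ j, (1 - ε⁻¹ p j)` is a central idempotent of augmentation `1` which
annihilates every diagram with a missing strand. The quotient `r` of `BR_n(ε)` by these diagrams is
the group algebra `k[B_n]` of the braid group; it has a section `s`, and `a * f = f * s (r a)`. On
the bar complex multiplication by `f` is a homotopy between the maps induced by `s ∘ r` and by the
identity, so `r` is an isomorphism on `Tor`, and it remains to prove homological stability for the
braid groups, in the range `2 * q + 1 ≤ n`.

For the latter, the common right multiples in the positive braid monoid (Garside) make it
cancellative, so that it embeds in its group of fractions, the infinite braid group `B_∞`, together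
with all `B_n`. On a free module over the positive braid monoid they also give exactness of the
complex of injective words, whose terms are the coinvariants under the first `b` generators, for
decreasing `b`. Homogeneous chains of `B_∞` inherit this; their coinvariants under the first `b`
generators compute the homology of `B_(b + 1)`, on which the differentials are alternately `1` and
`0`. Exactness then yields by induction on `q` that stabilization is an isomorphism on `H_q` from
`B_(n - 1)` to `B_n`.
-/

/-- The defining relations of the positive braid monoid on the generators `σ 0, σ 1, …`. -/
inductive BraidRel : FreeMonoid ℕ → FreeMonoid ℕ → Prop
  | comm (i j : ℕ) (h : i + 1 < j) :
      BraidRel (FreeMonoid.of i * FreeMonoid.of j) (FreeMonoid.of j * FreeMonoid.of i)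
  | braid (i : ℕ) :
      BraidRel (FreeMonoid.of i * FreeMonoid.of (i + 1) * FreeMonoid.of i)
        (FreeMonoid.of (i + 1) * FreeMonoid.of i * FreeMonoid.of (i + 1))

/-- The positive braid monoid on infinitely many strands. -/
abbrev BraidMonoid : Type := PresentedMonoid BraidRel

namespace BraidMonoid

/-- The Artin generator crossing the strands `i` and `i + 1`. -/
def σ (i : ℕ) : BraidMonoid := PresentedMonoid.of BraidRel i

/-- Indices of distinct commuting Artin generators. -/
def Far (i j : ℕ) : Prop := i + 1 < j ∨ j + 1 < i

/-- Indices of Artin generators subject to a braid relation. -/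
def Adj (i j : ℕ) : Prop := j = i + 1 ∨ i = j + 1

theorem Far.symm {i j : ℕ} (h : Far i j) : Far j i := Or.symm h

theorem Adj.symm {i j : ℕ} (h : Adj i j) : Adj j i := Or.symm h

theorem eq_or_far_or_adj (i j : ℕ) : i = j ∨ Far i j ∨ Adj i j := by
  unfold Far Adj; omega

theorem σ_mul_σ {i j : ℕ} (h : Far i j) : σ i * σ j = σ j * σ i := by
  rcases h with h | h
  · exact PresentedMonoid.mk_eq_mk_of_rel (.comm i j h)
  · exact (PresentedMonoid.mk_eq_mk_of_rel (.comm j i h)).symm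

theorem σ_mul_σ_mul_σ {i j : ℕ} (h : Adj i j) : σ i * σ j * σ i = σ j * σ i * σ j := by
  rcases h with rfl | rfl
  · exact PresentedMonoid.mk_eq_mk_of_rel (.braid i)
  · exact (PresentedMonoid.mk_eq_mk_of_rel (.braid j)).symm

theorem mul_σ_comm {i j : ℕ} (h : Far i j) (x : BraidMonoid) :
    x * σ i * σ j = x * σ j * σ i := by
  simp only [mul_assoc, σ_mul_σ h]

theorem mul_σ_braid {i j : ℕ} (h : Adj i j) (x : BraidMonoid) :
    x * σ i * σ j * σ i = x * σ j * σ i * σ j := by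
  have := σ_mul_σ_mul_σ h
  simp only [mul_assoc] at this ⊢
  rw [this]

@[elab_as_elim, induction_eliminator]
theorem induction_mul_σ {P : BraidMonoid → Prop} (one : P 1)
    (mul_σ : ∀ x i, P x → P (x * σ i)) (x : BraidMonoid) : P x := by
  induction x using PresentedMonoid.inductionOn with
  | _ w =>
  induction w using List.reverseRecOn with
  | nil => exact one
  | append_singleton u i ih => exact mul_σ _ i ih

/-- Word length, as a homomorphism. -/
def lengthHom : BraidMonoid →* Multiplicative ℕ :=
  PresentedMonoid.lift (fun _ => Multiplicative.ofAdd 1) (by rintro _ _ (_ | _) <;> simp)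

/-- The common length of the words representing a positive braid. -/
def length (x : BraidMonoid) : ℕ := (lengthHom x).toAdd

@[simp]
theorem length_one : length 1 = 0 := by simp [length]

@[simp]
theorem length_σ (i : ℕ) : length (σ i) = 1 := rfl

@[simp]
theorem length_mul (x y : BraidMonoid) : length (x * y) = length x + length y := by simp [length]

/-! ### Garside's lemma and cancellation -/

/-- `LcmRel i j x y` says that `x * σ i = y * σ j` holds because this element is a left multiple of
the least common left multiple of `σ i` and `σ j`. -/
inductive LcmRel : ℕ → ℕ → BraidMonoid → BraidMonoid → Prop
  | refl (i : ℕ) (x : BraidMonoid) : LcmRel i i x x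
  | far {i j : ℕ} (h : Far i j) (z : BraidMonoid) : LcmRel i j (z * σ j) (z * σ i)
  | adj {i j : ℕ} (h : Adj i j) (z : BraidMonoid) : LcmRel i j (z * σ i * σ j) (z * σ j * σ i)

namespace LcmRel

variable {i j k : ℕ} {x y w : BraidMonoid}

theorem symm (h : LcmRel i j x y) : LcmRel j i y x := by
  cases h with
  | refl => exact .refl _ _
  | far h z => exact .far h.symm z
  | adj h z => exact .adj h.symm z

theorem mul_left (h : LcmRel i j x y) (u : BraidMonoid) : LcmRel i j (u * x) (u * y) := by
  cases h with
  | refl => exact .refl _ _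
  | far h z => simpa only [mul_assoc] using LcmRel.far h (u * z)
  | adj h z => simpa only [mul_assoc] using LcmRel.adj h (u * z)

theorem length_eq (h : LcmRel i j x y) : length x = length y := by
  cases h <;> simp

theorem eq_of_eq (h : LcmRel i i x y) : x = y := by
  cases h with
  | refl => rfl
  | far h => simp [Far] at h
  | adj h => simp [Adj] at h

theorem exists_of_far (hij : Far i j) (h : LcmRel i j x y) :
    ∃ z, x = z * σ j ∧ y = z * σ i := by
  cases h with
  | refl => simp [Far] at hij
  | far _ z => exact ⟨z, rfl, rfl⟩
  | adj h => unfold Far at hij; unfold Adj at h; omega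

theorem exists_of_adj (hij : Adj i j) (h : LcmRel i j x y) :
    ∃ z, x = z * σ i * σ j ∧ y = z * σ j * σ i := by
  cases h with
  | refl => simp [Adj] at hij
  | far h => unfold Far at h; unfold Adj at hij; omega
  | adj _ z => exact ⟨z, rfl, rfl⟩

end LcmRel

/-- Garside's lemma restricted to elements of length less than `N`. -/
def GarsideBelow (N : ℕ) : Prop :=
  ∀ ⦃x y : BraidMonoid⦄ ⦃i j : ℕ⦄, length x < N → x * σ i = y * σ j → LcmRel i j x y

namespace GarsideBelow

variable {N : ℕ} {i j k : ℕ} {x y w : BraidMonoid}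

theorem trans_far_far (H : GarsideBelow N) (hN : length x ≤ N) (hik : Far i k) (hkj : Far k j)
    (hxw : LcmRel i k x w) (hwy : LcmRel k j w y) : LcmRel i j x y := by
  obtain ⟨u, rfl, rfl⟩ := hxw.exists_of_far hik
  obtain ⟨v, huv, rfl⟩ := hwy.exists_of_far hkj
  have hu : length u < N := by simp only [length_mul, length_σ] at hN; omega
  cases H hu huv with
  | refl => exact .refl _ _
  | far h z =>
    rw [mul_σ_comm hkj.symm, mul_σ_comm hik]
    exact .far h _
  | adj h z =>
    rw [mul_σ_comm hkj.symm, mul_σ_comm hik, mul_σ_comm hik (z * σ j), mul_σ_comm hkj.symm]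
    exact .adj h _

theorem trans_adj_far (H : GarsideBelow N) (hN : length x ≤ N) (hik : Adj i k) (hkj : Far k j)
    (hxw : LcmRel i k x w) (hwy : LcmRel k j w y) : LcmRel i j x y := by
  obtain ⟨u, rfl, rfl⟩ := hxw.exists_of_adj hik
  obtain ⟨v, huv, rfl⟩ := hwy.exists_of_far hkj
  simp only [length_mul, length_σ] at hN
  have hij : LcmRel i j (u * σ k) v := H (by simp only [length_mul, length_σ]; omega) huv
  rcases eq_or_far_or_adj i j with rfl | h | h
  · unfold Far at hkj; unfold Adj at hik; omega
  · obtain ⟨p, hp, rfl⟩ := hij.exists_of_far h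
    obtain ⟨q, rfl, rfl⟩ := (H (by omega) hp).exists_of_far hkj
    rw [mul_σ_comm h.symm, mul_σ_comm hkj.symm, mul_σ_braid hik.symm]
    exact .far h _
  · obtain ⟨p, hp, rfl⟩ := hij.exists_of_adj h
    obtain ⟨q, rfl, hpq⟩ := (H (by omega) hp).exists_of_far hkj
    have hlen := congrArg length hp
    simp only [length_mul, length_σ] at hN hlen
    obtain ⟨t, rfl, rfl⟩ := (H (by omega) hpq).exists_of_adj hik
    have hx : t * σ k * σ i * σ j * σ i * σ k = t * σ j * σ i * σ k * σ i * σ j := by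
      rw [mul_σ_braid h, mul_σ_comm hkj, mul_σ_comm hkj.symm, mul_σ_braid hik.symm]
    have hy : t * σ i * σ k * σ j * σ i * σ k = t * σ j * σ i * σ k * σ j * σ i := by
      rw [mul_σ_comm hkj, mul_σ_braid hik.symm, mul_σ_braid h, mul_σ_comm hkj.symm]
    rw [hx, hy]
    exact .adj h _

theorem trans_adj_adj (H : GarsideBelow N) (hN : length x ≤ N) (hik : Adj i k) (hkj : Adj k j)
    (hxw : LcmRel i k x w) (hwy : LcmRel k j w y) : LcmRel i j x y := by
  obtain ⟨u, rfl, rfl⟩ := hxw.exists_of_adj hik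
  obtain ⟨v, huv, rfl⟩ := hwy.exists_of_adj hkj
  have hlen := congrArg length huv
  simp only [length_mul, length_σ] at hN hlen
  have hij : LcmRel i j (u * σ k) (v * σ k) := H (by simp only [length_mul, length_σ]; omega) huv
  rcases eq_or_far_or_adj i j with rfl | h | h
  · rw [(H (by omega) hij.eq_of_eq).eq_of_eq]
    exact .refl _ _
  · obtain ⟨p, hup, hvp⟩ := hij.exists_of_far h
    obtain ⟨q, rfl, rfl⟩ := (H (by omega) hup).exists_of_adj hkj
    obtain ⟨r, rfl, hqr⟩ := (H (by omega) hvp).exists_of_adj hik.symm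
    simp only [length_mul, length_σ] at hN
    have hqr' : q * σ j = r * σ i := (H (by simp only [length_mul, length_σ]; omega) hqr).eq_of_eq
    obtain ⟨t, rfl, rfl⟩ := (H (by omega) hqr').exists_of_far h.symm
    have hx : t * σ i * σ k * σ j * σ i * σ k = t * σ k * σ i * σ j * σ k * σ j := by
      rw [mul_σ_comm h.symm, mul_σ_braid hik, mul_σ_braid hkj]
    have hy : t * σ j * σ k * σ i * σ j * σ k = t * σ k * σ i * σ j * σ k * σ i := by
      rw [mul_σ_comm h, mul_σ_braid hkj.symm, mul_σ_braid hik.symm, mul_σ_comm h.symm]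
    rw [hx, hy]
    exact .far h _
  · unfold Adj at hik hkj h; omega

theorem trans (H : GarsideBelow N) (hN : length x ≤ N)
    (hxw : LcmRel i k x w) (hwy : LcmRel k j w y) : LcmRel i j x y := by
  rcases eq_or_far_or_adj i k with rfl | hik | hik
  · rwa [hxw.eq_of_eq]
  · rcases eq_or_far_or_adj k j with rfl | hkj | hkj
    · rwa [← hwy.eq_of_eq]
    · exact H.trans_far_far hN hik hkj hxw hwy
    · have hyN : length y ≤ N := by rwa [← hwy.length_eq, ← hxw.length_eq]
      exact (H.trans_adj_far hyN hkj.symm hik.symm hwy.symm hxw.symm).symm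
  · rcases eq_or_far_or_adj k j with rfl | hkj | hkj
    · rwa [← hwy.eq_of_eq]
    · exact H.trans_adj_far hN hik hkj hxw hwy
    · exact H.trans_adj_adj hN hik hkj hxw hwy

end GarsideBelow

theorem exists_eq_mul_of {w : FreeMonoid ℕ} (hw : w ≠ 1) : ∃ u i, w = u * FreeMonoid.of i := by
  obtain ⟨u, i, h⟩ := (List.eq_nil_or_concat w.toList).resolve_left hw
  exact ⟨FreeMonoid.ofList u, i, by rwa [List.concat_eq_append] at h⟩

theorem mul_of_inj {u v : FreeMonoid ℕ} {i j : ℕ}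
    (h : u * FreeMonoid.of i = v * FreeMonoid.of j) : u = v ∧ i = j := by
  obtain ⟨huv, hij⟩ := List.append_inj' (s₁ := u.toList) (s₂ := v.toList) h rfl
  exact ⟨huv, by simpa using hij⟩

local notation "π" => PresentedMonoid.mk BraidRel

theorem mk_mul_of (u : FreeMonoid ℕ) (i : ℕ) : π (u * FreeMonoid.of i) = π u * σ i := rfl

theorem length_mk (w : FreeMonoid ℕ) : length (π w) = w.length := by
  induction w using FreeMonoid.inductionOn' with
  | one => exact length_one
  | of_mul i w ih => rw [map_mul, length_mul, ih, FreeMonoid.length_mul]; rfl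

theorem ne_one_of_mk_eq {w w' : FreeMonoid ℕ} (h : π w = π w') (hw : w ≠ 1) : w' ≠ 1 := by
  rwa [Ne, ← FreeMonoid.length_eq_zero, ← length_mk, ← h, length_mk, FreeMonoid.length_eq_zero]

theorem lcmRel_of_braidRel {u v : FreeMonoid ℕ} {i j : ℕ}
    (h : BraidRel (u * FreeMonoid.of i) (v * FreeMonoid.of j)) : LcmRel i j (π u) (π v) := by
  generalize hw : u * FreeMonoid.of i = w, hw' : v * FreeMonoid.of j = w' at h
  cases h with
  | comm a b hab =>
    obtain ⟨rfl, rfl⟩ := mul_of_inj hw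
    obtain ⟨rfl, rfl⟩ := mul_of_inj hw'
    have h := LcmRel.far (.inr hab) 1
    rw [one_mul, one_mul] at h
    exact h
  | braid a =>
    obtain ⟨rfl, rfl⟩ := mul_of_inj hw
    obtain ⟨rfl, rfl⟩ := mul_of_inj hw'
    have h := LcmRel.adj (i := i) (.inl rfl) 1
    rw [one_mul, one_mul] at h
    exact h

theorem GarsideBelow.lcmRel_of_conGen {N : ℕ} (H : GarsideBelow N) {w w' : FreeMonoid ℕ}
    (h : ConGen.Rel BraidRel w w') {u v : FreeMonoid ℕ} {i j : ℕ} (hw : w = u * FreeMonoid.of i)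
    (hw' : w' = v * FreeMonoid.of j) (hN : length (π u) ≤ N) : LcmRel i j (π u) (π v) := by
  have mk_eq {a b : FreeMonoid ℕ} (h : ConGen.Rel BraidRel a b) : π a = π b :=
    PresentedMonoid.mk_eq_mk_iff.2 h
  induction h generalizing u v i j with
  | of w w' h => subst hw hw'; exact lcmRel_of_braidRel h
  | refl w =>
    obtain ⟨rfl, rfl⟩ := mul_of_inj (hw.symm.trans hw')
    exact .refl _ _
  | symm h ih =>
    have hlen := congrArg length (mk_eq h)
    simp only [hw, hw', mk_mul_of, length_mul, length_σ] at hlen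
    exact (ih hw' hw (by omega)).symm
  | @trans w t w' hwt htw' ih₁ ih₂ =>
    obtain ⟨s, k, rfl⟩ := exists_eq_mul_of (ne_one_of_mk_eq (mk_eq hwt) (by simp [hw]))
    have hlen := congrArg length (mk_eq hwt)
    simp only [hw, mk_mul_of, length_mul, length_σ] at hlen
    exact H.trans hN (ih₁ hw rfl hN) (ih₂ rfl hw' (by omega))
  | @mul w w' t t' hw₁ ht ih₁ ih₂ =>
    rcases eq_or_ne t 1 with rfl | ht₁
    · have ht'₁ : t' = 1 := by
        by_contra h
        exact ne_one_of_mk_eq (mk_eq ht).symm h rfl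
      subst ht'₁
      exact ih₁ (by rwa [mul_one] at hw) (by rwa [mul_one] at hw') hN
    · obtain ⟨s, a, rfl⟩ := exists_eq_mul_of ht₁
      obtain ⟨s', b, rfl⟩ := exists_eq_mul_of (ne_one_of_mk_eq (mk_eq ht) ht₁)
      rw [← mul_assoc] at hw hw'
      obtain ⟨rfl, rfl⟩ := mul_of_inj hw
      obtain ⟨rfl, rfl⟩ := mul_of_inj hw'
      rw [map_mul, length_mul] at hN
      rw [map_mul, map_mul, ← mk_eq hw₁]
      exact (ih₂ rfl rfl (by omega)).mul_left _

theorem garsideBelow (N : ℕ) : GarsideBelow N := by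
  induction N with
  | zero => exact fun _ _ _ _ h => absurd h (Nat.not_lt_zero _)
  | succ N H =>
    intro x y i j hx hxy
    obtain ⟨u, rfl⟩ := PresentedMonoid.surjective_mk x
    obtain ⟨v, rfl⟩ := PresentedMonoid.surjective_mk y
    exact H.lcmRel_of_conGen (PresentedMonoid.mk_eq_mk_iff.1 hxy) rfl rfl (Nat.lt_succ_iff.1 hx)

theorem lcmRel_of_mul_σ_eq {x y : BraidMonoid} {i j : ℕ} (h : x * σ i = y * σ j) :
    LcmRel i j x y :=
  garsideBelow (length x + 1) (Nat.lt_succ_self _) h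

instance : IsRightCancelMul BraidMonoid where
  mul_right_cancel z x y h := by
    induction z with
    | one => simpa only [mul_one] using h
    | mul_σ z i ih =>
      simp only [← mul_assoc] at h
      exact ih (lcmRel_of_mul_σ_eq h).eq_of_eq

/-- The anti-automorphism of the braid monoid reversing words. -/
def reverse : BraidMonoid →* BraidMonoidᵐᵒᵖ :=
  PresentedMonoid.lift (fun i => MulOpposite.op (σ i)) <| by
    rintro _ _ (⟨i, j, h⟩ | i)
    · simp only [map_mul, FreeMonoid.lift_eval_of, ← MulOpposite.op_mul, σ_mul_σ (.inl h)]
    · simp only [map_mul, FreeMonoid.lift_eval_of, ← MulOpposite.op_mul, ← mul_assoc,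
        σ_mul_σ_mul_σ (.inl rfl)]

theorem reverse_σ (i : ℕ) : reverse (σ i) = MulOpposite.op (σ i) := rfl

theorem reverse_reverse (x : BraidMonoid) : (reverse (reverse x).unop).unop = x := by
  induction x with
  | one => simp
  | mul_σ x i ih => simp [ih, reverse_σ]

instance : IsCancelMul BraidMonoid where
  mul_left_cancel z x y h := by
    have hrev : (reverse x).unop = (reverse y).unop := by
      simpa using congrArg (fun t => (reverse t).unop) h
    rw [← reverse_reverse x, hrev, reverse_reverse]

end BraidMonoid

open BraidMonoid (Far Adj eq_or_far_or_adj)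

theorem linearMap_mem_of_single_mem {R X M : Type*} [Semiring R] [AddCommMonoid M] [Module R M]
    (f : (X →₀ R) →ₗ[R] M) {P : Submodule R M} {z : X →₀ R}
    (h : ∀ x ∈ z.support, f (Finsupp.single x 1) ∈ P) : f z ∈ P := by
  rw [← z.sum_single, map_finsuppSum]
  refine Submodule.sum_mem _ fun x hx => ?_
  have hsmul := P.smul_mem (z x) (h x hx)
  rwa [← map_smul, Finsupp.smul_single, smul_eq_mul, mul_one] at hsmul

theorem mapDomain_apply_of_fiber {X Y M : Type*} [AddCommMonoid M] {f : X → Y} {z : X →₀ M} {a : X}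
    (h : ∀ x ∈ z.support, f x = f a → x = a) : z.mapDomain f (f a) = z a := by
  classical
  rw [Finsupp.mapDomain, Finsupp.sum_apply, Finsupp.sum,
    Finset.sum_eq_single a (fun x hx hxa => Finsupp.single_eq_of_ne' fun hf => hxa (h x hx hf))
      (fun ha => by rw [Finsupp.notMem_support_iff.1 ha, Finsupp.single_zero, Finsupp.zero_apply]),
    Finsupp.single_eq_same]

/-- An action of the positive braid monoid on `X`, given by the operators of the Artin generators.
The operators compose like a right action. -/
structure BraidAction (X : Type*) where
  act : ℕ → X → X
  act_comm : ∀ {i j}, Far i j → ∀ x, act i (act j x) = act j (act i x)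
  act_braid : ∀ {i j}, Adj i j → ∀ x, act i (act j (act i x)) = act j (act i (act j x))

namespace BraidAction

variable (F : Type*) [CommRing F] {X : Type*} (S : BraidAction X)

/-- The linear extension of the action of the `i`-th Artin generator to chains. -/
def actL (i : ℕ) : (X →₀ F) →ₗ[F] (X →₀ F) := Finsupp.lmapDomain F F (S.act i)

theorem actL_single (i : ℕ) (x : X) (c : F) :
    S.actL F i (Finsupp.single x c) = Finsupp.single (S.act i x) c :=
  Finsupp.mapDomain_single

theorem actL_comm {i j : ℕ} (h : Far i j) (z : X →₀ F) :
    S.actL F i (S.actL F j z) = S.actL F j (S.actL F i z) := by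
  induction z using Finsupp.induction_linear with
  | zero => simp only [map_zero]
  | add f g hf hg => simp only [map_add, hf, hg]
  | single x c => simp only [actL_single, S.act_comm h]

theorem actL_braid {i j : ℕ} (h : Adj i j) (z : X →₀ F) :
    S.actL F i (S.actL F j (S.actL F i z)) = S.actL F j (S.actL F i (S.actL F j z)) := by
  induction z using Finsupp.induction_linear with
  | zero => simp only [map_zero]
  | add f g hf hg => simp only [map_add, hf, hg]
  | single x c => simp only [actL_single, S.act_braid h]

/-- The relations `σ i • x - x` for `i < b`: the quotient of the chains by this submodule is the
module of coinvariants under the first `b` Artin generators. -/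
def relations (b : ℕ) : Submodule F (X →₀ F) :=
  Submodule.span F {v | ∃ i < b, ∃ x, v = S.actL F i x - x}

theorem relations_mono {b c : ℕ} (h : b ≤ c) : S.relations F b ≤ S.relations F c :=
  Submodule.span_mono fun _ ⟨i, hi, x, hv⟩ => ⟨i, hi.trans_le h, x, hv⟩

theorem actL_sub_mem_relations {b i : ℕ} (h : i < b) (x : X →₀ F) :
    S.actL F i x - x ∈ S.relations F b :=
  Submodule.subset_span ⟨i, h, x, rfl⟩

theorem sub_actL_mem_relations {b i : ℕ} (h : i < b) (x : X →₀ F) :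
    x - S.actL F i x ∈ S.relations F b := by
  rw [← neg_sub]
  exact neg_mem (S.actL_sub_mem_relations F h x)

theorem relations_le {b : ℕ} {P : Submodule F (X →₀ F)}
    (h : ∀ i < b, ∀ x, S.actL F i x - x ∈ P) : S.relations F b ≤ P := by
  rw [relations, Submodule.span_le]
  rintro _ ⟨i, hi, x, rfl⟩
  exact h i hi x

theorem relations_le_comap {Y : Type*} (S' : BraidAction Y) {b : ℕ} (f : (X →₀ F) →ₗ[F] (Y →₀ F))
    (h : ∀ i < b, ∀ x, f (S.actL F i x) = S'.actL F i (f x)) :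
    S.relations F b ≤ (S'.relations F b).comap f := by
  refine S.relations_le F fun i hi x => ?_
  rw [Submodule.mem_comap, map_sub, h i hi]
  exact S'.actL_sub_mem_relations F hi _

/-- The alternating sum `∑ j ≤ p, (-1) ^ j • σ (B - p) ⋯ σ (B - p + j - 1)`.  It induces the
differential from the coinvariants under `B - p - 1` generators to those under `B - p` generators
in the complex of injective words. -/
def altSum (B : ℕ) : ℕ → ((X →₀ F) →ₗ[F] (X →₀ F))
  | 0 => LinearMap.id
  | p + 1 => LinearMap.id - S.actL F (B - 1 - p) ∘ₗ altSum B p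

theorem altSum_zero (B : ℕ) (z : X →₀ F) : S.altSum F B 0 z = z := rfl

theorem altSum_succ (B p : ℕ) (z : X →₀ F) :
    S.altSum F B (p + 1) z = z - S.actL F (B - 1 - p) (S.altSum F B p z) := rfl

theorem altSum_actL {B p i : ℕ} (h : i + p + 1 < B) (z : X →₀ F) :
    S.altSum F B p (S.actL F i z) = S.actL F i (S.altSum F B p z) := by
  induction p with
  | zero => rfl
  | succ p ih =>
    rw [altSum_succ, altSum_succ, ih (by omega), map_sub,
      S.actL_comm F (by unfold Far; omega)]

theorem altSum_mem_relations {B p : ℕ} {z : X →₀ F} (hz : z ∈ S.relations F (B - p - 1)) :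
    S.altSum F B p z ∈ S.relations F (B - p - 1) :=
  S.relations_le_comap F S _ (fun _ _ _ => S.altSum_actL F (by omega) _) hz

theorem exists_altSum_altSum_eq {B p : ℕ} (h : p + 1 ≤ B) (z : X →₀ F) :
    ∃ t, S.altSum F B p (S.altSum F B (p + 1) z) = t - S.actL F (B - 1 - p) t := by
  induction p with
  | zero => exact ⟨z, rfl⟩
  | succ p ih =>
    obtain ⟨t, ht⟩ := ih (by omega)
    set i := B - 1 - (p + 1)
    set j := B - 1 - p
    have hcomm : S.altSum F B p (S.actL F i (S.altSum F B (p + 1) z))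
        = S.actL F i t - S.actL F i (S.actL F j t) := by
      rw [altSum_actL F S (by omega), ht, map_sub]
    have hsplit : S.altSum F B (p + 1) (S.altSum F B (p + 2) z)
        = S.altSum F B (p + 1) z - S.actL F i (S.altSum F B (p + 1) z)
          + S.actL F j (S.altSum F B p (S.actL F i (S.altSum F B (p + 1) z))) := by
      rw [S.altSum_succ F B (p + 1) z, map_sub,
        S.altSum_succ F B p (S.actL F (B - 1 - (p + 1)) (S.altSum F B (p + 1) z))]
      abel
    refine ⟨S.altSum F B (p + 1) z + S.actL F j (S.actL F i t), ?_⟩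
    rw [hsplit, hcomm, map_sub, map_add, S.actL_braid F (show Adj i j by unfold Adj; omega)]
    abel

theorem altSum_altSum_mem_relations {B p : ℕ} (h : p + 1 ≤ B) (z : X →₀ F) :
    S.altSum F B p (S.altSum F B (p + 1) z) ∈ S.relations F (B - p) := by
  obtain ⟨t, ht⟩ := S.exists_altSum_altSum_eq F h z
  rw [ht]
  exact S.sub_actL_mem_relations F (by omega) _

end BraidAction

/-- A braid action with a length function for which Garside's lemma holds. -/
structure GarsideAction (X : Type*) extends BraidAction X where
  length : X → ℕ
  length_act : ∀ i x, length (act i x) = length x + 1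
  act_injective : ∀ i, Function.Injective (act i)
  exists_of_far : ∀ {i j x y}, Far i j → act i x = act j y → ∃ z, x = act j z ∧ y = act i z
  exists_of_adj : ∀ {i j x y}, Adj i j → act i x = act j y →
    ∃ z, x = act j (act i z) ∧ y = act i (act j z)

namespace GarsideAction

variable {X : Type*} (S : GarsideAction X)

/-- `x` is a minimal representative of its orbit under the first `b` Artin generators. -/
def IsReduced (b : ℕ) (x : X) : Prop := ∀ i < b, ∀ y, S.act i y ≠ x

open Classical in
/-- The minimal representative of the orbit of `x` under the first `b` Artin generators. -/
def reduce (b : ℕ) (x : X) : X :=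
  if h : ∃ y, ∃ i < b, S.act i y = x then reduce b h.choose else x
termination_by S.length x
decreasing_by
  obtain ⟨i, _, hi⟩ := h.choose_spec
  have := S.length_act i h.choose
  rw [hi] at this
  omega

theorem exists_reduce_act_eq {b i : ℕ} (hi : i < b) (x : X) :
    ∃ j < b, ∃ y, S.act j y = S.act i x ∧ S.reduce b (S.act i x) = S.reduce b y := by
  have h : ∃ y, ∃ j < b, S.act j y = S.act i x := ⟨x, i, hi, rfl⟩
  obtain ⟨j, hj, hy⟩ := h.choose_spec
  exact ⟨j, hj, h.choose, hy, by rw [reduce, dif_pos h]⟩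

variable {S} in
theorem IsReduced.reduce_eq {b : ℕ} {x : X} (h : S.IsReduced b x) : S.reduce b x = x := by
  rw [reduce, dif_neg]
  rintro ⟨y, i, hi, hy⟩
  exact h i hi y hy

theorem reduce_act {b i : ℕ} (hi : i < b) (x : X) : S.reduce b (S.act i x) = S.reduce b x := by
  induction hN : S.length x using Nat.strong_induction_on generalizing x i with
  | _ N ih =>
  subst hN
  obtain ⟨j, hj, y, hxy, hred⟩ := S.exists_reduce_act_eq hi x
  rw [hred]
  rcases eq_or_far_or_adj i j with rfl | h | h
  · rw [S.act_injective i hxy]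
  · obtain ⟨z, rfl, rfl⟩ := S.exists_of_far h hxy.symm
    have hz : S.length z < S.length (S.act j z) := by simp [S.length_act]
    rw [ih _ hz hi z rfl, ih _ hz hj z rfl]
  · obtain ⟨z, rfl, rfl⟩ := S.exists_of_adj h hxy.symm
    rw [ih _ (by simp [S.length_act]) hi _ rfl, ih _ (by simp [S.length_act]) hj _ rfl,
      ih _ (by simp [S.length_act]) hj _ rfl, ih _ (by simp [S.length_act]) hi _ rfl]

theorem induction_act (b : ℕ) {P : X → Prop} (reduced : ∀ x, S.IsReduced b x → P x)
    (act : ∀ i < b, ∀ x, P x → P (S.act i x)) (x : X) : P x := by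
  induction hN : S.length x using Nat.strong_induction_on generalizing x with
  | _ N ih =>
  by_cases h : S.IsReduced b x
  · exact reduced x h
  · simp only [IsReduced, not_forall, not_not] at h
    obtain ⟨i, hi, y, rfl⟩ := h
    exact act i hi y (ih _ (by rw [← hN, S.length_act]; omega) y rfl)

theorem isReduced_reduce (b : ℕ) (x : X) : S.IsReduced b (S.reduce b x) := by
  induction x using S.induction_act b with
  | reduced x h => rwa [h.reduce_eq]
  | act i hi x ih => rwa [S.reduce_act hi]

theorem length_reduce_le (b : ℕ) (x : X) : S.length (S.reduce b x) ≤ S.length x := by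
  induction x using S.induction_act b with
  | reduced x h => rw [h.reduce_eq]
  | act i hi x ih => rw [S.reduce_act hi, S.length_act]; omega

theorem reduce_eq_of_length_eq {b : ℕ} {x : X} (h : S.length (S.reduce b x) = S.length x) :
    S.reduce b x = x := by
  by_cases hx : S.IsReduced b x
  · exact hx.reduce_eq
  · simp only [IsReduced, not_forall, not_not] at hx
    obtain ⟨i, hi, y, rfl⟩ := hx
    have := S.length_reduce_le b y
    rw [S.reduce_act hi, S.length_act] at h
    omega

/-- The action of `σ (B - p) ⋯ σ (B - 1)`, which is up to sign the leading term of `altSum B p`. -/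
def lead (B : ℕ) : ℕ → X → X
  | 0 => id
  | p + 1 => S.act (B - 1 - p) ∘ lead B p

theorem lead_succ (B p : ℕ) (x : X) : S.lead B (p + 1) x = S.act (B - 1 - p) (S.lead B p x) := rfl

theorem length_lead (B p : ℕ) (x : X) : S.length (S.lead B p x) = S.length x + p := by
  induction p with
  | zero => rfl
  | succ p ih => rw [lead_succ, S.length_act, ih, add_assoc]

theorem lead_injective (B p : ℕ) : Function.Injective (S.lead B p) := by
  induction p with
  | zero => exact Function.injective_id
  | succ p ih => exact (S.act_injective _).comp ih

theorem lead_act {B p i : ℕ} (h : i + p + 1 < B) (x : X) :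
    S.lead B p (S.act i x) = S.act i (S.lead B p x) := by
  induction p with
  | zero => rfl
  | succ p ih => rw [lead_succ, ih (by omega), lead_succ, S.act_comm (by unfold Far; omega)]

theorem exists_eq_act_of_act_eq_lead {B p i : ℕ} (h : i + p + 1 < B) {x y : X}
    (hxy : S.act i y = S.lead B p x) : ∃ x', x = S.act i x' := by
  induction p generalizing y with
  | zero => exact ⟨y, hxy.symm⟩
  | succ p ih =>
    obtain ⟨z, _, hz⟩ := S.exists_of_far (by unfold Far; omega) hxy
    exact ih (by omega) hz.symm

theorem exists_eq_lead_of_act_eq_lead {B p : ℕ} (h : p + 1 ≤ B) {x y : X}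
    (hxy : S.act (B - 1 - p) y = S.lead B p x) : ∃ x', x = S.lead B (p + 1) x' := by
  induction p generalizing x y with
  | zero => exact ⟨y, hxy.symm⟩
  | succ p ih =>
    obtain ⟨z, _, hz⟩ := S.exists_of_adj (by unfold Adj; omega) hxy
    obtain ⟨x', rfl⟩ := S.exists_eq_act_of_act_eq_lead (by omega) hz.symm
    rw [S.lead_act (by omega)] at hz
    obtain ⟨x'', rfl⟩ := ih (by omega) (S.act_injective _ hz).symm
    exact ⟨x'', rfl⟩

variable {S} in
theorem IsReduced.lead {B p : ℕ} (h : p + 1 ≤ B) {x : X} (hx : S.IsReduced (B - p - 1) x)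
    (hx' : x ∉ Set.range (S.lead B (p + 1))) : S.IsReduced (B - p) (S.lead B p x) := by
  intro i hi y hy
  rcases Nat.lt_or_ge i (B - p - 1) with hi' | hi'
  · obtain ⟨x', rfl⟩ := S.exists_eq_act_of_act_eq_lead (by omega) hy
    exact hx i hi' x' rfl
  · obtain rfl : i = B - 1 - p := by omega
    obtain ⟨x', rfl⟩ := S.exists_eq_lead_of_act_eq_lead h hy
    exact hx' ⟨x', rfl⟩

/-! ### Exactness -/

section Exactness

variable (F : Type*) [CommRing F]

/-- The linear extension of `reduce b` to chains. -/
def reduceL (b : ℕ) : (X →₀ F) →ₗ[F] (X →₀ F) := Finsupp.lmapDomain F F (S.reduce b)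

theorem reduceL_single (b : ℕ) (x : X) (c : F) :
    S.reduceL F b (Finsupp.single x c) = Finsupp.single (S.reduce b x) c :=
  Finsupp.mapDomain_single

theorem reduceL_eq_zero {b : ℕ} {z : X →₀ F} (hz : z ∈ S.relations F b) : S.reduceL F b z = 0 := by
  refine S.relations_le F (P := LinearMap.ker (S.reduceL F b)) (fun i hi x => ?_) hz
  rw [LinearMap.mem_ker, map_sub, sub_eq_zero]
  induction x using Finsupp.induction_linear with
  | zero => simp only [map_zero]
  | add f g hf hg => simp only [map_add, hf, hg]
  | single x c => rw [BraidAction.actL_single, reduceL_single, reduceL_single, S.reduce_act hi]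

theorem sub_reduceL_mem_relations (b : ℕ) (z : X →₀ F) : z - S.reduceL F b z ∈ S.relations F b := by
  refine linearMap_mem_of_single_mem (LinearMap.id - S.reduceL F b) fun x hx => ?_
  clear hx
  rw [LinearMap.sub_apply, LinearMap.id_apply, reduceL_single]
  induction x using S.induction_act b with
  | reduced x h => rw [h.reduce_eq, sub_self]; exact zero_mem _
  | act i hi x ih =>
    have := add_mem (S.actL_sub_mem_relations F hi (Finsupp.single x 1)) ih
    rwa [BraidAction.actL_single, sub_add_sub_cancel, ← S.reduce_act hi] at this

/-- The chains supported in length less than `N`. -/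
def below (N : ℕ) : Submodule F (X →₀ F) := Finsupp.supported F F {x | S.length x < N}

variable {F}

theorem mem_below {N : ℕ} {z : X →₀ F} :
    z ∈ S.below F N ↔ ∀ x, z x ≠ 0 → S.length x < N := by
  simp [below, Finsupp.mem_supported, Set.subset_def]

theorem below_mono {M N : ℕ} (h : M ≤ N) : S.below F M ≤ S.below F N :=
  Finsupp.supported_mono fun _ hx => lt_of_lt_of_le hx h

theorem lmapDomain_mem_below {f : X → X} {M N : ℕ} (h : ∀ x, S.length x < M → S.length (f x) < N)
    {z : X →₀ F} (hz : z ∈ S.below F M) : Finsupp.lmapDomain F F f z ∈ S.below F N := by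
  refine linearMap_mem_of_single_mem (Finsupp.lmapDomain F F f) fun x hx => ?_
  rw [Finsupp.lmapDomain_apply, Finsupp.mapDomain_single]
  exact Finsupp.single_mem_supported F _ (h x (hz hx))

theorem altSum_single_sub_lead_mem_below (B p : ℕ) (x : X) :
    S.altSum F B p (Finsupp.single x 1) - (-1 : F) ^ p • Finsupp.single (S.lead B p x) 1
      ∈ S.below F (S.length x + p) := by
  induction p with
  | zero => simp [BraidAction.altSum_zero, lead]
  | succ p ih =>
    have hact : S.actL F (B - 1 - p) _ ∈ S.below F (S.length x + (p + 1)) :=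
      S.lmapDomain_mem_below (fun y hy => by rw [S.length_act]; omega) ih
    have hx : Finsupp.single x (1 : F) ∈ S.below F (S.length x + (p + 1)) :=
      Finsupp.single_mem_supported F _ (by simp)
    convert sub_mem hx hact using 1
    rw [BraidAction.altSum_succ, lead_succ, map_sub, map_smul, BraidAction.actL_single, pow_succ]
    module

theorem altSum_sub_lead_mem_below {B p M : ℕ} {z : X →₀ F}
    (hz : ∀ x, z x ≠ 0 → S.length x + p ≤ M) :
    S.altSum F B p z - (-1 : F) ^ p • z.mapDomain (S.lead B p) ∈ S.below F M := by
  refine linearMap_mem_of_single_mem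
    (S.altSum F B p - (-1 : F) ^ p • Finsupp.lmapDomain F F (S.lead B p)) fun x hx => ?_
  rw [LinearMap.sub_apply, LinearMap.smul_apply, Finsupp.lmapDomain_apply,
    Finsupp.mapDomain_single]
  exact S.below_mono (hz x (Finsupp.mem_support_iff.1 hx))
    (S.altSum_single_sub_lead_mem_below B p x)

theorem mem_range_lead {B p N : ℕ} (h : p + 1 ≤ B) {z : X →₀ F} (hzN : z ∈ S.below F (N + 1))
    (hred : ∀ x, z x ≠ 0 → S.IsReduced (B - p - 1) x)
    (hz : S.altSum F B p z ∈ S.relations F (B - p)) {x : X} (hx : z x ≠ 0)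
    (hxN : S.length x = N) : x ∈ Set.range (S.lead B (p + 1)) := by
  by_contra hxr
  have hlen : ∀ y, z y ≠ 0 → S.length y ≤ N := fun y hy =>
    Nat.lt_succ_iff.1 (S.mem_below.1 hzN y hy)
  set f := S.reduce (B - p) ∘ S.lead B p
  have hfx : f x = S.lead B p x := ((hred x hx).lead h hxr).reduce_eq
  have hfiber : ∀ y ∈ z.support, f y = f x → y = x := fun y hy hyx => by
    have hle := hlen y (Finsupp.mem_support_iff.1 hy)
    have hred_le := S.length_reduce_le (B - p) (S.lead B p y)
    have hlead : S.length (f y) = S.length x + p := by rw [hyx, hfx, length_lead]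
    have hfy : f y = S.lead B p y := S.reduce_eq_of_length_eq (by
      rw [length_lead] at hred_le ⊢
      change S.length (f y) ≤ _ at hred_le
      change S.length (f y) = _
      omega)
    exact S.lead_injective B p (by rw [← hfy, hyx, hfx])
  have hmem : (-1 : F) ^ p • z.mapDomain f ∈ S.below F (N + p) := by
    have hlow := S.altSum_sub_lead_mem_below (B := B) (p := p) (M := N + p) (z := z)
      fun y hy => Nat.add_le_add_right (hlen y hy) p
    have hlow' := S.lmapDomain_mem_below (f := S.reduce (B - p))
      (fun y hy => (S.length_reduce_le _ y).trans_lt hy) hlow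
    change S.reduceL F (B - p) _ ∈ _ at hlow'
    rw [map_sub, S.reduceL_eq_zero F hz, zero_sub, Submodule.neg_mem_iff, map_smul] at hlow'
    rwa [Finsupp.mapDomain_comp]
  have hlt : S.length (f x) < N + p := S.mem_below.1 hmem (f x) (by
    rw [Finsupp.smul_apply, mapDomain_apply_of_fiber hfiber, smul_eq_mul]
    exact ((isUnit_one.neg.pow p).mul_right_eq_zero).not.2 hx)
  rw [hfx, length_lead, hxN] at hlt
  exact hlt.false

theorem exists_sub_altSum_mem_below {B p N : ℕ} {z : X →₀ F} (hzN : z ∈ S.below F (N + 1))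
    (htop : ∀ x, z x ≠ 0 → S.length x = N → x ∈ Set.range (S.lead B p)) :
    ∃ y, z - S.altSum F B p y ∈ S.below F N := by
  classical
  set w := z.filter fun x => S.length x = N
  have hwN : z - w ∈ S.below F N := by
    rw [mem_below]
    intro x hx
    by_cases hxN : S.length x = N
    · simp [w, hxN] at hx
    · have hzx : z x ≠ 0 := by simpa [w, hxN] using hx
      have := S.mem_below.1 hzN x hzx
      omega
  set v := w.comapDomain (S.lead B p) (S.lead_injective B p).injOn
  have hv : v.mapDomain (S.lead B p) = w :=
    Finsupp.mapDomain_comapDomain _ (S.lead_injective B p) _ fun x hx => by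
      simp only [w, Finsupp.support_filter, Finset.coe_filter, Finsupp.mem_support_iff] at hx
      exact htop x hx.1 hx.2
  have hlow := S.altSum_sub_lead_mem_below (B := B) (p := p) (M := N) (z := v) fun x hx => by
    rw [← S.length_lead B p]
    by_contra hlt
    simp [v, w, Finsupp.comapDomain_apply, (not_le.1 hlt).ne'] at hx
  refine ⟨(-1 : F) ^ p • v, ?_⟩
  rw [hv] at hlow
  convert sub_mem hwN ((S.below F N).smul_mem ((-1 : F) ^ p) hlow) using 1
  have hsq : (-1 : F) ^ p * (-1 : F) ^ p = 1 := by rw [← mul_pow]; simp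
  rw [map_smul, smul_sub, smul_smul, hsq, one_smul]
  abel

theorem exists_sub_altSum_mem_relations_of_mem_below {B p : ℕ} (h : p + 1 ≤ B) (N : ℕ)
    {z : X →₀ F} (hzN : z ∈ S.below F N) (hz : S.altSum F B p z ∈ S.relations F (B - p)) :
    ∃ y, z - S.altSum F B (p + 1) y ∈ S.relations F (B - p - 1) := by
  induction N generalizing z with
  | zero =>
    refine ⟨0, ?_⟩
    obtain rfl : z = 0 := Finsupp.ext fun x => by
      by_contra hx
      exact absurd (S.mem_below.1 hzN x hx) (Nat.not_lt_zero _)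
    simp
  | succ N ih =>
    set r := S.reduceL F (B - p - 1) z
    have hzr : z - r ∈ S.relations F (B - p - 1) := S.sub_reduceL_mem_relations F _ z
    have hrN : r ∈ S.below F (N + 1) :=
      S.lmapDomain_mem_below (fun y hy => (S.length_reduce_le _ y).trans_lt hy) hzN
    have hr : S.altSum F B p r ∈ S.relations F (B - p) := by
      have := sub_mem hz (S.relations_mono F (show B - p - 1 ≤ B - p by omega)
        (S.altSum_mem_relations F hzr))
      rwa [map_sub, sub_sub_cancel] at this
    have hred : ∀ x, r x ≠ 0 → S.IsReduced (B - p - 1) x := by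
      classical
      intro x hx
      obtain ⟨x', -, rfl⟩ := Finset.mem_image.1
        (Finsupp.mapDomain_support (Finsupp.mem_support_iff.2 hx))
      exact S.isReduced_reduce _ x'
    obtain ⟨y, hy⟩ := S.exists_sub_altSum_mem_below hrN fun x hx hxN =>
      S.mem_range_lead h hrN hred hr hx hxN
    obtain ⟨y', hy'⟩ := ih hy (by
      rw [map_sub]
      exact sub_mem hr (S.altSum_altSum_mem_relations F h y))
    refine ⟨y + y', ?_⟩
    convert add_mem hzr hy' using 1
    rw [map_add]
    abel

theorem exists_sub_altSum_mem_relations {B p : ℕ} (h : p + 1 ≤ B) {z : X →₀ F}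
    (hz : S.altSum F B p z ∈ S.relations F (B - p)) :
    ∃ y, z - S.altSum F B (p + 1) y ∈ S.relations F (B - p - 1) :=
  S.exists_sub_altSum_mem_relations_of_mem_below h (z.support.sup S.length + 1)
    (S.mem_below.2 fun _ hx =>
      Nat.lt_succ_iff.2 (Finset.le_sup (f := S.length) (Finsupp.mem_support_iff.2 hx))) hz

end Exactness

end GarsideAction

/-! ### Braid groups as groups of fractions -/

/-- A sequence in a monoid whose first `b` terms satisfy the braid relations. -/
structure IsBraidFamily {H : Type*} [Monoid H] (a : ℕ → H) (b : ℕ) : Prop where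
  comm : ∀ i j, i + 1 < j → j < b → a i * a j = a j * a i
  braid : ∀ i, i + 1 < b → a i * a (i + 1) * a i = a (i + 1) * a i * a (i + 1)

namespace IsBraidFamily

section Monoid
variable {H : Type*} [Monoid H] {a : ℕ → H} {b m i : ℕ}

/-- The product `a 0 * a 1 * ⋯ * a (m - 1)`. In a braid group this is a rotation by one strand,
and its `(m + 1)`-st power is the full twist. -/
def ascProd (a : ℕ → H) : ℕ → H
  | 0 => 1
  | m + 1 => ascProd a m * a m

/-- The submonoid generated by the first `b` terms of a sequence. -/
def positive (a : ℕ → H) (b : ℕ) : Submonoid H := Submonoid.closure (a '' Set.Iio b)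

theorem mem_positive (h : i < b) : a i ∈ positive a b :=
  Submonoid.subset_closure ⟨i, h, rfl⟩

theorem positive_mono {c : ℕ} (h : b ≤ c) : positive a b ≤ positive a c :=
  Submonoid.closure_mono (Set.image_mono (Set.Iio_subset_Iio h))

theorem ascProd_mem_positive (h : m ≤ b) : ascProd a m ∈ positive a b := by
  induction m with
  | zero => exact one_mem _
  | succ m ih => exact mul_mem (ih (by omega)) (mem_positive (by omega))

theorem mul_ascProd_shift (a : ℕ → H) (m : ℕ) :
    a 0 * ascProd (fun i => a (i + 1)) m = ascProd a (m + 1) := by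
  induction m with
  | zero => simp [ascProd]
  | succ m ih => rw [ascProd, ← mul_assoc, ih]; rfl

theorem mul_ascProd_of_lt (ha : IsBraidFamily a b) (h : m < i) (hi : i < b) :
    a i * ascProd a m = ascProd a m * a i := by
  induction m with
  | zero => simp [ascProd]
  | succ m ih =>
    rw [ascProd, ← mul_assoc, ih (by omega), mul_assoc, ← ha.comm m i (by omega) hi, mul_assoc]

theorem ascProd_mul (ha : IsBraidFamily a b) (h : i + 1 < m) (hm : m ≤ b) :
    ascProd a m * a i = a (i + 1) * ascProd a m := by
  induction m with
  | zero => omega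
  | succ m ih =>
    rcases (show i + 1 < m ∨ m = i + 1 by omega) with h' | rfl
    · rw [ascProd, mul_assoc, ← ha.comm i m h' (by omega), ← mul_assoc, ih h' (by omega), mul_assoc]
    · calc ascProd a i * a i * a (i + 1) * a i
          = ascProd a i * (a i * a (i + 1) * a i) := by simp only [mul_assoc]
        _ = ascProd a i * a (i + 1) * a i * a (i + 1) := by
            rw [ha.braid i (by omega)]; simp only [mul_assoc]
        _ = a (i + 1) * (ascProd a i * a i * a (i + 1)) := by
            rw [← ha.mul_ascProd_of_lt (by omega) (by omega)]; simp only [mul_assoc]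

theorem ascProd_mul_ascProd (ha : IsBraidFamily a b) (hm : m + 1 ≤ b) :
    ascProd a b * ascProd a m = ascProd (fun i => a (i + 1)) m * ascProd a b := by
  induction m with
  | zero => simp [ascProd]
  | succ m ih =>
    rw [ascProd, ← mul_assoc, ih (by omega), mul_assoc, ha.ascProd_mul (by omega) le_rfl,
      ascProd, mul_assoc]

theorem ascProd_sq_mul {c : ℕ} (ha : IsBraidFamily a (c + 1)) :
    ascProd a (c + 1) ^ 2 * a c = a 0 * ascProd a (c + 1) ^ 2 := by
  calc ascProd a (c + 1) ^ 2 * a c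
      = a 0 * ascProd (fun i => a (i + 1)) c * ascProd a (c + 1) * a c := by
        rw [mul_ascProd_shift, pow_two]
    _ = a 0 * (ascProd a (c + 1) * ascProd a c) * a c := by
        rw [ha.ascProd_mul_ascProd le_rfl]; simp only [mul_assoc]
    _ = a 0 * ascProd a (c + 1) ^ 2 := by rw [pow_two]; simp only [ascProd, mul_assoc]

theorem ascProd_pow_mul (ha : IsBraidFamily a b) {j : ℕ} (h : i + j < b) :
    ascProd a b ^ j * a i = a (i + j) * ascProd a b ^ j := by
  induction j with
  | zero => simp
  | succ j ih =>
    rw [pow_succ', mul_assoc, ih (by omega), ← mul_assoc, ha.ascProd_mul (by omega) le_rfl,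
      mul_assoc]
    rfl

theorem fullTwist_mul_comm {c : ℕ} (ha : IsBraidFamily a (c + 1)) (hi : i < c + 1) :
    ascProd a (c + 1) ^ (c + 2) * a i = a i * ascProd a (c + 1) ^ (c + 2) := by
  obtain ⟨e, rfl⟩ : ∃ e, c = i + e := ⟨c - i, by omega⟩
  have up : ascProd a (i + e + 1) ^ e * a i = _ := ha.ascProd_pow_mul (by omega)
  have wrap := ha.ascProd_sq_mul
  have down : ascProd a (i + e + 1) ^ i * a 0 = _ := ha.ascProd_pow_mul (by omega)
  rw [zero_add] at down
  set D := ascProd a (i + e + 1)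
  have hD : D ^ (i + e + 2) = D ^ i * D ^ 2 * D ^ e := by
    rw [← pow_add, ← pow_add]; congr 1; omega
  rw [hD]
  calc D ^ i * D ^ 2 * D ^ e * a i = D ^ i * (D ^ 2 * a (i + e)) * D ^ e := by
        rw [mul_assoc _ _ (a i), up]; simp only [mul_assoc]
    _ = D ^ i * a 0 * D ^ 2 * D ^ e := by rw [wrap]; simp only [mul_assoc]
    _ = a i * (D ^ i * D ^ 2 * D ^ e) := by rw [down]; simp only [mul_assoc]

theorem exists_mul_eq_fullTwist {c : ℕ} (ha : IsBraidFamily a (c + 1)) (hi : i < c + 1) :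
    ∃ u ∈ positive a (c + 1), u * a i = ascProd a (c + 1) ^ (c + 2) := by
  obtain ⟨e, rfl⟩ : ∃ e, c = i + e := ⟨c - i, by omega⟩
  have up : ascProd a (i + e + 1) ^ e * a i = _ := ha.ascProd_pow_mul (by omega)
  refine ⟨ascProd a (i + e + 1) ^ (i + 1) * ascProd a (i + e) * ascProd a (i + e + 1) ^ e,
    mul_mem (mul_mem (pow_mem (ascProd_mem_positive le_rfl) _) (ascProd_mem_positive (by omega)))
      (pow_mem (ascProd_mem_positive le_rfl) _), ?_⟩
  calc _ = ascProd a (i + e + 1) ^ (i + 1) * (ascProd a (i + e) * a (i + e))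
        * ascProd a (i + e + 1) ^ e := by rw [mul_assoc, up]; simp only [mul_assoc]
    _ = ascProd a (i + e + 1) ^ (i + 1) * ascProd a (i + e + 1) * ascProd a (i + e + 1) ^ e := rfl
    _ = ascProd a (i + e + 1) ^ (i + e + 2) := by rw [← pow_succ, ← pow_add]; congr 1; omega

theorem exists_central (ha : IsBraidFamily a b) : ∃ z ∈ positive a b,
    (∀ x ∈ positive a b, Commute z x) ∧ ∀ i < b, ∃ u ∈ positive a b, u * a i = z := by
  cases b with
  | zero => exact ⟨1, one_mem _, fun _ _ => Commute.one_left _, by simp⟩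
  | succ c =>
    refine ⟨ascProd a (c + 1) ^ (c + 2), pow_mem (ascProd_mem_positive le_rfl) _, ?_,
      fun _ hi => ha.exists_mul_eq_fullTwist hi⟩
    intro x hx
    induction hx using Submonoid.closure_induction with
    | mem x hx =>
      obtain ⟨i, hi, rfl⟩ := hx
      exact ha.fullTwist_mul_comm hi
    | one => exact Commute.one_right _
    | mul x y _ _ hx hy => exact hx.mul_right hy

theorem exists_common_left_multiple (ha : IsBraidFamily a b) {x y : H} (hx : x ∈ positive a b)
    (hy : y ∈ positive a b) : ∃ w ∈ positive a b, ∃ v ∈ positive a b, w * x = v * y := by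
  obtain ⟨z, hz, hz_comm, hz_mul⟩ := ha.exists_central
  obtain ⟨u, hu, m, hum⟩ : ∃ u ∈ positive a b, ∃ m : ℕ, u * y = z ^ m := by
    induction hy using Submonoid.closure_induction_right with
    | one => exact ⟨1, one_mem _, 0, by simp⟩
    | mul_right y _ s hs ih =>
      obtain ⟨i, hi, rfl⟩ := hs
      obtain ⟨u, hu, m, hum⟩ := ih
      obtain ⟨v, hv, hvz⟩ := hz_mul i hi
      refine ⟨v * u, mul_mem hv hu, m + 1, ?_⟩
      calc v * u * (y * a i) = v * (u * y * a i) := by simp only [mul_assoc]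
        _ = v * a i * z ^ m := by
          rw [hum, (hz_comm _ (mem_positive hi)).pow_left, mul_assoc]
        _ = z ^ (m + 1) := by rw [hvz, pow_succ']
  exact ⟨z ^ m, pow_mem hz _, x * u, mul_mem hx hu, by
    rw [(hz_comm x hx).pow_left, mul_assoc, hum]⟩

end Monoid

theorem exists_mul_eq_of_mem_closure {G : Type*} [Group G] {a : ℕ → G} {b : ℕ}
    (ha : IsBraidFamily a b) {g : G} (hg : g ∈ Subgroup.closure (a '' Set.Iio b)) :
    ∃ u ∈ positive a b, ∃ v ∈ positive a b, u * g = v := by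
  induction hg using Subgroup.closure_induction with
  | mem x hx => exact ⟨1, one_mem _, x, Submonoid.subset_closure hx, one_mul x⟩
  | one => exact ⟨1, one_mem _, 1, one_mem _, one_mul 1⟩
  | mul g h _ _ hg hh =>
    obtain ⟨u, hu, v, hv, huv⟩ := hg
    obtain ⟨u', hu', v', hv', huv'⟩ := hh
    obtain ⟨w, hw, w', hw', hww'⟩ := ha.exists_common_left_multiple hv hu'
    refine ⟨w * u, mul_mem hw hu, w' * v', mul_mem hw' hv', ?_⟩
    rw [← huv', ← mul_assoc w', ← hww', ← huv]; simp only [mul_assoc]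
  | inv g _ hg =>
    obtain ⟨u, hu, v, hv, huv⟩ := hg
    exact ⟨v, hv, u, hu, by rw [← huv, mul_inv_cancel_right]⟩

end IsBraidFamily

namespace BraidMonoid

open IsBraidFamily

theorem isBraidFamily_σ (b : ℕ) : IsBraidFamily σ b :=
  ⟨fun _ _ h _ => σ_mul_σ (Or.inl h), fun _ _ => σ_mul_σ_mul_σ (Or.inl rfl)⟩

theorem exists_mem_positive (x : BraidMonoid) : ∃ b, x ∈ positive σ b := by
  induction x with
  | one => exact ⟨0, one_mem _⟩
  | mul_σ x i ih =>
    obtain ⟨b, hb⟩ := ih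
    exact ⟨max b (i + 1),
      mul_mem (positive_mono (le_max_left _ _) hb) (mem_positive (by omega))⟩

theorem exists_mul_eq_mul (x y : BraidMonoid) : ∃ w v : BraidMonoid, w * x = v * y := by
  obtain ⟨b, hb⟩ := exists_mem_positive x
  obtain ⟨c, hc⟩ := exists_mem_positive y
  obtain ⟨w, _, v, _, h⟩ := (isBraidFamily_σ (max b c)).exists_common_left_multiple
    (positive_mono (le_max_left _ _) hb) (positive_mono (le_max_right _ _) hc)
  exact ⟨w, v, h⟩

instance : OreLocalization.OreSet (⊤ : Submonoid BraidMonoid) where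
  ore_right_cancel _ _ _ h := ⟨1, by rw [mul_right_cancel h]⟩
  oreNum r s := (exists_mul_eq_mul r s).choose_spec.choose
  oreDenom r s := ⟨(exists_mul_eq_mul r s).choose, trivial⟩
  ore_eq r s := (exists_mul_eq_mul r s).choose_spec.choose_spec

end BraidMonoid

/-- The braid group on infinitely many strands, as the group of fractions of the positive braid
monoid. -/
abbrev InfBraidGroup : Type := (OreLocalization (⊤ : Submonoid BraidMonoid) BraidMonoid)ˣ

namespace BraidMonoid

/-- The map from the positive braid monoid to its group of fractions. -/
def toGroup : BraidMonoid →* InfBraidGroup :=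
  IsUnit.liftRight OreLocalization.numeratorHom
    (fun x => OreLocalization.numerator_isUnit (⟨x, trivial⟩ : (⊤ : Submonoid BraidMonoid)))

theorem val_toGroup (x : BraidMonoid) :
    (toGroup x : OreLocalization (⊤ : Submonoid BraidMonoid) BraidMonoid)
      = OreLocalization.oreDiv x 1 := rfl

theorem toGroup_injective : Function.Injective toGroup := by
  intro x y h
  have h' : OreLocalization.oreDiv x (1 : (⊤ : Submonoid BraidMonoid))
      = OreLocalization.oreDiv y 1 := by
    rw [← val_toGroup, ← val_toGroup, h]
  obtain ⟨u, v, huv, hu⟩ := OreLocalization.oreDiv_eq_iff.1 h'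
  simp only [Submonoid.coe_one, mul_one] at hu
  subst hu
  exact (mul_left_cancel huv).symm

theorem exists_toGroup_mul_eq (g : InfBraidGroup) :
    ∃ m x : BraidMonoid, toGroup m * g = toGroup x := by
  obtain ⟨r, s, h⟩ : ∃ (r : BraidMonoid) (s : (⊤ : Submonoid BraidMonoid)),
      (g : OreLocalization (⊤ : Submonoid BraidMonoid) BraidMonoid)
        = OreLocalization.oreDiv r s := by
    induction g.val using OreLocalization.ind with
    | c r s => exact ⟨r, s, rfl⟩
  refine ⟨s, r, Units.ext ?_⟩
  rw [Units.val_mul, h, val_toGroup, val_toGroup, OreLocalization.mul_cancel]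

end BraidMonoid

namespace InfBraidGroup

/-- The Artin generator crossing the strands `i` and `i + 1`. -/
def σ (i : ℕ) : InfBraidGroup := BraidMonoid.toGroup (BraidMonoid.σ i)

theorem σ_mul_σ {i j : ℕ} (h : Far i j) : σ i * σ j = σ j * σ i := by
  simp only [σ, ← map_mul, BraidMonoid.σ_mul_σ h]

theorem σ_mul_σ_mul_σ {i j : ℕ} (h : Adj i j) : σ i * σ j * σ i = σ j * σ i * σ j := by
  simp only [σ, ← map_mul, BraidMonoid.σ_mul_σ_mul_σ h]

end InfBraidGroup

/-- The Artin relators of the braid group on `n` strands. -/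
def braidRelators (n : ℕ) : Set (FreeGroup (Fin (n - 1))) :=
  {r | (∃ i j : Fin (n - 1), (i : ℕ) + 1 < j ∧
      r = FreeGroup.of i * FreeGroup.of j * (FreeGroup.of j * FreeGroup.of i)⁻¹) ∨
    (∃ i j : Fin (n - 1), (j : ℕ) = i + 1 ∧
      r = FreeGroup.of i * FreeGroup.of j * FreeGroup.of i *
        (FreeGroup.of j * FreeGroup.of i * FreeGroup.of j)⁻¹)}

/-- The braid group on `n` strands. -/
abbrev BraidGroup (n : ℕ) : Type := PresentedGroup (braidRelators n)

namespace BraidGroup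

/-- The Artin generator crossing the strands `i` and `i + 1`. -/
def σ (n : ℕ) (i : Fin (n - 1)) : BraidGroup n := PresentedGroup.of i

theorem σ_mul_σ {n : ℕ} {i j : Fin (n - 1)} (h : (i : ℕ) + 1 < j) :
    σ n i * σ n j = σ n j * σ n i :=
  mul_inv_eq_one.1 (PresentedGroup.one_of_mem (rels := braidRelators n) (Or.inl ⟨i, j, h, rfl⟩))

theorem σ_mul_σ_mul_σ {n : ℕ} {i j : Fin (n - 1)} (h : (j : ℕ) = i + 1) :
    σ n i * σ n j * σ n i = σ n j * σ n i * σ n j :=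
  mul_inv_eq_one.1 (PresentedGroup.one_of_mem (rels := braidRelators n) (Or.inr ⟨i, j, h, rfl⟩))

/-- The universal property of the Artin presentation. -/
def lift {n : ℕ} {H : Type*} [Group H] (f : Fin (n - 1) → H)
    (comm : ∀ i j : Fin (n - 1), (i : ℕ) + 1 < j → f i * f j = f j * f i)
    (braid : ∀ i j : Fin (n - 1), (j : ℕ) = i + 1 → f i * f j * f i = f j * f i * f j) :
    BraidGroup n →* H :=
  PresentedGroup.toGroup (f := f) (by
    rintro r (⟨i, j, h, rfl⟩ | ⟨i, j, h, rfl⟩)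
    · simp only [map_mul, map_inv, FreeGroup.lift_apply_of, mul_inv_eq_one]; exact comm i j h
    · simp only [map_mul, map_inv, FreeGroup.lift_apply_of, mul_inv_eq_one]; exact braid i j h)

theorem lift_σ {n : ℕ} {H : Type*} [Group H] (f : Fin (n - 1) → H) (comm braid)
    (i : Fin (n - 1)) : lift f comm braid (σ n i) = f i := PresentedGroup.toGroup.of _

/-- The inclusion in the infinite braid group. -/
def toInf (n : ℕ) : BraidGroup n →* InfBraidGroup :=
  lift (fun i => InfBraidGroup.σ i) (fun _ _ h => InfBraidGroup.σ_mul_σ (Or.inl h))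
    (fun _ _ h => InfBraidGroup.σ_mul_σ_mul_σ (Or.inl h))

theorem toInf_σ (n : ℕ) (i : Fin (n - 1)) : toInf n (σ n i) = InfBraidGroup.σ i := lift_σ _ _ _ i

/-- The Artin generators as a sequence, extended by `1`. -/
def σSeq (n : ℕ) (i : ℕ) : BraidGroup n := if h : i < n - 1 then σ n ⟨i, h⟩ else 1

theorem σSeq_of_lt {n i : ℕ} (h : i < n - 1) : σSeq n i = σ n ⟨i, h⟩ := dif_pos h

theorem isBraidFamily_σSeq (n : ℕ) : IsBraidFamily (σSeq n) (n - 1) := by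
  constructor
  · intro i j h hj
    rw [σSeq_of_lt hj, σSeq_of_lt (show i < n - 1 by omega)]
    exact σ_mul_σ h
  · intro i h
    rw [σSeq_of_lt h, σSeq_of_lt (show i < n - 1 by omega)]
    exact σ_mul_σ_mul_σ rfl

theorem closure_σSeq (n : ℕ) : Subgroup.closure (σSeq n '' Set.Iio (n - 1)) = ⊤ := by
  rw [← PresentedGroup.closure_range_of]
  congr 1
  ext x
  constructor
  · rintro ⟨i, hi, rfl⟩
    exact ⟨⟨i, hi⟩, (σSeq_of_lt hi).symm⟩
  · rintro ⟨i, rfl⟩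
    exact ⟨i, i.2, σSeq_of_lt i.2⟩

/-- Evaluation of positive braids in `BraidGroup n`. The crossings beyond the strand `n` are sent
to `0`, which is compatible with the braid relations because they are homogeneous in the set of
generators that occur. -/
def truncate (n : ℕ) : BraidMonoid →* WithZero (BraidGroup n) :=
  PresentedMonoid.lift (fun i => if i < n - 1 then (σSeq n i : WithZero (BraidGroup n)) else 0) (by
    rintro _ _ (⟨i, j, h⟩ | i)
    · by_cases hj : j < n - 1
      · have := (isBraidFamily_σSeq n).comm i j h hj
        simp only [map_mul, FreeMonoid.lift_eval_of, if_pos hj, if_pos (show i < n - 1 by omega)]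
        exact_mod_cast this
      · simp [hj]
    · by_cases hi : i + 1 < n - 1
      · have := (isBraidFamily_σSeq n).braid i hi
        simp only [map_mul, FreeMonoid.lift_eval_of, if_pos hi, if_pos (show i < n - 1 by omega)]
        exact_mod_cast this
      · simp [hi])

theorem exists_truncate_eq {n : ℕ} {x : BraidGroup n}
    (hx : x ∈ IsBraidFamily.positive (σSeq n) (n - 1)) :
    ∃ w, truncate n w = x ∧ toInf n x = BraidMonoid.toGroup w := by
  induction hx using Submonoid.closure_induction with
  | mem x hx =>
    obtain ⟨i, hi, rfl⟩ := hx
    refine ⟨BraidMonoid.σ i, if_pos hi, ?_⟩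
    rw [σSeq_of_lt hi, toInf_σ]
    rfl
  | one => exact ⟨1, map_one _, by rw [map_one, map_one]⟩
  | mul x y _ _ hx hy =>
    obtain ⟨u, hu, hu'⟩ := hx
    obtain ⟨v, hv, hv'⟩ := hy
    exact ⟨u * v, by rw [map_mul, hu, hv, WithZero.coe_mul], by rw [map_mul, hu', hv', map_mul]⟩

theorem toInf_injective (n : ℕ) : Function.Injective (toInf n) := by
  rw [injective_iff_map_eq_one]
  intro g hg
  obtain ⟨u, hu, v, hv, huv⟩ := (isBraidFamily_σSeq n).exists_mul_eq_of_mem_closure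
    (closure_σSeq n ▸ Subgroup.mem_top g)
  obtain ⟨x, hx, hx'⟩ := exists_truncate_eq hu
  obtain ⟨y, hy, hy'⟩ := exists_truncate_eq hv
  have hxy : x = y := BraidMonoid.toGroup_injective (by
    rw [← hx', ← hy', ← huv, map_mul, hg, mul_one])
  have : u = v := WithZero.coe_injective (by rw [← hx, ← hy, hxy])
  rwa [← huv, left_eq_mul] at this

/-- The map of braid groups adding a strand. -/
def stabilize (n : ℕ) : BraidGroup (n - 1) →* BraidGroup n :=
  lift (fun i => σ n (Fin.castLE (by omega) i))
    (fun _ _ h => σ_mul_σ (by simpa using h)) (fun _ _ h => σ_mul_σ_mul_σ (by simpa using h))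

theorem stabilize_σ (n : ℕ) (i : Fin (n - 1 - 1)) :
    stabilize n (σ (n - 1) i) = σ n (Fin.castLE (by omega) i) := lift_σ _ _ _ _

theorem toInf_stabilize (n : ℕ) (g : BraidGroup (n - 1)) :
    toInf n (stabilize n g) = toInf (n - 1) g := by
  have : (toInf n).comp (stabilize n) = toInf (n - 1) := PresentedGroup.ext fun i => by
    change toInf n (stabilize n (σ (n - 1) i)) = toInf (n - 1) (σ (n - 1) i)
    rw [stabilize_σ, toInf_σ, toInf_σ]
    rfl
  exact DFunLike.congr_fun this g

end BraidGroup

/-! ### Homogeneous chains -/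

/-- Tuples of length `q`: the `q`-th term of the standard resolution is spanned by
`BarTuple S (q + 1)`. -/
def BarTuple.{u} (S : Type u) : ℕ → Type u
  | 0 => PUnit
  | q + 1 => S × BarTuple S q

namespace BarTuple

variable {S T U : Type*}

/-- Prepending an entry. -/
def cons {q : ℕ} (s : S) (w : BarTuple S q) : BarTuple S (q + 1) := (s, w)

/-- The entrywise application of a function. -/
def map (f : S → T) : ∀ q, BarTuple S q → BarTuple T q
  | 0, _ => PUnit.unit
  | q + 1, w => cons (f w.1) (map f q w.2)

theorem map_id (q : ℕ) (w : BarTuple S q) : map id q w = w := by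
  induction q with
  | zero => rfl
  | succ q ih => exact Prod.ext rfl (ih w.2)

theorem map_map (f : S → T) (g : T → U) (q : ℕ) (w : BarTuple S q) :
    map g q (map f q w) = map (g ∘ f) q w := by
  induction q with
  | zero => rfl
  | succ q ih => exact Prod.ext rfl (ih w.2)

theorem map_injective {f : S → T} (hf : Function.Injective f) (q : ℕ) :
    Function.Injective (map f q) := by
  induction q with
  | zero => exact fun _ _ _ => rfl
  | succ q ih =>
    intro x y h
    exact Prod.ext (hf (congrArg Prod.fst h)) (ih (congrArg Prod.snd h))

end BarTuple

/-- Chains of the standard resolution on a set of vertices, in degree `q - 1`. -/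
abbrev BarChain (F : Type*) [CommRing F] (S : Type*) (q : ℕ) : Type _ := BarTuple S q →₀ F

namespace BarChain

variable (F : Type*) [CommRing F] {S T U M : Type*} [AddCommGroup M] [Module F M]

/-- The linear extension of `BarTuple.cons s`. -/
def cons {q : ℕ} (s : S) : BarChain F S q →ₗ[F] BarChain F S (q + 1) :=
  Finsupp.lmapDomain F F (BarTuple.cons s)

theorem cons_single {q : ℕ} (s : S) (w : BarTuple S q) (c : F) :
    cons F s (Finsupp.single w c) = Finsupp.single (BarTuple.cons s w) c :=
  Finsupp.mapDomain_single

variable {F} in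
@[elab_as_elim]
theorem induction_cons {q : ℕ} {P : BarChain F S (q + 1) → Prop} (zero : P 0)
    (add : ∀ x y, P x → P y → P (x + y)) (cons : ∀ s x, P (cons F s x))
    (x : BarChain F S (q + 1)) : P x := by
  induction x using Finsupp.induction_linear with
  | zero => exact zero
  | add x y hx hy => exact add x y hx hy
  | single w c => exact cons_single F w.1 w.2 c ▸ cons w.1 (Finsupp.single w.2 c)

/-- The linear extension of `BarTuple.map f`. -/
def map (f : S → T) (q : ℕ) : BarChain F S q →ₗ[F] BarChain F T q :=
  Finsupp.lmapDomain F F (BarTuple.map f q)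

theorem map_single (f : S → T) (q : ℕ) (w : BarTuple S q) (c : F) :
    map F f q (Finsupp.single w c) = Finsupp.single (BarTuple.map f q w) c :=
  Finsupp.mapDomain_single

theorem map_cons (f : S → T) (q : ℕ) (s : S) (x : BarChain F S q) :
    map F f (q + 1) (cons F s x) = cons F (f s) (map F f q x) := by
  induction x using Finsupp.induction_linear with
  | zero => simp only [map_zero]
  | add x y hx hy => simp only [map_add, hx, hy]
  | single w c => simp only [cons_single, map_single]; rfl

theorem map_map (f : S → T) (g : T → U) (q : ℕ) (x : BarChain F S q) :
    map F g q (map F f q x) = map F (g ∘ f) q x := by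
  induction x using Finsupp.induction_linear with
  | zero => simp only [map_zero]
  | add x y hx hy => simp only [map_add, hx, hy]
  | single w c => simp only [map_single, BarTuple.map_map]

theorem map_id (q : ℕ) (x : BarChain F S q) : map F id q x = x := by
  induction x using Finsupp.induction_linear with
  | zero => simp only [map_zero]
  | add x y hx hy => simp only [map_add, hx, hy]
  | single w c => simp only [map_single, BarTuple.map_id]

/-- The linear map out of chains whose restriction to the chains with first vertex `s` is `f s`. -/
def elim {q : ℕ} (f : S → (BarChain F S q →ₗ[F] M)) : BarChain F S (q + 1) →ₗ[F] M :=
  Finsupp.linearCombination F (fun w : BarTuple S (q + 1) => f w.1 (Finsupp.single w.2 1))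

theorem elim_cons {q : ℕ} (f : S → (BarChain F S q →ₗ[F] M)) (s : S) (x : BarChain F S q) :
    elim F f (cons F s x) = f s x := by
  induction x using Finsupp.induction_linear with
  | zero => simp only [map_zero]
  | add x y hx hy => simp only [map_add, hx, hy]
  | single w c =>
    rw [cons_single, elim, Finsupp.linearCombination_single, ← map_smul, Finsupp.smul_single,
      smul_eq_mul, mul_one]
    rfl

/-- The alternating sum of the faces, augmented in degree `0`. -/
def boundary (S : Type*) : ∀ q, BarChain F S (q + 1) →ₗ[F] BarChain F S q
  | 0 => elim F (fun _ => LinearMap.id)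
  | q + 1 => elim F (fun s => LinearMap.id - cons F s ∘ₗ boundary S q)

theorem boundary_zero_cons (s : S) (x : BarChain F S 0) : boundary F S 0 (cons F s x) = x :=
  elim_cons F _ s x

theorem boundary_succ_cons (q : ℕ) (s : S) (x : BarChain F S (q + 1)) :
    boundary F S (q + 1) (cons F s x) = x - cons F s (boundary F S q x) :=
  elim_cons F _ s x

theorem boundary_boundary (q : ℕ) (x : BarChain F S (q + 2)) :
    boundary F S q (boundary F S (q + 1) x) = 0 := by
  induction q with
  | zero =>
    induction x using induction_cons with
    | zero => simp only [map_zero]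
    | add x y hx hy => simp only [map_add, hx, hy, add_zero]
    | cons s x => rw [boundary_succ_cons, map_sub, boundary_zero_cons, sub_self]
  | succ q ih =>
    induction x using induction_cons with
    | zero => simp only [map_zero]
    | add x y hx hy => simp only [map_add, hx, hy, add_zero]
    | cons s x =>
      rw [boundary_succ_cons, map_sub, boundary_succ_cons, ih, map_zero, sub_zero, sub_self]

theorem boundary_map (f : S → T) (q : ℕ) (x : BarChain F S (q + 1)) :
    boundary F T q (map F f (q + 1) x) = map F f q (boundary F S q x) := by
  induction q with
  | zero =>
    induction x using induction_cons with
    | zero => simp only [map_zero]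
    | add x y hx hy => simp only [map_add, hx, hy]
    | cons s x => rw [map_cons, boundary_zero_cons, boundary_zero_cons]
  | succ q ih =>
    induction x using induction_cons with
    | zero => simp only [map_zero]
    | add x y hx hy => simp only [map_add, hx, hy]
    | cons s x => rw [map_cons, boundary_succ_cons, boundary_succ_cons, map_sub, map_cons, ih]

/-- The prism operator: a chain homotopy between the maps induced by two functions. -/
def prism (f g : S → T) : ∀ q, BarChain F S q →ₗ[F] BarChain F T (q + 1)
  | 0 => 0
  | q + 1 => elim F (fun s => cons F (f s) ∘ₗ (cons F (g s) ∘ₗ map F g q - prism f g q))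

theorem prism_zero (f g : S → T) (x : BarChain F S 0) : prism F f g 0 x = 0 := rfl

theorem prism_cons (f g : S → T) (q : ℕ) (s : S) (x : BarChain F S q) :
    prism F f g (q + 1) (cons F s x) =
      cons F (f s) (cons F (g s) (map F g q x) - prism F f g q x) :=
  elim_cons F _ s x

theorem boundary_prism_add_prism_boundary (f g : S → T) (q : ℕ) (x : BarChain F S (q + 1)) :
    boundary F T (q + 1) (prism F f g (q + 1) x) + prism F f g q (boundary F S q x)
      = map F g (q + 1) x - map F f (q + 1) x := by
  induction q with
  | zero =>
    induction x using induction_cons with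
    | zero => simp only [map_zero, add_zero, sub_zero]
    | add x y hx hy => simp only [map_add, add_sub_add_comm, ← hx, ← hy]; abel
    | cons s x =>
      simp only [prism_cons, prism_zero, map_cons, boundary_succ_cons, boundary_zero_cons,
        sub_zero, add_zero]
      rfl
  | succ q ih =>
    induction x using induction_cons with
    | zero => simp only [map_zero, add_zero, sub_zero]
    | add x y hx hy => simp only [map_add, add_sub_add_comm, ← hx, ← hy]; abel
    | cons s x =>
      simp only [prism_cons, map_cons, boundary_succ_cons, map_sub, boundary_map,
        eq_sub_of_add_eq (ih x)]
      abel

theorem prism_map (f g : S → T) (a : S → S) (b : T → T) (hf : f ∘ a = b ∘ f) (hg : g ∘ a = b ∘ g)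
    (q : ℕ) (x : BarChain F S q) :
    prism F f g q (map F a q x) = map F b (q + 1) (prism F f g q x) := by
  induction q with
  | zero => rw [prism_zero, prism_zero, map_zero]
  | succ q ih =>
    induction x using induction_cons with
    | zero => simp only [map_zero]
    | add x y hx hy => simp only [map_add, hx, hy]
    | cons s x =>
      have hfs : f (a s) = b (f s) := congrFun hf s
      have hgs : g (a s) = b (g s) := congrFun hg s
      simp only [prism_cons, map_cons, map_sub, ih, map_map, hg, hfs, hgs]

end BarChain

/-! ### Exactness for chains of the infinite braid group -/

namespace BraidAction

/-- The diagonal action on tuples. -/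
def tuple {S : Type*} (A : BraidAction S) (q : ℕ) : BraidAction (BarTuple S q) where
  act i := BarTuple.map (A.act i) q
  act_comm h x := by
    simp only [BarTuple.map_map]; congr 1; funext s; exact A.act_comm h s
  act_braid h x := by
    simp only [BarTuple.map_map]; congr 1; funext s; exact A.act_braid h s

section Map
variable (F : Type*) [CommRing F] {X Y : Type*} (S : BraidAction X) (S' : BraidAction Y)

theorem lmapDomain_actL {f : X → Y} {i : ℕ} (h : ∀ x, f (S.act i x) = S'.act i (f x))
    (z : X →₀ F) :
    Finsupp.lmapDomain F F f (S.actL F i z) = S'.actL F i (Finsupp.lmapDomain F F f z) := by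
  induction z using Finsupp.induction_linear with
  | zero => simp only [map_zero]
  | add x y hx hy => simp only [map_add, hx, hy]
  | single x c => simp only [actL_single, Finsupp.lmapDomain_apply, Finsupp.mapDomain_single, h]

theorem altSum_map {f : (X →₀ F) →ₗ[F] (Y →₀ F)}
    (h : ∀ i x, f (S.actL F i x) = S'.actL F i (f x)) (B p : ℕ) (x : X →₀ F) :
    f (S.altSum F B p x) = S'.altSum F B p (f x) := by
  induction p with
  | zero => rfl
  | succ p ih => rw [altSum_succ, altSum_succ, map_sub, h, ih]

end Map

end BraidAction

/-- The right translation action of positive braids on `T × BraidMonoid`. -/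
def freeGarsideAction (T : Type*) : GarsideAction (T × BraidMonoid) where
  act i w := (w.1, w.2 * BraidMonoid.σ i)
  act_comm h x := Prod.ext rfl (BraidMonoid.mul_σ_comm h.symm x.2)
  act_braid h x := Prod.ext rfl (BraidMonoid.mul_σ_braid h x.2)
  length w := w.2.length
  length_act i x := by simp only [BraidMonoid.length_mul, BraidMonoid.length_σ]
  act_injective i x y h := by
    have h₁ := congrArg Prod.fst h
    have h₂ := congrArg Prod.snd h
    exact Prod.ext h₁ (mul_right_cancel h₂)
  exists_of_far {i j x y} hij h := by
    obtain ⟨z, hx, hy⟩ :=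
      (BraidMonoid.lcmRel_of_mul_σ_eq (congrArg Prod.snd h)).exists_of_far hij
    exact ⟨(x.1, z), Prod.ext rfl hx, Prod.ext (congrArg Prod.fst h).symm hy⟩
  exists_of_adj {i j x y} hij h := by
    obtain ⟨z, hx, hy⟩ :=
      (BraidMonoid.lcmRel_of_mul_σ_eq (congrArg Prod.snd h)).exists_of_adj hij
    exact ⟨(x.1, z), Prod.ext rfl hx, Prod.ext (congrArg Prod.fst h).symm hy⟩

namespace InfBraidGroup

open BraidMonoid (toGroup)

/-- The right translation action of positive braids on the infinite braid group. -/
def braidAction : BraidAction InfBraidGroup where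
  act i g := g * σ i
  act_comm h x := by simp only [mul_assoc, σ_mul_σ h]
  act_braid h x := by
    have := σ_mul_σ_mul_σ h
    simp only [mul_assoc] at this ⊢
    rw [this]

/-- The parametrisation by `(t, x)` of the tuples whose first entry lies in `m⁻¹ * BraidMonoid`:
the first entry is `m⁻¹ * x` and the others are those of `t`, translated by `m⁻¹ * x`. -/
def fracTuple (q : ℕ) (m : BraidMonoid) (w : BarTuple InfBraidGroup q × BraidMonoid) :
    BarTuple InfBraidGroup (q + 1) :=
  BarTuple.cons ((toGroup m)⁻¹ * toGroup w.2)
    (BarTuple.map (· * ((toGroup m)⁻¹ * toGroup w.2)) q w.1)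

theorem fracTuple_injective (q : ℕ) (m : BraidMonoid) : Function.Injective (fracTuple q m) := by
  rintro ⟨t, x⟩ ⟨t', x'⟩ h
  obtain rfl : x = x' :=
    BraidMonoid.toGroup_injective (mul_left_cancel (congrArg Prod.fst h))
  obtain rfl : t = t' := BarTuple.map_injective (mul_left_injective _) q (congrArg Prod.snd h)
  rfl

theorem fracTuple_act (q : ℕ) (m : BraidMonoid) (i : ℕ)
    (w : BarTuple InfBraidGroup q × BraidMonoid) :
    fracTuple q m ((freeGarsideAction _).act i w)
      = (braidAction.tuple (q + 1)).act i (fracTuple q m w) := by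
  have h : (toGroup m)⁻¹ * toGroup (w.2 * BraidMonoid.σ i)
      = (toGroup m)⁻¹ * toGroup w.2 * σ i := by
    rw [map_mul, mul_assoc]; rfl
  refine Prod.ext h ?_
  change BarTuple.map (· * ((toGroup m)⁻¹ * toGroup (w.2 * BraidMonoid.σ i))) q w.1
    = BarTuple.map (· * σ i) q (BarTuple.map (· * ((toGroup m)⁻¹ * toGroup w.2)) q w.1)
  rw [BarTuple.map_map, h]
  congr 1
  funext s
  exact (mul_assoc _ _ _).symm

/-- Left multiplication by a positive braid on the second factor. -/
def mulLeft {T : Type*} (v : BraidMonoid) (w : T × BraidMonoid) : T × BraidMonoid := (w.1, v * w.2)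

theorem mulLeft_act {T : Type*} (v : BraidMonoid) (i : ℕ) (w : T × BraidMonoid) :
    mulLeft v ((freeGarsideAction T).act i w) = (freeGarsideAction T).act i (mulLeft v w) :=
  Prod.ext rfl (mul_assoc _ _ _).symm

theorem fracTuple_mulLeft (q : ℕ) (m v : BraidMonoid) (w : BarTuple InfBraidGroup q × BraidMonoid) :
    fracTuple q (v * m) (mulLeft v w) = fracTuple q m w := by
  have : (toGroup (v * m))⁻¹ * toGroup (v * w.2) = (toGroup m)⁻¹ * toGroup w.2 := by
    rw [map_mul, map_mul]; group
  simp only [fracTuple, mulLeft, this]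

theorem exists_fracTuple_eq (q : ℕ) (t : BarTuple InfBraidGroup (q + 1)) :
    ∃ m w, fracTuple q m w = t := by
  obtain ⟨m, x, h⟩ := BraidMonoid.exists_toGroup_mul_eq t.1
  have ht : (toGroup m)⁻¹ * toGroup x = t.1 := by rw [← h, inv_mul_cancel_left]
  refine ⟨m, (BarTuple.map (· * t.1⁻¹) q t.2, x), Prod.ext ht ?_⟩
  change BarTuple.map (· * ((toGroup m)⁻¹ * toGroup x)) q (BarTuple.map (· * t.1⁻¹) q t.2) = t.2
  have hid : (· * t.1) ∘ (· * t.1⁻¹) = (id : InfBraidGroup → InfBraidGroup) :=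
    funext fun s => inv_mul_cancel_right s t.1
  rw [ht, BarTuple.map_map, hid, BarTuple.map_id]

section Transfer
variable (F : Type*) [CommRing F] (q : ℕ)

/-- The linear extension of `fracTuple`. -/
def fracChain (m : BraidMonoid) :
    (BarTuple InfBraidGroup q × BraidMonoid →₀ F) →ₗ[F] BarChain F InfBraidGroup (q + 1) :=
  Finsupp.lmapDomain F F (fracTuple q m)

/-- The linear extension of `mulLeft`. -/
def mulLeftL {T : Type*} (v : BraidMonoid) : (T × BraidMonoid →₀ F) →ₗ[F] (T × BraidMonoid →₀ F) :=
  Finsupp.lmapDomain F F (mulLeft v)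

theorem fracChain_mulLeftL (m v : BraidMonoid) (z : BarTuple InfBraidGroup q × BraidMonoid →₀ F) :
    fracChain F q (v * m) (mulLeftL F v z) = fracChain F q m z := by
  induction z using Finsupp.induction_linear with
  | zero => simp only [map_zero]
  | add x y hx hy => simp only [map_add, hx, hy]
  | single x c =>
    simp only [fracChain, mulLeftL, Finsupp.lmapDomain_apply, Finsupp.mapDomain_single,
      fracTuple_mulLeft]

theorem fracChain_actL (m : BraidMonoid) (i : ℕ) (z : BarTuple InfBraidGroup q × BraidMonoid →₀ F) :
    fracChain F q m ((freeGarsideAction _).actL F i z)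
      = (braidAction.tuple (q + 1)).actL F i (fracChain F q m z) :=
  BraidAction.lmapDomain_actL F _ _ (fracTuple_act q m i) z

theorem mulLeftL_mem_relations {T : Type*} (v : BraidMonoid) {b : ℕ} {z : T × BraidMonoid →₀ F}
    (hz : z ∈ (freeGarsideAction T).relations F b) :
    mulLeftL F v z ∈ (freeGarsideAction T).relations F b :=
  BraidAction.relations_le_comap F _ _ _
    (fun i _ x => BraidAction.lmapDomain_actL F _ _ (mulLeft_act v i) x) hz

theorem fracChain_injective (m : BraidMonoid) : Function.Injective (fracChain F q m) :=
  Finsupp.mapDomain_injective (fracTuple_injective q m)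

theorem fracChain_add {m m' w v : BraidMonoid} (h : w * m = v * m')
    (y y' : BarTuple InfBraidGroup q × BraidMonoid →₀ F) :
    fracChain F q (w * m) (mulLeftL F w y + mulLeftL F v y')
      = fracChain F q m y + fracChain F q m' y' := by
  rw [map_add, fracChain_mulLeftL, h, fracChain_mulLeftL]

theorem exists_fracChain_eq (z : BarChain F InfBraidGroup (q + 1)) :
    ∃ m y, fracChain F q m y = z := by
  induction z using Finsupp.induction_linear with
  | zero => exact ⟨1, 0, map_zero _⟩
  | add f g hf hg =>
    obtain ⟨m, y, rfl⟩ := hf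
    obtain ⟨m', y', rfl⟩ := hg
    obtain ⟨w, v, h⟩ := BraidMonoid.exists_mul_eq_mul m m'
    exact ⟨w * m, _, fracChain_add F q h y y'⟩
  | single t c =>
    obtain ⟨m, w, h⟩ := exists_fracTuple_eq q t
    exact ⟨m, Finsupp.single w c, Finsupp.mapDomain_single.trans (by rw [h])⟩

/-- The relations on chains of the infinite braid group: the quotient computes the homology of the
braid group on `b + 1` strands. -/
abbrev chainRelations (b : ℕ) : Submodule F (BarChain F InfBraidGroup q) :=
  (braidAction.tuple q).relations F b

theorem exists_fracChain_eq_of_mem_relations {b : ℕ} {z : BarChain F InfBraidGroup (q + 1)}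
    (hz : z ∈ chainRelations F (q + 1) b) :
    ∃ m, ∃ y ∈ (freeGarsideAction _).relations F b, fracChain F q m y = z := by
  induction hz using Submodule.span_induction with
  | mem x hx =>
    obtain ⟨i, hi, x, rfl⟩ := hx
    obtain ⟨m, y, rfl⟩ := exists_fracChain_eq F q x
    exact ⟨m, _, BraidAction.actL_sub_mem_relations F _ hi y, by rw [map_sub, fracChain_actL]⟩
  | zero => exact ⟨1, 0, zero_mem _, map_zero _⟩
  | add f g _ _ hf hg =>
    obtain ⟨m, y, hy, rfl⟩ := hf
    obtain ⟨m', y', hy', rfl⟩ := hg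
    obtain ⟨w, v, h⟩ := BraidMonoid.exists_mul_eq_mul m m'
    exact ⟨w * m, _, add_mem (mulLeftL_mem_relations F w hy) (mulLeftL_mem_relations F v hy'),
      fracChain_add F q h y y'⟩
  | smul c x _ hx =>
    obtain ⟨m, y, hy, rfl⟩ := hx
    exact ⟨m, c • y, Submodule.smul_mem _ c hy, map_smul _ c y⟩

/-- A left common denominator moves the problem to the free Garside action. -/
theorem exists_sub_altSum_mem_chainRelations {B p : ℕ} (h : p + 1 ≤ B)
    {z : BarChain F InfBraidGroup (q + 1)}
    (hz : (braidAction.tuple (q + 1)).altSum F B p z ∈ chainRelations F (q + 1) (B - p)) :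
    ∃ y, z - (braidAction.tuple (q + 1)).altSum F B (p + 1) y
      ∈ chainRelations F (q + 1) (B - p - 1) := by
  obtain ⟨m, z₀, rfl⟩ := exists_fracChain_eq F q z
  obtain ⟨m', l, hl, hlz⟩ := exists_fracChain_eq_of_mem_relations F q hz
  obtain ⟨w, v, hwv⟩ := BraidMonoid.exists_mul_eq_mul m m'
  have hmap := BraidAction.altSum_map F _ _ (fracChain_actL F q (w * m)) B
  have hlift : (freeGarsideAction _).altSum F B p (mulLeftL F w z₀) = mulLeftL F v l := by
    apply fracChain_injective F q (w * m)
    rw [hmap, fracChain_mulLeftL, hwv, fracChain_mulLeftL, hlz]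
  obtain ⟨y, hy⟩ := (freeGarsideAction _).exists_sub_altSum_mem_relations h
    (hlift ▸ mulLeftL_mem_relations F v hl)
  have hy' : fracChain F q (w * m) _ ∈ chainRelations F (q + 1) (B - p - 1) :=
    BraidAction.relations_le_comap F _ _ _ (fun i _ => fracChain_actL F q (w * m) i) hy
  exact ⟨fracChain F q (w * m) y, by rwa [map_sub, fracChain_mulLeftL, hmap] at hy'⟩

end Transfer

end InfBraidGroup

/-! ### Homological stability from an exact complex of coinvariants -/

/-- A chain complex `X` with an increasing sequence of subcomplexes `L · b`. Stability concerns
the homology of the quotients `X / L · b`, expressed through `cycles` and `boundaries`. -/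
structure FilteredComplex.{u} where
  X : ℕ → Type u
  [addCommGroup : ∀ q, AddCommGroup (X q)]
  d : ∀ q, X (q + 1) →+ X q
  d_d : ∀ q x, d q (d (q + 1) x) = 0
  L : ∀ q, ℕ → AddSubgroup (X q)
  L_mono : ∀ q, Monotone (L q)
  d_mem_L : ∀ {q b x}, x ∈ L (q + 1) b → d q x ∈ L q b

namespace FilteredComplex

attribute [instance] addCommGroup

variable (S : FilteredComplex)

/-- The elements which become cycles in the quotient by `L · b`. -/
def cycles : ∀ q, ℕ → AddSubgroup (S.X q)
  | 0, _ => ⊤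
  | q + 1, b => (S.L q b).comap (S.d q)

/-- The elements which become boundaries in the quotient by `L · b`. -/
def boundaries (q b : ℕ) : AddSubgroup (S.X q) := (S.d q).range ⊔ S.L q b

variable {S} {q b : ℕ}

theorem mem_cycles_succ {x : S.X (q + 1)} : x ∈ S.cycles (q + 1) b ↔ S.d q x ∈ S.L q b := Iff.rfl

theorem d_mem_cycles (y : S.X (q + 1)) : S.d q y ∈ S.cycles q b := by
  cases q with
  | zero => trivial
  | succ q => rw [mem_cycles_succ, S.d_d]; exact zero_mem _

theorem L_le_cycles : S.L q b ≤ S.cycles q b := by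
  cases q with
  | zero => exact le_top
  | succ q => exact fun _ => S.d_mem_L

theorem mem_boundaries {x : S.X q} : x ∈ S.boundaries q b ↔ ∃ y, x - S.d q y ∈ S.L q b := by
  rw [boundaries, AddSubgroup.mem_sup]
  constructor
  · rintro ⟨_, ⟨y, rfl⟩, l, hl, rfl⟩
    exact ⟨y, by rwa [add_sub_cancel_left]⟩
  · rintro ⟨y, hy⟩
    exact ⟨_, ⟨y, rfl⟩, _, hy, add_sub_cancel _ _⟩

theorem d_mem_boundaries (y : S.X (q + 1)) : S.d q y ∈ S.boundaries q b :=
  AddSubgroup.mem_sup_left ⟨y, rfl⟩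

theorem L_le_boundaries : S.L q b ≤ S.boundaries q b := le_sup_right

theorem boundaries_mono {c : ℕ} (h : b ≤ c) : S.boundaries q b ≤ S.boundaries q c :=
  sup_le_sup_left (S.L_mono q h) _

variable (S) in
/-- Injectivity of the map from the `q`-th homology of `X / L · (b - 1)` to that of `X / L · b`. -/
def StabilizationInjective (b q : ℕ) : Prop :=
  ∀ x ∈ S.cycles q (b - 1), x ∈ S.boundaries q b → x ∈ S.boundaries q (b - 1)

variable (S) in
/-- Surjectivity of the map from the `q`-th homology of `X / L · (b - 1)` to that of `X / L · b`. -/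
def StabilizationSurjective (b q : ℕ) : Prop :=
  ∀ y ∈ S.cycles q b, ∃ x ∈ S.cycles q (b - 1), y - x ∈ S.boundaries q b

end FilteredComplex

/-- A filtered complex with chain maps `s B p` inducing the differentials
`X / L · (B - (p + 1)) → X / L · (B - p)` of a complex which is exact in each degree `q`, and
acting on homology by `1` for even `p` and by `0` for odd `p`. -/
structure StabilityDatum.{u} extends FilteredComplex.{u} where
  s : ∀ (_B _p q : ℕ), X q →+ X q
  d_s : ∀ B p q x, d q (s B p (q + 1) x) = s B p q (d q x)
  s_zero : ∀ B q x, s B 0 q x = x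
  s_mem_L : ∀ {B p q x}, x ∈ L q (B - (p + 1)) → s B p q x ∈ L q (B - (p + 1))
  s_s_mem_L : ∀ {B p}, p + 1 ≤ B → ∀ q x, s B p q (s B (p + 1) q x) ∈ L q (B - p)
  exists_sub_s_mem_L : ∀ {B p q z}, p + 1 ≤ B → s B p q z ∈ L q (B - p) →
    ∃ y, z - s B (p + 1) q y ∈ L q (B - (p + 1))
  s_sub_mem_boundaries : ∀ {B p q z}, Even p → z ∈ toFilteredComplex.cycles q (B - (p + 1)) →
    s B p q z - z ∈ toFilteredComplex.boundaries q (B - (p + 1))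
  s_mem_boundaries : ∀ {B p q z}, ¬ Even p → z ∈ toFilteredComplex.cycles q (B - (p + 1)) →
    s B p q z ∈ toFilteredComplex.boundaries q (B - (p + 1))

namespace StabilityDatum

open FilteredComplex

variable (S : StabilityDatum)

/-- Acyclicity in degree `q` of the kernel of `s B p` on `X / L · (B - (p + 1))`. -/
def KernelAcyclic (B p q : ℕ) : Prop :=
  ∀ z ∈ S.cycles q (B - (p + 1)), S.s B p q z ∈ S.L q (B - p) →
    ∃ y, z - S.d q y ∈ S.L q (B - (p + 1)) ∧ S.s B p (q + 1) y ∈ S.L (q + 1) (B - p)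

variable {S} {B p q : ℕ}

theorem exists_cycle_d_sub_s_mem_L (hB : p + 2 ≤ B)
    (hV : ∀ r, q = r + 1 → S.KernelAcyclic B (p + 2) r) {x : S.X (q + 1)}
    (hx : S.s B (p + 1) (q + 1) x ∈ S.cycles (q + 1) (B - (p + 1))) :
    ∃ v ∈ S.cycles q (B - (p + 3)), S.d q x - S.s B (p + 2) q v ∈ S.L q (B - (p + 2)) := by
  rw [mem_cycles_succ, S.d_s] at hx
  obtain ⟨v, hv⟩ := S.exists_sub_s_mem_L hB hx
  cases q with
  | zero => exact ⟨v, trivial, hv⟩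
  | succ q =>
    have hdv : S.s B (p + 2) q (S.d q v) ∈ S.L q (B - (p + 2)) := by
      have := neg_mem (S.d_mem_L hv)
      rwa [map_sub, S.d_d, S.d_s, zero_sub, neg_neg] at this
    obtain ⟨y, hy, hsy⟩ := hV q rfl _ (d_mem_cycles v) hdv
    refine ⟨v - y, ?_, ?_⟩
    · rwa [mem_cycles_succ, map_sub]
    · rw [map_sub, sub_sub_eq_add_sub, add_sub_right_comm]
      exact add_mem hv hsy

theorem mem_boundaries_of_d_sub_s_mem_L (hp : Even p) {x : S.X (q + 1)} {v : S.X q}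
    (hv : v ∈ S.cycles q (B - (p + 1))) (hxv : S.d q x - S.s B p q v ∈ S.L q (B - p)) :
    v ∈ S.boundaries q (B - p) := by
  have hsv : S.s B p q v - v ∈ S.boundaries q (B - p) :=
    boundaries_mono (by lia) (S.s_sub_mem_boundaries hp hv)
  have hsum := sub_mem (sub_mem (d_mem_boundaries x) (L_le_boundaries hxv)) hsv
  rwa [sub_sub_cancel, sub_sub_cancel] at hsum

theorem exists_cycle_s_sub_s_mem_L
    (hI : ∀ B' < B, ∀ r, 2 * r ≤ B' → S.StabilizationInjective B' r)
    (hV : ∀ r, q = r + 2 → S.KernelAcyclic B (p + 2) r) (hp : Even p) (hB : 2 * q + p ≤ B)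
    (x : S.X q) (hx : S.s B (p + 1) q x ∈ S.cycles q (B - (p + 1))) :
    ∃ x' ∈ S.cycles q (B - (p + 2)),
      S.s B (p + 1) q x - S.s B (p + 1) q x' ∈ S.L q (B - (p + 1)) := by
  cases q with
  | zero => exact ⟨x, trivial, by rw [sub_self]; exact zero_mem _⟩
  | succ q =>
    obtain ⟨v, hv, hxv⟩ :=
      exists_cycle_d_sub_s_mem_L (by lia) (fun r hr => hV r (by rw [hr])) hx
    have hvb := mem_boundaries_of_d_sub_s_mem_L (hp.add even_two) hv hxv
    obtain ⟨w, hw⟩ := mem_boundaries.1 (hI (B - (p + 2)) (by lia) q (by lia) v hv hvb)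
    refine ⟨x - S.s B (p + 2) (q + 1) w, ?_, ?_⟩
    · have hsw : S.s B (p + 2) q (v - S.d q w) ∈ S.L q (B - (p + 2)) :=
        S.L_mono q (by lia) (S.s_mem_L hw)
      rw [map_sub] at hsw
      rw [mem_cycles_succ, map_sub, S.d_s, ← sub_add_sub_cancel]
      exact add_mem hxv hsw
    · rw [map_sub, sub_sub_cancel]
      exact S.s_s_mem_L (by lia) _ w

theorem kernelAcyclic (hI : ∀ B' < B, ∀ r, 2 * r ≤ B' → S.StabilizationInjective B' r)
    (hS : ∀ B' < B, ∀ r, 2 * r ≤ B' → S.StabilizationSurjective B' r) (q : ℕ) :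
    ∀ p, Even p → 2 * q + p + 2 ≤ B → S.KernelAcyclic B p q := by
  induction q using Nat.strong_induction_on with
  | _ q ih =>
    intro p hp hB z hz hsz
    have hp₂ : Even (p + 2) := hp.add even_two
    obtain ⟨x₀, hx₀⟩ := S.exists_sub_s_mem_L (by lia) hsz
    have hcyc : S.s B (p + 1) q x₀ ∈ S.cycles q (B - (p + 1)) := by
      have := sub_mem hz (L_le_cycles hx₀)
      rwa [sub_sub_cancel] at this
    obtain ⟨x, hx, hxx₀⟩ := exists_cycle_s_sub_s_mem_L hI
      (fun r hr => ih r (by lia) (p + 2) hp₂ (by lia)) hp (by lia) x₀ hcyc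
    obtain ⟨t, ht, hxt⟩ := hS (B - (p + 2)) (by lia) q (by lia) x hx
    have hst : S.s B (p + 2) q t - t ∈ S.boundaries q (B - (p + 2)) :=
      boundaries_mono (by lia) (S.s_sub_mem_boundaries hp₂ ht)
    obtain ⟨y, hy⟩ := mem_boundaries.1 (sub_mem hxt hst)
    refine ⟨S.s B (p + 1) (q + 1) y, ?_, S.s_s_mem_L (by lia) _ y⟩
    have hsy := S.L_mono q (by lia : B - (p + 2) ≤ B - (p + 1)) (S.s_mem_L hy)
    have hsum := add_mem (add_mem hx₀ hxx₀) (add_mem hsy (S.s_s_mem_L (by lia) q t))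
    simp only [map_sub] at hsum
    rw [S.d_s]
    convert hsum using 1
    abel

theorem stabilizationInjective_of_lt
    (hI : ∀ B' < B, ∀ r, 2 * r ≤ B' → S.StabilizationInjective B' r)
    (hS : ∀ B' < B, ∀ r, 2 * r ≤ B' → S.StabilizationSurjective B' r) (hB : 2 * q ≤ B) :
    S.StabilizationInjective B q := by
  intro x hx hb
  obtain rfl | hB₀ := Nat.eq_zero_or_pos B
  · exact hb
  obtain ⟨y, hy⟩ := mem_boundaries.1 hb
  obtain ⟨x₁, hx₁⟩ := S.exists_sub_s_mem_L (p := 0) hB₀ (by rwa [S.s_zero])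
  have hcyc : S.s B 1 q x₁ ∈ S.cycles q (B - 1) := by
    have := sub_mem (sub_mem hx (d_mem_cycles y)) (L_le_cycles hx₁)
    rwa [sub_sub_cancel] at this
  obtain ⟨x₂, hx₂, hx₁₂⟩ := exists_cycle_s_sub_s_mem_L hI
    (fun r hr => kernelAcyclic hI hS r 2 even_two (by lia)) Even.zero hB x₁ hcyc
  have hsx₂ : S.s B 1 q x₂ ∈ S.boundaries q (B - 1) :=
    boundaries_mono (by lia) (S.s_mem_boundaries Nat.not_even_one hx₂)
  have hsum := add_mem (add_mem (L_le_boundaries hx₁) (L_le_boundaries hx₁₂))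
    (add_mem hsx₂ (d_mem_boundaries y))
  convert hsum using 1
  abel

theorem stabilizationSurjective_of_lt
    (hI : ∀ B' < B, ∀ r, 2 * r ≤ B' → S.StabilizationInjective B' r)
    (hS : ∀ B' < B, ∀ r, 2 * r ≤ B' → S.StabilizationSurjective B' r) (hB : 2 * q ≤ B) :
    S.StabilizationSurjective B q := by
  intro y hy
  cases q with
  | zero => exact ⟨y, trivial, by rw [sub_self]; exact zero_mem _⟩
  | succ q =>
    obtain ⟨y', hc, hb⟩ := kernelAcyclic hI hS q 0 Even.zero (by lia) _ (d_mem_cycles y)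
      (by rw [S.s_zero]; exact hy)
    rw [S.s_zero] at hb
    refine ⟨y - y', ?_, ?_⟩
    · rwa [mem_cycles_succ, map_sub]
    · rw [sub_sub_cancel]; exact L_le_boundaries hb

theorem stabilization_injective_and_surjective (B : ℕ) :
    ∀ q, 2 * q ≤ B → S.StabilizationInjective B q ∧ S.StabilizationSurjective B q := by
  induction B using Nat.strong_induction_on with
  | _ B ih =>
    intro q hq
    have hI := fun B' h r hr => (ih B' h r hr).1
    have hS := fun B' h r hr => (ih B' h r hr).2
    exact ⟨stabilizationInjective_of_lt hI hS hq, stabilizationSurjective_of_lt hI hS hq⟩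

end StabilityDatum

namespace InfBraidGroup

section Stability
variable (F : Type*) [CommRing F]

theorem boundary_mem_chainRelations {q b : ℕ} {x : BarChain F InfBraidGroup (q + 1)}
    (hx : x ∈ chainRelations F (q + 1) b) : BarChain.boundary F _ q x ∈ chainRelations F q b :=
  BraidAction.relations_le_comap F _ _ _ (fun _ _ x => BarChain.boundary_map F _ q x) hx

/-- The standard complex of the infinite braid group, filtered by the relations. -/
def complex : FilteredComplex where
  X q := BarChain F InfBraidGroup (q + 1)
  d q := (BarChain.boundary F _ (q + 1)).toAddMonoidHom
  d_d q x := BarChain.boundary_boundary F (q + 1) x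
  L q b := (chainRelations F (q + 1) b).toAddSubgroup
  L_mono _ _ _ h := BraidAction.relations_mono F _ h
  d_mem_L hx := boundary_mem_chainRelations F hx

theorem prism_mem_chainRelations {f g : InfBraidGroup → InfBraidGroup} {b : ℕ}
    (hf : ∀ i < b, ∀ x, f (x * σ i) = f x * σ i) (hg : ∀ i < b, ∀ x, g (x * σ i) = g x * σ i)
    (q : ℕ) {x : BarChain F InfBraidGroup q} (hx : x ∈ chainRelations F q b) :
    BarChain.prism F f g q x ∈ chainRelations F (q + 1) b :=
  BraidAction.relations_le_comap F _ _ _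
    (fun i hi x => BarChain.prism_map F f g (· * σ i) (· * σ i) (funext (hf i hi))
      (funext (hg i hi)) q x) hx

theorem map_sub_map_mem_boundaries {f g : InfBraidGroup → InfBraidGroup} {b : ℕ}
    (hf : ∀ i < b, ∀ x, f (x * σ i) = f x * σ i) (hg : ∀ i < b, ∀ x, g (x * σ i) = g x * σ i)
    (q : ℕ) {x : BarChain F InfBraidGroup (q + 1)} (hx : x ∈ (complex F).cycles q b) :
    BarChain.map F g (q + 1) x - BarChain.map F f (q + 1) x ∈ (complex F).boundaries q b := by
  rw [← BarChain.boundary_prism_add_prism_boundary]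
  refine add_mem (FilteredComplex.d_mem_boundaries (S := complex F) _)
    (FilteredComplex.L_le_boundaries ?_)
  cases q with
  | zero => exact zero_mem _
  | succ q => exact prism_mem_chainRelations F hf hg _ hx

theorem boundary_altSum (q B p : ℕ) (x : BarChain F InfBraidGroup (q + 1)) :
    BarChain.boundary F _ q ((braidAction.tuple (q + 1)).altSum F B p x)
      = (braidAction.tuple q).altSum F B p (BarChain.boundary F _ q x) :=
  BraidAction.altSum_map F _ _ (fun _ x => BarChain.boundary_map F _ q x) B p x

theorem actL_sub_mem_boundaries {b i : ℕ} (h : ∀ j < b, Far j i) (q : ℕ)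
    {x : BarChain F InfBraidGroup (q + 1)} (hx : x ∈ (complex F).cycles q b) :
    (braidAction.tuple (q + 1)).actL F i x - x ∈ (complex F).boundaries q b := by
  have := map_sub_map_mem_boundaries F (f := id) (g := (· * σ i)) (fun _ _ _ => rfl)
    (fun j hj x => by rw [mul_assoc, σ_mul_σ (h j hj), mul_assoc]) q hx
  rwa [BarChain.map_id] at this

theorem altSum_mem_cycles {B p b : ℕ} (h : b ≤ B - p - 1) (q : ℕ)
    {x : BarChain F InfBraidGroup (q + 1)} (hx : x ∈ (complex F).cycles q b) :
    (braidAction.tuple (q + 1)).altSum F B p x ∈ (complex F).cycles q b := by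
  cases q with
  | zero => trivial
  | succ q =>
    change BarChain.boundary F _ (q + 1) _ ∈ chainRelations F (q + 1) b
    rw [boundary_altSum]
    exact BraidAction.relations_le_comap F _ _ _
      (fun i hi x => BraidAction.altSum_actL F _ (by lia) x) hx

theorem altSum_mem_boundaries {B p b : ℕ} (h : b ≤ B - p - 1) (q : ℕ)
    {x : BarChain F InfBraidGroup (q + 1)} (hx : x ∈ (complex F).cycles q b) :
    (Even p → (braidAction.tuple (q + 1)).altSum F B p x - x ∈ (complex F).boundaries q b) ∧
      (¬ Even p → (braidAction.tuple (q + 1)).altSum F B p x ∈ (complex F).boundaries q b) := by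
  induction p with
  | zero =>
    refine ⟨fun _ => ?_, fun h => absurd Even.zero h⟩
    rw [BraidAction.altSum_zero, sub_self]
    exact zero_mem _
  | succ p ih =>
    let H : AddSubgroup (BarChain F InfBraidGroup (q + 1)) := (complex F).boundaries q b
    obtain ⟨heven, hodd⟩ := ih (by lia)
    have hact : _ - _ ∈ H := actL_sub_mem_boundaries F (b := b) (i := B - 1 - p)
      (fun j hj => by unfold Far; lia) q (altSum_mem_cycles F (B := B) (p := p) (by lia) q hx)
    rw [BraidAction.altSum_succ]
    constructor
    · intro hp
      have hsum := neg_mem (add_mem hact (hodd (Nat.even_add_one.1 hp)))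
      rwa [sub_add_cancel, ← sub_sub_cancel_left x] at hsum
    · intro hp
      have hsum := neg_mem (add_mem hact (heven (not_not.1 (mt Nat.even_add_one.2 hp))))
      rwa [sub_add_sub_cancel, neg_sub] at hsum

/-- The stability datum of the braid groups. -/
def stabilityDatum : StabilityDatum where
  toFilteredComplex := complex F
  s B p q := ((braidAction.tuple (q + 1)).altSum F B p).toAddMonoidHom
  d_s B p q x := boundary_altSum F (q + 1) B p x
  s_zero _ _ _ := rfl
  s_mem_L hx := BraidAction.altSum_mem_relations F _ hx
  s_s_mem_L h _ x := BraidAction.altSum_altSum_mem_relations F _ h x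
  exists_sub_s_mem_L h hs := exists_sub_altSum_mem_chainRelations F _ h hs
  s_sub_mem_boundaries hp hz := (altSum_mem_boundaries F le_rfl _ hz).1 hp
  s_mem_boundaries hp hz := (altSum_mem_boundaries F le_rfl _ hz).2 hp

end Stability

end InfBraidGroup

/-! ### Homogeneous chains and the bar complex of a group -/

section GroupBar
variable (F : Type) [CommRing F] (H : Type) [Group H] {K : Type} [Group K]

/-- The terms of the bar complex of a group algebra. -/
abbrev GroupBar (q : ℕ) : Type := (barC F (MonoidAlgebra F H) q : Type)

theorem groupAug_single (h : H) (c : F) : groupAug F H (MonoidAlgebra.single h c) = c := by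
  rw [groupAug, MonoidAlgebra.lift_single, MonoidHom.one_apply, smul_eq_mul, mul_one]

variable {F H} in
@[elab_as_elim]
theorem GroupBar.induction_single_tmul {q : ℕ}
    {P : MonoidAlgebra F H ⊗[F] GroupBar F H q → Prop} (zero : P 0)
    (add : ∀ x y, P x → P y → P (x + y))
    (single_tmul : ∀ h x, P (MonoidAlgebra.single h 1 ⊗ₜ[F] x))
    (x : MonoidAlgebra F H ⊗[F] GroupBar F H q) : P x := by
  induction x using TensorProduct.induction_on with
  | zero => exact zero
  | add x y hx hy => exact add x y hx hy
  | tmul a x =>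
    induction a using MonoidAlgebra.induction_linear with
    | zero => rw [TensorProduct.zero_tmul]; exact zero
    | add f g hf hg => rw [TensorProduct.add_tmul]; exact add _ _ hf hg
    | single h c =>
      rw [← mul_one c, ← smul_eq_mul, ← MonoidAlgebra.smul_single, TensorProduct.smul_tmul]
      exact single_tmul h _

/-- The bar generator `[h₀h₁⁻¹ | ⋯ | hₚ₋₁hₚ⁻¹]` of a homogeneous tuple `(h₀, …, hₚ)`. -/
def BarTuple.toBar : ∀ q, BarTuple H (q + 1) → GroupBar F H q
  | 0, _ => (1 : F)
  | q + 1, w => (MonoidAlgebra.single (w.1 * w.2.1⁻¹) 1 ⊗ₜ[F] toBar q w.2 :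
      MonoidAlgebra F H ⊗[F] GroupBar F H q)

/-- The last entry of a nonempty tuple. -/
def BarTuple.last : ∀ q, BarTuple H (q + 1) → H
  | 0, w => w.1
  | q + 1, w => last q w.2

theorem BarTuple.toBar_map_mul_right (q : ℕ) (w : BarTuple H (q + 1)) (h : H) :
    toBar F H q (map (· * h) (q + 1) w) = toBar F H q w := by
  induction q with
  | zero => rfl
  | succ q ih =>
    change (MonoidAlgebra.single (w.1 * h * (w.2.1 * h)⁻¹) 1 : MonoidAlgebra F H) ⊗ₜ[F]
      toBar F H q (map (· * h) (q + 1) w.2)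
        = MonoidAlgebra.single (w.1 * w.2.1⁻¹) 1 ⊗ₜ[F] toBar F H q w.2
    rw [ih, mul_inv_rev, mul_assoc, mul_inv_cancel_left]

namespace BarChain

/-- The linear extension of `BarTuple.toBar`. -/
def toBar (q : ℕ) : BarChain F H (q + 1) →ₗ[F] GroupBar F H q :=
  Finsupp.linearCombination F (BarTuple.toBar F H q)

/-- `toBar` in positive degrees, with its codomain presented as a tensor product. -/
def toBarT (q : ℕ) : BarChain F H (q + 2) →ₗ[F] MonoidAlgebra F H ⊗[F] GroupBar F H q :=
  toBar F H (q + 1)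

theorem toBar_single (q : ℕ) (w : BarTuple H (q + 1)) (c : F) :
    toBar F H q (Finsupp.single w c) = c • BarTuple.toBar F H q w :=
  Finsupp.linearCombination_single _ _ _

theorem toBar_map_mul_right (q : ℕ) (x : BarChain F H (q + 1)) (h : H) :
    toBar F H q (map F (· * h) (q + 1) x) = toBar F H q x := by
  induction x using Finsupp.induction_linear with
  | zero => simp only [map_zero]
  | add x y hx hy => simp only [map_add, hx, hy]
  | single w c => rw [map_single, toBar_single, toBar_single, BarTuple.toBar_map_mul_right]

theorem toBar_zero_cons (s : H) (y : BarChain F H 0) :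
    toBar F H 0 (cons F s y) = (y PUnit.unit : F) := by
  induction y using Finsupp.induction_linear with
  | zero => simp only [map_zero]; rfl
  | add x y hx hy => simp only [map_add, hx, hy]; rfl
  | single w c =>
    rw [cons_single, toBar_single]
    exact (mul_one c).trans Finsupp.single_eq_same.symm

theorem toBarT_single (q : ℕ) (w : BarTuple H (q + 2)) (c : F) :
    toBarT F H q (Finsupp.single w c)
      = MonoidAlgebra.single (w.1 * w.2.1⁻¹) 1 ⊗ₜ[F] toBar F H q (Finsupp.single w.2 c) := by
  rw [toBar_single, TensorProduct.tmul_smul]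
  exact toBar_single F H (q + 1) w c

theorem toBarT_cons_cons (q : ℕ) (s t : H) (y : BarChain F H q) :
    toBarT F H q (cons F s (cons F t y))
      = MonoidAlgebra.single (s * t⁻¹) 1 ⊗ₜ[F] toBar F H q (cons F t y) := by
  induction y using Finsupp.induction_linear with
  | zero => simp only [map_zero, TensorProduct.tmul_zero]
  | add x y hx hy => simp only [map_add, hx, hy, TensorProduct.tmul_add]
  | single w c => simp only [cons_single]; exact toBarT_single F H q _ c

theorem barActT_toBarT (q : ℕ) (s t : H) (y : BarChain F H (q + 1)) :
    barActT F (MonoidAlgebra F H) (groupAug F H) q (MonoidAlgebra.single (s * t⁻¹) 1)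
      (toBarT F H q (cons F t y)) = toBarT F H q (cons F s y) := by
  induction y using induction_cons with
  | zero => simp only [map_zero]
  | add x y hx hy => simp only [map_add, hx, hy]
  | cons u y =>
    rw [toBarT_cons_cons, toBarT_cons_cons, barActT_tmul, MonoidAlgebra.single_mul_single,
      mul_one, mul_assoc, inv_mul_cancel_left]

theorem barB_toBarT (q : ℕ) (s : H) (y : BarChain F H (q + 1)) :
    barB F (MonoidAlgebra F H) (groupAug F H) q (toBarT F H q (cons F s y))
      = -toBar F H q (cons F s (boundary F H q y)) := by
  induction q generalizing s with
  | zero =>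
    induction y using induction_cons with
    | zero => simp only [map_zero, neg_zero]
    | add x y hx hy => simp only [map_add, hx, hy, neg_add]
    | cons t y =>
      rw [toBarT_cons_cons, boundary_zero_cons, barB_zero_apply, groupAug_single, toBar_zero_cons,
        toBar_zero_cons]
      exact congrArg Neg.neg (one_mul (y PUnit.unit : F))
  | succ q ih =>
    induction y using induction_cons with
    | zero => simp only [map_zero, neg_zero]
    | add x y hx hy => simp only [map_add, hx, hy, neg_add]
    | cons t y =>
      rw [toBarT_cons_cons, boundary_succ_cons]
      refine (barB_succ_apply F (MonoidAlgebra F H) (groupAug F H) q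
        (MonoidAlgebra.single (s * t⁻¹) 1) (toBarT F H q (cons F t y))).trans ?_
      change _ = -toBarT F H q (cons F s (y - cons F t (boundary F H q y)))
      rw [barActT_toBarT, ih, map_sub, map_sub, toBarT_cons_cons, TensorProduct.tmul_neg]
      abel

theorem bard_toBarT (q : ℕ) (x : BarChain F H (q + 2)) :
    bard F (MonoidAlgebra F H) (groupAug F H) q (toBarT F H q x)
      = toBar F H q (boundary F H (q + 1) x) := by
  induction x using induction_cons with
  | zero => simp only [map_zero]
  | add x y hx hy => simp only [map_add, hx, hy]
  | cons s y =>
    rw [boundary_succ_cons, map_sub, bard, LinearMap.add_apply, barB_toBarT, ← sub_eq_add_neg]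
    congr 1
    induction y using induction_cons with
    | zero => simp only [map_zero]
    | add x y hx hy => simp only [map_add, hx, hy]
    | cons t y =>
      rw [toBarT_cons_cons, TensorProduct.lift.tmul, LinearMap.comp_apply,
        AlgHom.toLinearMap_apply, groupAug_single, LinearMap.lsmul_apply, one_smul]

/-- Prepending `h` times the first vertex. -/
def prependMul (q : ℕ) (h : H) : BarChain F H (q + 1) →ₗ[F] BarChain F H (q + 2) :=
  Finsupp.lmapDomain F F (fun w : BarTuple H (q + 1) => BarTuple.cons (h * w.1) w)

theorem prependMul_single (q : ℕ) (h : H) (w : BarTuple H (q + 1)) (c : F) :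
    prependMul F H q h (Finsupp.single w c) = Finsupp.single (BarTuple.cons (h * w.1) w) c :=
  Finsupp.mapDomain_single

/-- The section of `toBar` sending bar generators to homogeneous tuples with last entry `1`. -/
def ofBar : ∀ q, GroupBar F H q →ₗ[F] BarChain F H (q + 1)
  | 0 => (Finsupp.lsingle (BarTuple.cons (1 : H) PUnit.unit) : F →ₗ[F] BarChain F H 1)
  | q + 1 => (TensorProduct.lift
      ((Finsupp.linearCombination F (fun h => prependMul F H q h ∘ₗ ofBar q)) ∘ₗ
        (MonoidAlgebra.coeffLinearEquiv F).toLinearMap) :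
      MonoidAlgebra F H ⊗[F] GroupBar F H q →ₗ[F] BarChain F H (q + 2))

/-- `ofBar` in positive degrees, with its domain presented as a tensor product. -/
def ofBarT (q : ℕ) : MonoidAlgebra F H ⊗[F] GroupBar F H q →ₗ[F] BarChain F H (q + 2) :=
  ofBar F H (q + 1)

theorem ofBarT_single_tmul (q : ℕ) (h : H) (x : GroupBar F H q) :
    ofBarT F H q (MonoidAlgebra.single h 1 ⊗ₜ[F] x) = prependMul F H q h (ofBar F H q x) := by
  refine (TensorProduct.lift.tmul _ _).trans ?_
  change Finsupp.linearCombination F (fun h => prependMul F H q h ∘ₗ ofBar F H q)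
    (Finsupp.single h 1) x = _
  rw [Finsupp.linearCombination_single, one_smul, LinearMap.comp_apply]

theorem toBarT_prependMul (q : ℕ) (h : H) (x : BarChain F H (q + 1)) :
    toBarT F H q (prependMul F H q h x) = MonoidAlgebra.single h 1 ⊗ₜ[F] toBar F H q x := by
  induction x using Finsupp.induction_linear with
  | zero => simp only [map_zero, TensorProduct.tmul_zero]
  | add x y hx hy => simp only [map_add, hx, hy, TensorProduct.tmul_add]
  | single w c =>
    rw [prependMul_single, toBarT_single]
    simp only [BarTuple.cons, mul_inv_cancel_right]

theorem toBar_ofBar (q : ℕ) (x : GroupBar F H q) : toBar F H q (ofBar F H q x) = x := by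
  induction q with
  | zero => exact (toBar_single F H 0 _ _).trans (mul_one (M := F) x)
  | succ q ih =>
    change toBarT F H q (ofBarT F H q x) = x
    induction x using GroupBar.induction_single_tmul with
    | zero => simp only [map_zero]
    | add x y hx hy => rw [map_add, map_add, hx, hy]
    | single_tmul h x => rw [ofBarT_single_tmul, toBarT_prependMul, ih]

theorem ofBar_tupleToBar (q : ℕ) (w : BarTuple H (q + 1)) :
    ofBar F H q (BarTuple.toBar F H q w)
      = Finsupp.single (BarTuple.map (· * (BarTuple.last H q w)⁻¹) (q + 1) w) 1 := by
  induction q with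
  | zero => exact congrArg (Finsupp.single · 1) (Prod.ext (mul_inv_cancel _).symm rfl)
  | succ q ih =>
    refine (ofBarT_single_tmul F H q _ _).trans ?_
    rw [ih, prependMul_single]
    refine congrArg (Finsupp.single · 1) (Prod.ext ?_ rfl)
    change w.1 * w.2.1⁻¹ * (w.2.1 * (BarTuple.last H q w.2)⁻¹) = w.1 * (BarTuple.last H q w.2)⁻¹
    rw [mul_assoc, inv_mul_cancel_left]

theorem ofBar_barMap (f : H →* K) (φ : MonoidAlgebra F H →ₐ[F] MonoidAlgebra F K)
    (hφ : ∀ h, φ (MonoidAlgebra.single h 1) = MonoidAlgebra.single (f h) 1) (q : ℕ)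
    (x : GroupBar F H q) :
    ofBar F K q (barMap F φ q x) = map F f (q + 1) (ofBar F H q x) := by
  induction q with
  | zero =>
    have hsingle (u : BarTuple H 0) (v : BarTuple K 0) (c : F) :
        Finsupp.single (BarTuple.cons 1 v) c
          = map F f 1 (Finsupp.single (BarTuple.cons 1 u) c) := by
      rw [map_single]
      exact congrArg (Finsupp.single · c) (Prod.ext (map_one f).symm rfl)
    exact hsingle _ _ _
  | succ q ih =>
    change ofBarT F K q (TensorProduct.map φ.toLinearMap (barMap F φ q) x)
      = map F f (q + 2) (ofBarT F H q x)
    induction x using GroupBar.induction_single_tmul with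
    | zero => simp only [map_zero]
    | add x y hx hy => simp only [map_add, hx, hy]
    | single_tmul h x =>
      rw [TensorProduct.map_tmul, AlgHom.toLinearMap_apply, hφ, ofBarT_single_tmul,
        ofBarT_single_tmul, ih]
      induction ofBar F H q x using Finsupp.induction_linear with
      | zero => simp only [map_zero]
      | add x y hx hy => simp only [map_add, hx, hy]
      | single w c =>
        rw [prependMul_single, map_single, map_single, prependMul_single]
        exact congrArg (Finsupp.single · c) (Prod.ext (map_mul f _ _).symm rfl)

variable {F H} {G : Type*} [Group G]

/-- The span of the differences between a chain and its translates under right multiplication by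
the image of `ι`: the quotient computes the homology of this image. -/
def translationRelations (F : Type*) [CommRing F] {H : Type*} [Group H] (ι : H →* G) (q : ℕ) :
    Submodule F (BarChain F G q) :=
  Submodule.span F {v | ∃ h x, v = map F (· * ι h) q x - x}

theorem map_mul_sub_mem_translationRelations (ι : H →* G) (q : ℕ) (h : H) (x : BarChain F G q) :
    map F (· * ι h) q x - x ∈ translationRelations F ι q :=
  Submodule.subset_span ⟨h, x, rfl⟩

theorem translationRelations_le {ι : H →* G} {q : ℕ} {P : Submodule F (BarChain F G q)}
    (hP : ∀ h x, map F (· * ι h) q x - x ∈ P) : translationRelations F ι q ≤ P := by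
  rw [translationRelations, Submodule.span_le]
  rintro _ ⟨h, x, rfl⟩
  exact hP h x

theorem map_mem_translationRelations (ι : H →* G) (q : ℕ) {x : BarChain F H q}
    (hx : x ∈ translationRelations F (MonoidHom.id H) q) :
    map F ι q x ∈ translationRelations F ι q := by
  have hle : translationRelations F (MonoidHom.id H) q
      ≤ (translationRelations F ι q).comap (map F ι q) := by
    refine translationRelations_le fun h x => ?_
    have hmap : map F ι q (map F (· * h) q x) = map F (· * ι h) q (map F ι q x) := by
      rw [map_map, map_map]
      exact congrArg (map F · q x) (funext fun g => map_mul ι g h)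
    rw [Submodule.mem_comap, map_sub]
    exact hmap ▸ map_mul_sub_mem_translationRelations ι q h (map F ι q x)
  exact hle hx

theorem ofBar_toBar_sub_mem_translationRelations (q : ℕ) (x : BarChain F H (q + 1)) :
    ofBar F H q (toBar F H q x) - x ∈ translationRelations F (MonoidHom.id H) (q + 1) := by
  induction x using Finsupp.induction_linear with
  | zero => simp only [map_zero, sub_zero, zero_mem]
  | add x y hx hy =>
    rw [map_add, map_add, add_sub_add_comm]
    exact add_mem hx hy
  | single w c =>
    rw [toBar_single, map_smul, ofBar_tupleToBar, Finsupp.smul_single_one, ← map_single]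
    exact map_mul_sub_mem_translationRelations (MonoidHom.id H) _ _ _

theorem ofBar_bard_sub_mem_translationRelations (q : ℕ)
    (x : MonoidAlgebra F H ⊗[F] GroupBar F H q) :
    ofBar F H q (bard F (MonoidAlgebra F H) (groupAug F H) q x)
        - boundary F H (q + 1) (ofBarT F H q x)
      ∈ translationRelations F (MonoidHom.id H) (q + 1) := by
  have hbard := bard_toBarT F H q (ofBarT F H q x)
  rw [show toBarT F H q (ofBarT F H q x) = x from toBar_ofBar F H (q + 1) x] at hbard
  rw [hbard]
  exact ofBar_toBar_sub_mem_translationRelations q _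

theorem toBar_map_eq_zero {ι : H →* G} {ρ : G → H} (hρ : ∀ g h, ρ (g * ι h) = ρ g * h) (q : ℕ)
    {x : BarChain F G (q + 1)} (hx : x ∈ translationRelations F ι (q + 1)) :
    toBar F H q (map F ρ (q + 1) x) = 0 := by
  have hle : translationRelations F ι (q + 1)
      ≤ LinearMap.ker (toBar F H q ∘ₗ map F ρ (q + 1)) := by
    refine translationRelations_le fun h x => ?_
    have hmap : map F ρ (q + 1) (map F (· * ι h) (q + 1) x)
        = map F (· * h) (q + 1) (map F ρ (q + 1) x) := by
      rw [map_map, map_map]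
      exact congrArg (map F · (q + 1) x) (funext fun g => hρ g h)
    rw [LinearMap.mem_ker, map_sub, LinearMap.comp_apply, LinearMap.comp_apply, hmap,
      toBar_map_mul_right, sub_self]
  exact hle hx

end BarChain

theorem exists_equivariant_retraction {G H : Type*} [Group G] [Group H] {ι : H →* G}
    (hι : Function.Injective ι) :
    ∃ ρ : G → H, (∀ h, ρ (ι h) = h) ∧ ∀ g h, ρ (g * ι h) = ρ g * h := by
  obtain ⟨S, hS, hone⟩ := ι.range.exists_isComplement_left 1
  let e := MonoidHom.ofInjective hι
  refine ⟨fun g => e.symm (hS.equiv g).2, fun h => ?_, fun g h => ?_⟩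
  · rw [e.symm_apply_eq]
    exact hS.equiv_snd_eq_self_of_mem_of_one_mem hone ⟨h, rfl⟩
  · change e.symm _ = e.symm _ * h
    rw [e.symm_apply_eq, e.map_mul, e.apply_symm_apply]
    exact congrArg Prod.snd (hS.equiv_mul_right g (e h))

end GroupBar

/-! ### Maps induced on `Tor` -/

section TorMap
variable {F : Type} [CommRing F] {A₁ A₂ A₃ : Type} [Ring A₁] [Algebra F A₁] [Ring A₂] [Algebra F A₂]
  [Ring A₃] [Algebra F A₃] {ε₁ : A₁ →ₐ[F] F} {ε₂ : A₂ →ₐ[F] F} {ε₃ : A₃ →ₐ[F] F}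

variable (ε₁) in
/-- The homology class of a cycle of the bar complex. -/
def torClass (q : ℕ) : barCycles F A₁ ε₁ q →ₗ[F] barTor F A₁ ε₁ q := Submodule.mkQ _

theorem torClass_surjective (q : ℕ) : Function.Surjective (torClass ε₁ q) :=
  Submodule.mkQ_surjective _

theorem torClass_eq_torClass_iff {q : ℕ} {x y : barCycles F A₁ ε₁ q} :
    torClass ε₁ q x = torClass ε₁ q y ↔ (x - y : barC F A₁ q) ∈ (bard F A₁ ε₁ q).range :=
  Submodule.Quotient.eq _

theorem torMap_torClass (φ : A₁ →ₐ[F] A₂) (hφ : ε₂.comp φ = ε₁) (q : ℕ)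
    (x : barCycles F A₁ ε₁ q) :
    torMap F ε₁ ε₂ φ hφ q (torClass ε₁ q x)
      = torClass ε₂ q ⟨barMap F φ q x, barMap_cycles F ε₁ ε₂ φ hφ q x x.2⟩ := rfl

theorem torMap_injective_iff (φ : A₁ →ₐ[F] A₂) (hφ : ε₂.comp φ = ε₁) (q : ℕ) :
    Function.Injective (torMap F ε₁ ε₂ φ hφ q) ↔ ∀ x ∈ barCycles F A₁ ε₁ q,
      barMap F φ q x ∈ (bard F A₂ ε₂ q).range → x ∈ (bard F A₁ ε₁ q).range := by
  have hzero {A : Type} [Ring A] [Algebra F A] {ε : A →ₐ[F] F} (x : barCycles F A ε q) :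
      torClass ε q x = 0 ↔ (x : barC F A q) ∈ (bard F A ε q).range := by
    rw [← map_zero (torClass ε q), torClass_eq_torClass_iff, ZeroMemClass.coe_zero, sub_zero]
  rw [injective_iff_map_eq_zero, (torClass_surjective q).forall, Subtype.forall]
  simp only [torMap_torClass, hzero]

theorem torMap_surjective_iff (φ : A₁ →ₐ[F] A₂) (hφ : ε₂.comp φ = ε₁) (q : ℕ) :
    Function.Surjective (torMap F ε₁ ε₂ φ hφ q) ↔ ∀ y ∈ barCycles F A₂ ε₂ q,
      ∃ x ∈ barCycles F A₁ ε₁ q, barMap F φ q x - y ∈ (bard F A₂ ε₂ q).range := by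
  rw [Function.Surjective, (torClass_surjective q).forall, Subtype.forall]
  simp only [(torClass_surjective q).exists, Subtype.exists, torMap_torClass,
    torClass_eq_torClass_iff, exists_prop]

theorem barMap_id (q : ℕ) (x : barC F A₁ q) : barMap F (AlgHom.id F A₁) q x = x := by
  induction q with
  | zero => rfl
  | succ q ih =>
    have hid : barMap F (AlgHom.id F A₁) q = LinearMap.id := LinearMap.ext ih
    change TensorProduct.map LinearMap.id (barMap F (AlgHom.id F A₁) q) x = x
    rw [hid, TensorProduct.map_id]
    rfl

theorem barMap_barMap (φ : A₁ →ₐ[F] A₂) (ψ : A₂ →ₐ[F] A₃) (q : ℕ) (x : barC F A₁ q) :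
    barMap F ψ q (barMap F φ q x) = barMap F (ψ.comp φ) q x := by
  induction q with
  | zero => rfl
  | succ q ih =>
    have hcomp : barMap F (ψ.comp φ) q = barMap F ψ q ∘ₗ barMap F φ q :=
      LinearMap.ext fun x => (ih x).symm
    change TensorProduct.map _ _ (TensorProduct.map _ _ x) = TensorProduct.map _ _ x
    rw [hcomp, AlgHom.comp_toLinearMap, TensorProduct.map_comp]
    rfl

theorem torMap_id (hφ : ε₁.comp (AlgHom.id F A₁) = ε₁) (q : ℕ) (t : barTor F A₁ ε₁ q) :
    torMap F ε₁ ε₁ (AlgHom.id F A₁) hφ q t = t := by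
  obtain ⟨x, rfl⟩ := torClass_surjective q t
  exact congrArg (torClass ε₁ q) (Subtype.ext (barMap_id q x.1))

theorem torMap_torMap (φ : A₁ →ₐ[F] A₂) (hφ : ε₂.comp φ = ε₁) (ψ : A₂ →ₐ[F] A₃)
    (hψ : ε₃.comp ψ = ε₂) (q : ℕ) (t : barTor F A₁ ε₁ q) :
    torMap F ε₂ ε₃ ψ hψ q (torMap F ε₁ ε₂ φ hφ q t)
      = torMap F ε₁ ε₃ (ψ.comp φ) (by rw [← AlgHom.comp_assoc, hψ, hφ]) q t := by
  obtain ⟨x, rfl⟩ := torClass_surjective q t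
  exact congrArg (torClass ε₃ q) (Subtype.ext (barMap_barMap φ ψ q x.1))

end TorMap

/-! ### Homological stability of the braid groups -/

namespace BraidGroup

section Chains
variable (F : Type) [CommRing F] (n q : ℕ)

theorem translationRelations_toInf :
    BarChain.translationRelations F (toInf n) q = InfBraidGroup.chainRelations F q (n - 1) := by
  apply le_antisymm
  · refine BarChain.translationRelations_le fun g => ?_
    have hg : g ∈ Subgroup.closure (Set.range (PresentedGroup.of (rels := braidRelators n))) := by
      rw [PresentedGroup.closure_range_of]
      trivial
    have hmul (g h : InfBraidGroup) (x : BarChain F InfBraidGroup q) :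
        BarChain.map F (· * (g * h)) q x
          = BarChain.map F (· * h) q (BarChain.map F (· * g) q x) := by
      rw [BarChain.map_map]
      exact congrArg (BarChain.map F · q x) (funext fun s => (mul_assoc s g h).symm)
    have hone (x : BarChain F InfBraidGroup q) : BarChain.map F (· * 1) q x = x := by
      simp only [mul_one]
      exact BarChain.map_id F q x
    induction hg using Subgroup.closure_induction with
    | mem _ hσ =>
      obtain ⟨i, rfl⟩ := hσ
      intro x
      rw [show toInf n (PresentedGroup.of i) = InfBraidGroup.σ i from toInf_σ n i]
      exact BraidAction.actL_sub_mem_relations F _ i.2 x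
    | one => intro x; rw [map_one, hone, sub_self]; exact zero_mem _
    | mul g h _ _ hg hh =>
      intro x
      rw [map_mul, hmul, ← sub_add_sub_cancel]
      exact add_mem (hh _) (hg x)
    | inv g _ hg =>
      intro x
      have hinv := neg_mem (hg (BarChain.map F (· * toInf n g⁻¹) q x))
      rwa [← hmul, ← map_mul, inv_mul_cancel, map_one, hone, neg_sub] at hinv
  · refine BraidAction.relations_le F _ fun i hi x => ?_
    have := BarChain.map_mul_sub_mem_translationRelations (F := F) (toInf n) q (σ n ⟨i, hi⟩) x
    rwa [toInf_σ] at this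

/-- A retraction of the infinite braid group onto `BraidGroup n`, equivariant under right
multiplication. -/
def retract : InfBraidGroup → BraidGroup n :=
  (exists_equivariant_retraction (toInf_injective n)).choose

theorem retract_toInf (g : BraidGroup n) : retract n (toInf n g) = g :=
  (exists_equivariant_retraction (toInf_injective n)).choose_spec.1 g

theorem retract_mul_toInf (g : InfBraidGroup) (h : BraidGroup n) :
    retract n (g * toInf n h) = retract n g * h :=
  (exists_equivariant_retraction (toInf_injective n)).choose_spec.2 g h

/-- The comparison from chains of the infinite braid group to the bar complex of `BraidGroup n`. -/
def chainToBar : BarChain F InfBraidGroup (q + 1) →ₗ[F] GroupBar F (BraidGroup n) q :=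
  BarChain.toBar F (BraidGroup n) q ∘ₗ BarChain.map F (retract n) (q + 1)

/-- The comparison from the bar complex of `BraidGroup n` to chains of the infinite braid group. -/
def barToChain : GroupBar F (BraidGroup n) q →ₗ[F] BarChain F InfBraidGroup (q + 1) :=
  BarChain.map F (toInf n) (q + 1) ∘ₗ BarChain.ofBar F (BraidGroup n) q

variable {F n q}

theorem chainToBar_barToChain (x : GroupBar F (BraidGroup n) q) :
    chainToBar F n q (barToChain F n q x) = x := by
  have hid : retract n ∘ toInf n = id := funext (retract_toInf n)
  change BarChain.toBar F _ q (BarChain.map F _ (q + 1) (BarChain.map F _ (q + 1) _)) = x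
  rw [BarChain.map_map, hid, BarChain.map_id, BarChain.toBar_ofBar]

theorem barToChain_chainToBar_sub_mem (x : BarChain F InfBraidGroup (q + 1)) :
    barToChain F n q (chainToBar F n q x) - BarChain.map F (toInf n ∘ retract n) (q + 1) x
      ∈ InfBraidGroup.chainRelations F (q + 1) (n - 1) := by
  have hx := BarChain.map_mem_translationRelations (toInf n) _
    (BarChain.ofBar_toBar_sub_mem_translationRelations q (BarChain.map F (retract n) (q + 1) x))
  rwa [map_sub, BarChain.map_map, translationRelations_toInf] at hx

theorem bard_chainToBar (x : BarChain F InfBraidGroup (q + 2)) :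
    bard F _ (groupAug F (BraidGroup n)) q (chainToBar F n (q + 1) x)
      = chainToBar F n q (BarChain.boundary F _ (q + 1) x) := by
  refine (BarChain.bard_toBarT F (BraidGroup n) q (BarChain.map F (retract n) (q + 2) x)).trans ?_
  rw [BarChain.boundary_map]
  rfl

theorem barToChain_bard_sub_mem
    (x : MonoidAlgebra F (BraidGroup n) ⊗[F] GroupBar F (BraidGroup n) q) :
    barToChain F n q (bard F _ (groupAug F (BraidGroup n)) q x)
        - BarChain.boundary F _ (q + 1) (barToChain F n (q + 1) x)
      ∈ InfBraidGroup.chainRelations F (q + 1) (n - 1) := by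
  have hx := BarChain.map_mem_translationRelations (toInf n) _
    (BarChain.ofBar_bard_sub_mem_translationRelations q x)
  rwa [map_sub, ← BarChain.boundary_map, translationRelations_toInf] at hx

theorem chainToBar_eq_zero {x : BarChain F InfBraidGroup (q + 1)}
    (hx : x ∈ InfBraidGroup.chainRelations F (q + 1) (n - 1)) : chainToBar F n q x = 0 :=
  BarChain.toBar_map_eq_zero (retract_mul_toInf n) q (translationRelations_toInf F n (q + 1) ▸ hx)

theorem barToChain_mem_cycles {x : GroupBar F (BraidGroup n) q}
    (hx : x ∈ barCycles F _ (groupAug F (BraidGroup n)) q) :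
    barToChain F n q x ∈ (InfBraidGroup.complex F).cycles q (n - 1) := by
  cases q with
  | zero => trivial
  | succ q =>
    have hd := barToChain_bard_sub_mem x
    rw [show bard F _ (groupAug F (BraidGroup n)) q x = 0 from hx, map_zero, zero_sub] at hd
    exact (neg_mem_iff (H := InfBraidGroup.chainRelations F (q + 1) (n - 1))).1 hd

theorem chainToBar_mem_barCycles {x : BarChain F InfBraidGroup (q + 1)}
    (hx : x ∈ (InfBraidGroup.complex F).cycles q (n - 1)) :
    chainToBar F n q x ∈ barCycles F _ (groupAug F (BraidGroup n)) q := by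
  cases q with
  | zero => trivial
  | succ q => exact (bard_chainToBar x).trans (chainToBar_eq_zero hx)

theorem barToChain_mem_boundaries {x : GroupBar F (BraidGroup n) q}
    (hx : x ∈ (bard F _ (groupAug F (BraidGroup n)) q).range) :
    barToChain F n q x ∈ (InfBraidGroup.complex F).boundaries q (n - 1) := by
  obtain ⟨y, rfl⟩ := hx
  exact FilteredComplex.mem_boundaries.2 ⟨_, barToChain_bard_sub_mem y⟩

theorem chainToBar_mem_range {x : BarChain F InfBraidGroup (q + 1)}
    (hx : x ∈ (InfBraidGroup.complex F).boundaries q (n - 1)) :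
    chainToBar F n q x ∈ (bard F _ (groupAug F (BraidGroup n)) q).range := by
  obtain ⟨y, hy⟩ := FilteredComplex.mem_boundaries.1 hx
  have hzero := (map_sub (chainToBar F n q) x _).symm.trans (chainToBar_eq_zero hy)
  exact ⟨chainToBar F n (q + 1) y, (bard_chainToBar y).trans (sub_eq_zero.1 hzero).symm⟩

theorem barToChain_chainToBar_sub_mem_boundaries {x : BarChain F InfBraidGroup (q + 1)}
    (hx : x ∈ (InfBraidGroup.complex F).cycles q (n - 1)) :
    barToChain F n q (chainToBar F n q x) - x
      ∈ (InfBraidGroup.complex F).boundaries q (n - 1) := by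
  let B : AddSubgroup (BarChain F InfBraidGroup (q + 1)) :=
    (InfBraidGroup.complex F).boundaries q (n - 1)
  have hρ : BarChain.map F (toInf n ∘ retract n) (q + 1) x - BarChain.map F id (q + 1) x ∈ B := by
    refine InfBraidGroup.map_sub_map_mem_boundaries F (fun _ _ _ => rfl) (fun i hi g => ?_) q hx
    rw [← toInf_σ n ⟨i, hi⟩]
    exact (congrArg (toInf n) (retract_mul_toInf n g _)).trans (map_mul _ _ _)
  have hmem : _ - _ ∈ B := FilteredComplex.L_le_boundaries (barToChain_chainToBar_sub_mem x)
  have hadd := add_mem hmem hρ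
  rwa [BarChain.map_id, sub_add_sub_cancel] at hadd

end Chains

section Algebra
variable (F : Type) [CommRing F] (n : ℕ)

/-- The inclusion of group algebras induced by `stabilize`. -/
def algStabilize : MonoidAlgebra F (BraidGroup (n - 1)) →ₐ[F] MonoidAlgebra F (BraidGroup n) :=
  MonoidAlgebra.lift F _ _ ((MonoidAlgebra.of F (BraidGroup n)).comp (stabilize n))

theorem algStabilize_single (g : BraidGroup (n - 1)) :
    algStabilize F n (MonoidAlgebra.single g 1) = MonoidAlgebra.single (stabilize n g) 1 := by
  rw [algStabilize, MonoidAlgebra.lift_single, one_smul]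
  rfl

theorem groupAug_comp_algStabilize :
    (groupAug F (BraidGroup n)).comp (algStabilize F n) = groupAug F (BraidGroup (n - 1)) := by
  refine MonoidAlgebra.algHom_ext (fun g => ?_) (Subsingleton.elim _ _)
  rw [AlgHom.comp_apply, algStabilize_single, groupAug_single, groupAug_single]

variable {F n}

theorem barToChain_barMap {q : ℕ} (x : GroupBar F (BraidGroup (n - 1)) q) :
    barToChain F n q (barMap F (algStabilize F n) q x) = barToChain F (n - 1) q x := by
  have hcomp : toInf n ∘ stabilize n = toInf (n - 1) := funext (toInf_stabilize n)
  change BarChain.map F _ (q + 1) (BarChain.ofBar F _ q (barMap F (algStabilize F n) q x)) = _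
  rw [BarChain.ofBar_barMap F _ (stabilize n) _ (algStabilize_single F n), BarChain.map_map, hcomp]
  rfl

theorem torMap_algStabilize_bijective {q : ℕ} (h : 2 * q + 1 ≤ n) :
    Function.Bijective (torMap F _ _ _ (groupAug_comp_algStabilize F n) q) := by
  obtain ⟨hinj, hsurj⟩ := StabilityDatum.stabilization_injective_and_surjective
    (S := InfBraidGroup.stabilityDatum F) (n - 1) q (by lia)
  constructor
  · rw [torMap_injective_iff]
    intro x hx hb
    have hxb := barToChain_mem_boundaries hb
    rw [barToChain_barMap] at hxb
    have := chainToBar_mem_range (hinj _ (barToChain_mem_cycles hx) hxb)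
    rwa [chainToBar_barToChain] at this
  · rw [torMap_surjective_iff]
    intro y hy
    obtain ⟨(x : BarChain F InfBraidGroup (q + 1)), hx, hyx⟩ := hsurj _ (barToChain_mem_cycles hy)
    refine ⟨chainToBar F (n - 1) q x, chainToBar_mem_barCycles hx, ?_⟩
    let B : AddSubgroup (BarChain F InfBraidGroup (q + 1)) :=
      (InfBraidGroup.complex F).boundaries q (n - 1)
    have hxx : _ - _ ∈ B := FilteredComplex.boundaries_mono (Nat.sub_le _ _)
      (barToChain_chainToBar_sub_mem_boundaries hx)
    have hyx' : barToChain F n q y - x ∈ B := hyx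
    have hdiff := sub_mem hxx hyx'
    rw [sub_sub_sub_cancel_right, ← barToChain_barMap, ← map_sub] at hdiff
    have hrange := chainToBar_mem_range hdiff
    rwa [chainToBar_barToChain] at hrange

end Algebra

end BraidGroup

/-! ### Intertwined homomorphisms agree on `Tor` -/

section BarStep
variable {F : Type*} [CommRing F] {R : Type*} [Ring R] [Algebra F R] {T : Type*} [Ring T]
  [Algebra F T] {N : Type*} [AddCommGroup N] [Module F N] {M : Type*} [AddCommGroup M] [Module F M]

variable (F R N) in
/-- Multiplication of the first two tensor factors. -/
def mulLeftTensor : R ⊗[F] (R ⊗[F] N) →ₗ[F] R ⊗[F] N :=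
  (LinearMap.mul' F R).rTensor N ∘ₗ (TensorProduct.assoc F R R N).symm.toLinearMap

theorem mulLeftTensor_tmul_tmul (a b : R) (x : N) :
    mulLeftTensor F R N (a ⊗ₜ (b ⊗ₜ x)) = (a * b) ⊗ₜ x := rfl

/-- The recursion satisfied by `barB`, for an arbitrary linear map in place of the previous stage
(see `barB_succ`). -/
def barStep (D : R ⊗[F] N →ₗ[F] N) : R ⊗[F] (R ⊗[F] N) →ₗ[F] R ⊗[F] N :=
  -mulLeftTensor F R N - D.lTensor R

theorem barStep_tmul (D : R ⊗[F] N →ₗ[F] N) (a : R) (x : R ⊗[F] N) :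
    barStep D (a ⊗ₜ x) = -mulLeftTensor F R N (a ⊗ₜ x) - a ⊗ₜ D x := rfl

/-- The recursion for the homotopy `barHomotopy` between two homomorphisms `θ₁` and `θ₂`
intertwined by `f`, for arbitrary linear maps in place of the previous stages of `barMap F θ₁` and
of the homotopy. -/
def homotopyStep (θ₁ θ₂ : R →ₐ[F] T) (f : T) (t : N →ₗ[F] M) (h : N →ₗ[F] T ⊗[F] M) :
    R ⊗[F] N →ₗ[F] T ⊗[F] (T ⊗[F] M) :=
  TensorProduct.mk F T _ f ∘ₗ TensorProduct.map θ₁.toLinearMap t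
    - TensorProduct.map θ₂.toLinearMap h

variable {θ₁ θ₂ : R →ₐ[F] T} {f : T} {ε₁ : R →ₐ[F] F} {ε₂ : T →ₐ[F] F}

theorem homotopyStep_tmul (t : N →ₗ[F] M) (h : N →ₗ[F] T ⊗[F] M) (a : R) (x : N) :
    homotopyStep θ₁ θ₂ f t h (a ⊗ₜ x) = f ⊗ₜ (θ₁ a ⊗ₜ t x) - θ₂ a ⊗ₜ h x := rfl

theorem homotopyStep_mulLeftTensor (t : N →ₗ[F] M) (h : N →ₗ[F] T ⊗[F] M) (a : R)
    (x : R ⊗[F] N) :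
    homotopyStep θ₁ θ₂ f t h (mulLeftTensor F R N (a ⊗ₜ x))
      = f ⊗ₜ mulLeftTensor F T M (θ₁ a ⊗ₜ TensorProduct.map θ₁.toLinearMap t x)
        + mulLeftTensor F T _ (θ₂ a ⊗ₜ homotopyStep θ₁ θ₂ f t h x)
        - (θ₂ a * f) ⊗ₜ TensorProduct.map θ₁.toLinearMap t x := by
  induction x with
  | zero => simp only [map_zero, TensorProduct.tmul_zero, add_zero, sub_zero]
  | add x y hx hy => simp only [map_add, TensorProduct.tmul_add, hx, hy]; abel
  | tmul b x =>
    simp only [mulLeftTensor_tmul_tmul, homotopyStep_tmul, TensorProduct.map_tmul,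
      TensorProduct.tmul_sub, map_sub, AlgHom.toLinearMap_apply, map_mul]
    abel

theorem lift_lsmul_homotopyStep (hθ₂ : ε₂.comp θ₂ = ε₁) (hfε : ε₂ f = 1)
    (t : N →ₗ[F] M) (h : N →ₗ[F] T ⊗[F] M) :
    TensorProduct.lift (LinearMap.lsmul F _ ∘ₗ ε₂.toLinearMap) ∘ₗ homotopyStep θ₁ θ₂ f t h
        + h ∘ₗ TensorProduct.lift (LinearMap.lsmul F N ∘ₗ ε₁.toLinearMap)
      = TensorProduct.map θ₁.toLinearMap t := by
  refine TensorProduct.ext' fun a x => ?_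
  have hε₂ : ε₂ (θ₂ a) = ε₁ a := DFunLike.congr_fun hθ₂ a
  simp only [LinearMap.add_apply, LinearMap.comp_apply, homotopyStep_tmul, map_sub,
    TensorProduct.lift.tmul, AlgHom.toLinearMap_apply, LinearMap.lsmul_apply, hε₂, hfε, one_smul,
    map_smul, TensorProduct.map_tmul, sub_add_cancel]

theorem lift_lsmul_add_barStep_homotopyStep (hθ₂ : ε₂.comp θ₂ = ε₁) (hfε : ε₂ f = 1)
    {t₁ t₂ : N →ₗ[F] M} {h : N →ₗ[F] T ⊗[F] M} {D : R ⊗[F] N →ₗ[F] N} {E : T ⊗[F] M →ₗ[F] M}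
    (hh : barStep E ∘ₗ homotopyStep θ₁ θ₂ f t₁ h + h ∘ₗ D
      = -TensorProduct.map θ₂.toLinearMap t₂) {x : R ⊗[F] N}
    (hx : (TensorProduct.lift (LinearMap.lsmul F N ∘ₗ ε₁.toLinearMap) + D) x = 0) :
    (TensorProduct.lift (LinearMap.lsmul F (T ⊗[F] M) ∘ₗ ε₂.toLinearMap) + barStep E)
        (homotopyStep θ₁ θ₂ f t₁ h x)
      = TensorProduct.map θ₁.toLinearMap t₁ x - TensorProduct.map θ₂.toLinearMap t₂ x := by
  have hhx := LinearMap.congr_fun hh x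
  have hhx₀ := congrArg h hx
  rw [LinearMap.neg_apply, LinearMap.add_apply, LinearMap.comp_apply, LinearMap.comp_apply] at hhx
  rw [LinearMap.add_apply, map_add, map_zero] at hhx₀
  rw [sub_eq_add_neg, ← hhx, ← lift_lsmul_homotopyStep hθ₂ hfε t₁ h, LinearMap.add_apply,
    LinearMap.add_apply, LinearMap.comp_apply, LinearMap.comp_apply, add_add_add_comm, hhx₀,
    add_zero]

theorem barStep_homotopyStep_zero (hf : ∀ a, θ₂ a * f = f * θ₁ a) (hθ₁ : ε₂.comp θ₁ = ε₁)
    (hfε : ε₂ f = 1) :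
    barStep (-TensorProduct.lift (LinearMap.lsmul F N ∘ₗ ε₂.toLinearMap))
          ∘ₗ homotopyStep θ₁ θ₂ f LinearMap.id (TensorProduct.mk F T N f)
        + TensorProduct.mk F T N f
          ∘ₗ (-TensorProduct.lift (LinearMap.lsmul F N ∘ₗ ε₁.toLinearMap))
      = -TensorProduct.map θ₂.toLinearMap LinearMap.id := by
  refine TensorProduct.ext' fun a x => ?_
  have hε₁ : ε₂ (θ₁ a) = ε₁ a := DFunLike.congr_fun hθ₁ a
  simp only [LinearMap.add_apply, LinearMap.comp_apply, LinearMap.neg_apply, homotopyStep_tmul,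
    map_sub, barStep_tmul, mulLeftTensor_tmul_tmul, TensorProduct.mk_apply, hf, hε₁, hfε,
    TensorProduct.lift.tmul, AlgHom.toLinearMap_apply, LinearMap.lsmul_apply, one_smul,
    LinearMap.id_apply, TensorProduct.map_tmul, TensorProduct.tmul_neg]
  abel

theorem barStep_homotopyStep_succ (hf : ∀ a, θ₂ a * f = f * θ₁ a) {t₁ t₂ : N →ₗ[F] M}
    {h : N →ₗ[F] T ⊗[F] M} {D : R ⊗[F] N →ₗ[F] N} {E : T ⊗[F] M →ₗ[F] M}
    (ht₁ : E ∘ₗ TensorProduct.map θ₁.toLinearMap t₁ = t₁ ∘ₗ D)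
    (hh : barStep E ∘ₗ homotopyStep θ₁ θ₂ f t₁ h + h ∘ₗ D
      = -TensorProduct.map θ₂.toLinearMap t₂) :
    barStep (barStep E) ∘ₗ homotopyStep θ₁ θ₂ f (TensorProduct.map θ₁.toLinearMap t₁)
          (homotopyStep θ₁ θ₂ f t₁ h)
        + homotopyStep θ₁ θ₂ f t₁ h ∘ₗ barStep D
      = -TensorProduct.map θ₂.toLinearMap (TensorProduct.map θ₂.toLinearMap t₂) := by
  refine TensorProduct.ext' fun a x => ?_
  have ht₁x : E (TensorProduct.map θ₁.toLinearMap t₁ x) = t₁ (D x) := LinearMap.congr_fun ht₁ x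
  have hhx : barStep E (homotopyStep θ₁ θ₂ f t₁ h x) + h (D x)
      = -TensorProduct.map θ₂.toLinearMap t₂ x := LinearMap.congr_fun hh x
  rw [LinearMap.neg_apply, TensorProduct.map_tmul, ← TensorProduct.tmul_neg, ← hhx]
  simp only [LinearMap.add_apply, LinearMap.comp_apply, homotopyStep_tmul, barStep_tmul, map_sub,
    map_neg, mulLeftTensor_tmul_tmul, homotopyStep_mulLeftTensor, hf, ht₁x, TensorProduct.tmul_neg,
    TensorProduct.tmul_sub, TensorProduct.tmul_add, AlgHom.toLinearMap_apply]
  abel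

end BarStep

section BarHomotopy
variable {F : Type} [CommRing F] {R : Type} [Ring R] [Algebra F R] {T : Type} [Ring T] [Algebra F T]
  {ε₁ : R →ₐ[F] F} {ε₂ : T →ₐ[F] F} {θ₁ θ₂ : R →ₐ[F] T} {f : T}

theorem barB_succ (ε : R →ₐ[F] F) (q : ℕ) : barB F R ε (q + 1) = barStep (barB F R ε q) := by
  have hact (a : R) :
      barActT F R ε q a = mulLeftTensor F R (barC F R q) ∘ₗ TensorProduct.mk F R _ a :=
    TensorProduct.ext' fun _ _ => rfl
  refine TensorProduct.ext' fun a (x : R ⊗[F] barC F R q) => ?_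
  refine (barB_succ_apply F R ε q a x).trans ?_
  rw [hact]
  rfl

variable (θ₁ θ₂ f) in
/-- The chain homotopy between the maps of bar complexes induced by `θ₁` and `θ₂`, when
`θ₂ a * f = f * θ₁ a` for all `a`: up to sign,
`a₁ ⊗ ⋯ ⊗ a_q ↦ ∑ i, (-1)^i θ₂ a₁ ⊗ ⋯ ⊗ θ₂ a_i ⊗ f ⊗ θ₁ a_{i+1} ⊗ ⋯ ⊗ θ₁ a_q`. -/
def barHomotopy : ∀ q, (barC F R q : Type) →ₗ[F] T ⊗[F] (barC F T q : Type)
  | 0 => TensorProduct.mk F T F f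
  | q + 1 => homotopyStep θ₁ θ₂ f (barMap F θ₁ q) (barHomotopy q)

theorem barStep_barHomotopy (hf : ∀ a, θ₂ a * f = f * θ₁ a) (hθ₁ : ε₂.comp θ₁ = ε₁)
    (hfε : ε₂ f = 1) (q : ℕ) :
    barStep (barB F T ε₂ q) ∘ₗ homotopyStep θ₁ θ₂ f (barMap F θ₁ q) (barHomotopy θ₁ θ₂ f q)
        + barHomotopy θ₁ θ₂ f q ∘ₗ barB F R ε₁ q
      = -TensorProduct.map θ₂.toLinearMap (barMap F θ₂ q) := by
  induction q with
  | zero => exact barStep_homotopyStep_zero hf hθ₁ hfε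
  | succ q ih =>
    rw [barB_succ, barB_succ]
    exact barStep_homotopyStep_succ hf (barB_comm F ε₁ ε₂ θ₁ hθ₁ q) ih

theorem bard_homotopyStep_of_bard_eq_zero (hf : ∀ a, θ₂ a * f = f * θ₁ a)
    (hθ₁ : ε₂.comp θ₁ = ε₁) (hθ₂ : ε₂.comp θ₂ = ε₁) (hfε : ε₂ f = 1) {q : ℕ}
    {x : R ⊗[F] barC F R q} (hx : bard F R ε₁ q x = 0) :
    bard F T ε₂ (q + 1) (homotopyStep θ₁ θ₂ f (barMap F θ₁ q) (barHomotopy θ₁ θ₂ f q) x)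
      = barMap F θ₁ (q + 1) x - barMap F θ₂ (q + 1) x := by
  rw [bard, barB_succ]
  exact lift_lsmul_add_barStep_homotopyStep hθ₂ hfε (barStep_barHomotopy hf hθ₁ hfε q) hx

theorem torMap_eq_torMap (hf : ∀ a, θ₂ a * f = f * θ₁ a) (hθ₁ : ε₂.comp θ₁ = ε₁)
    (hθ₂ : ε₂.comp θ₂ = ε₁) (hfε : ε₂ f = 1) (q : ℕ) :
    torMap F ε₁ ε₂ θ₁ hθ₁ q = torMap F ε₁ ε₂ θ₂ hθ₂ q := by
  refine LinearMap.ext fun t => ?_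
  obtain ⟨x, rfl⟩ := torClass_surjective q t
  rw [torMap_torClass, torMap_torClass, torClass_eq_torClass_iff]
  cases q with
  | zero => exact (sub_self (barMap F θ₁ 0 x)).symm ▸ zero_mem _
  | succ q =>
    have hx : bard F R ε₁ q x.1 = 0 := x.2
    exact ⟨_, bard_homotopyStep_of_bard_eq_zero hf hθ₁ hθ₂ hfε hx⟩

theorem torMap_bijective_of_section {r : R →ₐ[F] T} {s : T →ₐ[F] R} {f : R}
    (hrs : r.comp s = AlgHom.id F T) (hf : ∀ a, a * f = f * s (r a)) (hr : ε₂.comp r = ε₁)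
    (hfε : ε₁ f = 1) (q : ℕ) : Function.Bijective (torMap F ε₁ ε₂ r hr q) := by
  have hs : ε₁.comp s = ε₂ := by rw [← hr, AlgHom.comp_assoc, hrs, AlgHom.comp_id]
  have hsr : ε₁.comp (s.comp r) = ε₁ := by rw [← AlgHom.comp_assoc, hs, hr]
  have htor := torMap_eq_torMap (θ₁ := s.comp r) (θ₂ := AlgHom.id F R) hf hsr
    (AlgHom.comp_id ε₁) hfε q
  refine Function.bijective_iff_has_inverse.2 ⟨torMap F ε₂ ε₁ s hs q, fun t => ?_, fun t => ?_⟩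
  · rw [torMap_torMap r hr s hs, htor, torMap_id]
  · simp only [torMap_torMap, hrs, torMap_id]

end BarHomotopy

/-! ### The idempotent cutting out the group algebra -/

section ProdOneSub
variable {F A ι : Type*} [CommRing F] [Ring A] [Algebra F A] {p : ι → A}

theorem pairwise_commute_one_sub (c : F) (hp : ∀ i j, Commute (p i) (p j)) (s : Set ι) :
    s.Pairwise (Function.onFun Commute fun j => 1 - c • p j) := fun i _ j _ _ =>
  (Commute.one_left _).sub_left ((Commute.one_right _).sub_right
    (((hp i j).smul_left c).smul_right c))

variable [Fintype ι]

/-- The product of the complements `1 - c p_j` of commuting elements `c p_j`. When the `c p_j` are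
idempotent, it is the largest idempotent annihilated by all of them. -/
def prodOneSub (c : F) (hp : ∀ i j, Commute (p i) (p j)) : A :=
  Finset.univ.noncommProd (fun j => 1 - c • p j) (pairwise_commute_one_sub c hp _)

variable {c : F} (hp : ∀ i j, Commute (p i) (p j))

theorem commute_prodOneSub_self (j : ι) : Commute (p j) (prodOneSub c hp) :=
  Finset.noncommProd_commute _ _ _ _ fun i _ =>
    (Commute.one_right _).sub_right ((hp j i).smul_right c)

theorem mul_prodOneSub_eq_zero (hc : ∀ j, c • (p j * p j) = p j) (j : ι) :
    p j * prodOneSub c hp = 0 := by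
  classical
  rw [prodOneSub, ← Finset.mul_noncommProd_erase _ (Finset.mem_univ j), ← mul_assoc, mul_sub,
    mul_one, mul_smul_comm, hc, sub_self, zero_mul]

theorem prodOneSub_mul_eq_self {z : A} (hz : ∀ j, p j * z = 0) : prodOneSub c hp * z = z :=
  Finset.noncommProd_induction _ _ _ (fun a => a * z = z)
    (fun a b ha hb => by rw [mul_assoc, hb, ha]) (one_mul z)
    fun j _ => by rw [sub_mul, one_mul, smul_mul_assoc, hz, smul_zero, sub_zero]

theorem mul_prodOneSub_eq_self {z : A} (hz : ∀ j, z * p j = 0) : z * prodOneSub c hp = z :=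
  Finset.noncommProd_induction _ _ _ (fun a => z * a = z)
    (fun a b ha hb => by rw [← mul_assoc, ha, hb]) (mul_one z)
    fun j _ => by rw [mul_sub, mul_one, mul_smul_comm, hz, smul_zero, sub_zero]

theorem commute_prodOneSub (hc : ∀ j, c • (p j * p j) = p j) {b : A}
    (hbp : ∀ j, ∃ i, b * p j = p i * b) (hpb : ∀ j, ∃ i, p j * b = b * p i) :
    Commute b (prodOneSub c hp) := by
  have hleft : prodOneSub c hp * (b * prodOneSub c hp) = b * prodOneSub c hp := by
    refine prodOneSub_mul_eq_self hp fun j => ?_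
    obtain ⟨i, hi⟩ := hpb j
    rw [← mul_assoc, hi, mul_assoc, mul_prodOneSub_eq_zero hp hc, mul_zero]
  have hright : prodOneSub c hp * b * prodOneSub c hp = prodOneSub c hp * b := by
    refine mul_prodOneSub_eq_self hp fun j => ?_
    obtain ⟨i, hi⟩ := hbp j
    rw [mul_assoc, hi, ← mul_assoc, ← commute_prodOneSub_self hp i, mul_prodOneSub_eq_zero hp hc,
      zero_mul]
  rw [Commute, SemiconjBy, ← hleft, ← mul_assoc, hright]

end ProdOneSub

/-! ### Reduction of braided rook algebras to braid groups -/

namespace BRAlg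
variable {F : Type} [CommRing F] {n : ℕ} {e : F}

/-- The diagram whose strands `i` and `i + 1` cross positively. -/
def b (i : Fin (n - 1)) : BRAlg F n e := RingQuot.mkAlgHom F _ (BRb F n i)

/-- The diagram whose strands `i` and `i + 1` cross negatively. -/
def bInv (i : Fin (n - 1)) : BRAlg F n e := RingQuot.mkAlgHom F _ (BRbi F n i)

/-- The identity diagram with the strand `j` deleted. -/
def p (j : Fin n) : BRAlg F n e := RingQuot.mkAlgHom F _ (BRp F n j)

@[elab_as_elim]
theorem induction {P : BRAlg F n e → Prop} (algebraMap : ∀ c : F, P (algebraMap F _ c))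
    (b : ∀ i, P (b i)) (bInv : ∀ i, P (bInv i)) (p : ∀ j, P (p j))
    (add : ∀ x y, P x → P y → P (x + y)) (mul : ∀ x y, P x → P y → P (x * y))
    (x : BRAlg F n e) : P x := by
  obtain ⟨y, rfl⟩ := RingQuot.mkAlgHom_surjective F (BRRel F n e) x
  induction y with
  | grade0 c => rw [AlgHom.commutes]; exact algebraMap c
  | grade1 g =>
    cases g with
    | b i => exact b i
    | bi i => exact bInv i
    | p j => exact p j
  | mul x y hx hy => rw [map_mul]; exact mul _ _ hx hy
  | add x y hx hy => rw [map_add]; exact add _ _ hx hy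

theorem algHom_ext {A : Type*} [Ring A] [Algebra F A] {φ ψ : BRAlg F n e →ₐ[F] A}
    (b : ∀ i, φ (b i) = ψ (b i)) (bInv : ∀ i, φ (bInv i) = ψ (bInv i))
    (p : ∀ j, φ (p j) = ψ (p j)) : φ = ψ :=
  RingQuot.ringQuot_ext' _ _ _ (FreeAlgebra.hom_ext (funext fun
    | .b i => b i
    | .bi i => bInv i
    | .p j => p j))

theorem b_mul_bInv (i : Fin (n - 1)) : (b i * bInv i : BRAlg F n e) = 1 := by
  simpa only [map_mul, map_one, b, bInv] using
    RingQuot.mkAlgHom_rel F (BRRel.b_inv_r (ε := e) i)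

theorem bInv_mul_b (i : Fin (n - 1)) : (bInv i * b i : BRAlg F n e) = 1 := by
  simpa only [map_mul, map_one, b, bInv] using
    RingQuot.mkAlgHom_rel F (BRRel.b_inv_l (ε := e) i)

theorem b_mul_b_mul_b {i j : Fin (n - 1)} (h : (j : ℕ) = i + 1) :
    (b i * b j * b i : BRAlg F n e) = b j * b i * b j := by
  simpa only [map_mul, b] using RingQuot.mkAlgHom_rel F (BRRel.b_braid (ε := e) i j h)

theorem b_mul_b {i j : Fin (n - 1)} (h : (i : ℕ) + 1 < j) :
    (b i * b j : BRAlg F n e) = b j * b i := by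
  simpa only [map_mul, b] using RingQuot.mkAlgHom_rel F (BRRel.bb_comm (ε := e) i j h)

theorem p_mul_self (j : Fin n) : (p j * p j : BRAlg F n e) = e • p j := by
  simpa only [map_mul, map_smul, p] using RingQuot.mkAlgHom_rel F (BRRel.p_sq (ε := e) j)

theorem commute_p (i j : Fin n) : Commute (p i : BRAlg F n e) (p j) := by
  have hlt {i j : Fin n} (h : (i : ℕ) < j) : (p i * p j : BRAlg F n e) = p j * p i := by
    simpa only [map_mul, p] using RingQuot.mkAlgHom_rel F (BRRel.pp_comm (ε := e) i j h)
  rcases lt_trichotomy i j with h | rfl | h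
  · exact hlt h
  · exact Commute.refl _
  · exact (hlt h).symm

/-- The transposition of `i` and `i + 1`. -/
def swap (i : Fin (n - 1)) : Equiv.Perm (Fin n) :=
  Equiv.swap ⟨i, by omega⟩ ⟨i + 1, by omega⟩

theorem b_mul_p (i : Fin (n - 1)) (j : Fin n) :
    (b i * p j : BRAlg F n e) = p (swap i j) * b i := by
  rcases eq_or_ne j ⟨i, by omega⟩ with rfl | h
  · rw [swap, Equiv.swap_apply_left]
    simpa only [map_mul, b, p] using
      RingQuot.mkAlgHom_rel F (BRRel.bp_slide (ε := e) i _ _ rfl rfl)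
  rcases eq_or_ne j ⟨i + 1, by omega⟩ with rfl | h'
  · rw [swap, Equiv.swap_apply_right]
    simpa only [map_mul, b, p] using
      RingQuot.mkAlgHom_rel F (BRRel.bp_slide' (ε := e) i _ _ rfl rfl)
  · rw [swap, Equiv.swap_apply_of_ne_of_ne h h']
    simpa only [map_mul, b, p] using RingQuot.mkAlgHom_rel F
      (BRRel.bp_comm (ε := e) i j ⟨fun hj => h (Fin.ext hj), fun hj => h' (Fin.ext hj)⟩)

theorem BRaug_b (i : Fin (n - 1)) : BRaug F n e (b i) = 1 := by
  simp only [BRaug, b, RingQuot.liftAlgHom_mkAlgHom_apply, FreeAlgebra.lift_ι_apply]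

theorem BRaug_bInv (i : Fin (n - 1)) : BRaug F n e (bInv i) = 1 := by
  simp only [BRaug, bInv, RingQuot.liftAlgHom_mkAlgHom_apply, FreeAlgebra.lift_ι_apply]

theorem BRaug_p (j : Fin n) : BRaug F n e (p j) = 0 := by
  simp only [BRaug, p, RingQuot.liftAlgHom_mkAlgHom_apply, FreeAlgebra.lift_ι_apply]

theorem BRincl_b (i : Fin (n - 1 - 1)) :
    BRincl F n e (b i) = b (Fin.castLE (Nat.sub_le _ _) i) := by
  simp only [BRincl, b, BRGenMap, RingQuot.liftAlgHom_mkAlgHom_apply, AlgHom.comp_apply,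
    FreeAlgebra.lift_ι_apply]

theorem BRincl_bInv (i : Fin (n - 1 - 1)) :
    BRincl F n e (bInv i) = bInv (Fin.castLE (Nat.sub_le _ _) i) := by
  simp only [BRincl, bInv, BRGenMap, RingQuot.liftAlgHom_mkAlgHom_apply, AlgHom.comp_apply,
    FreeAlgebra.lift_ι_apply]

theorem BRincl_p (j : Fin (n - 1)) :
    BRincl F n e (p j) = p (Fin.castLE (Nat.sub_le _ _) j) := by
  simp only [BRincl, p, BRGenMap, RingQuot.liftAlgHom_mkAlgHom_apply, AlgHom.comp_apply,
    FreeAlgebra.lift_ι_apply]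

section ToGroupAlgebra
variable (F n e)

/-- The quotient of the braided rook algebra by the diagrams with a missing strand. -/
def toGroupAlgebra : BRAlg F n e →ₐ[F] MonoidAlgebra F (BraidGroup n) :=
  RingQuot.liftAlgHom F ⟨FreeAlgebra.lift F fun
    | .b i => MonoidAlgebra.single (BraidGroup.σ n i) 1
    | .bi i => MonoidAlgebra.single (BraidGroup.σ n i)⁻¹ 1
    | .p _ => 0, by
    intro x y h
    cases h with
    | b_braid i j h =>
      simp only [map_mul, FreeAlgebra.lift_ι_apply, MonoidAlgebra.single_mul_single,
        BraidGroup.σ_mul_σ_mul_σ h]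
    | bb_comm i j h =>
      simp only [map_mul, FreeAlgebra.lift_ι_apply, MonoidAlgebra.single_mul_single,
        BraidGroup.σ_mul_σ h]
    | _ => simp [FreeAlgebra.lift_ι_apply, MonoidAlgebra.single_mul_single,
        MonoidAlgebra.one_def]⟩

/-- The positive crossings as invertible diagrams, extended to braids. -/
def ofBraidGroup : BraidGroup n →* (BRAlg F n e)ˣ :=
  BraidGroup.lift (fun i => ⟨b i, bInv i, b_mul_bInv i, bInv_mul_b i⟩)
    (fun _ _ h => Units.ext (b_mul_b h)) (fun _ _ h => Units.ext (b_mul_b_mul_b h))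

/-- The inclusion of the span of the diagrams without missing strand. -/
def ofGroupAlgebra : MonoidAlgebra F (BraidGroup n) →ₐ[F] BRAlg F n e :=
  MonoidAlgebra.lift F _ _ ((Units.coeHom _).comp (ofBraidGroup F n e))

variable {F n e}

theorem toGroupAlgebra_b (i : Fin (n - 1)) :
    toGroupAlgebra F n e (b i) = MonoidAlgebra.single (BraidGroup.σ n i) 1 := by
  simp only [toGroupAlgebra, b, RingQuot.liftAlgHom_mkAlgHom_apply, FreeAlgebra.lift_ι_apply]

theorem toGroupAlgebra_bInv (i : Fin (n - 1)) :
    toGroupAlgebra F n e (bInv i) = MonoidAlgebra.single (BraidGroup.σ n i)⁻¹ 1 := by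
  simp only [toGroupAlgebra, bInv, RingQuot.liftAlgHom_mkAlgHom_apply, FreeAlgebra.lift_ι_apply]

theorem toGroupAlgebra_p (j : Fin n) : toGroupAlgebra F n e (p j) = 0 := by
  simp only [toGroupAlgebra, p, RingQuot.liftAlgHom_mkAlgHom_apply, FreeAlgebra.lift_ι_apply]

theorem ofBraidGroup_σ (i : Fin (n - 1)) :
    ofBraidGroup F n e (BraidGroup.σ n i) = ⟨b i, bInv i, b_mul_bInv i, bInv_mul_b i⟩ :=
  BraidGroup.lift_σ _ _ _ i

theorem ofGroupAlgebra_single (g : BraidGroup n) :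
    ofGroupAlgebra F n e (MonoidAlgebra.single g 1) = ofBraidGroup F n e g := by
  rw [ofGroupAlgebra, MonoidAlgebra.lift_single, one_smul]
  rfl

theorem toGroupAlgebra_ofBraidGroup (g : BraidGroup n) :
    toGroupAlgebra F n e (ofBraidGroup F n e g) = MonoidAlgebra.single g 1 := by
  have hhom : (Units.map (toGroupAlgebra F n e : _ →* MonoidAlgebra F (BraidGroup n))).comp
      (ofBraidGroup F n e) = (MonoidAlgebra.of F (BraidGroup n)).toHomUnits := by
    refine PresentedGroup.ext fun i => Units.ext ?_
    change toGroupAlgebra F n e (ofBraidGroup F n e (BraidGroup.σ n i)).val = _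
    rw [ofBraidGroup_σ]
    exact toGroupAlgebra_b i
  exact congrArg Units.val (DFunLike.congr_fun hhom g)

theorem toGroupAlgebra_comp_ofGroupAlgebra :
    (toGroupAlgebra F n e).comp (ofGroupAlgebra F n e) = AlgHom.id F _ :=
  MonoidAlgebra.algHom_ext
    (fun g => by rw [AlgHom.comp_apply, ofGroupAlgebra_single, toGroupAlgebra_ofBraidGroup]; rfl)
    (Subsingleton.elim _ _)

theorem groupAug_comp_toGroupAlgebra :
    (groupAug F (BraidGroup n)).comp (toGroupAlgebra F n e) = BRaug F n e :=
  algHom_ext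
    (fun i => by rw [AlgHom.comp_apply, toGroupAlgebra_b, groupAug_single, BRaug_b])
    (fun i => by rw [AlgHom.comp_apply, toGroupAlgebra_bInv, groupAug_single, BRaug_bInv])
    (fun j => by rw [AlgHom.comp_apply, toGroupAlgebra_p, map_zero, BRaug_p])

theorem toGroupAlgebra_comp_BRincl : (toGroupAlgebra F n e).comp (BRincl F n e)
    = (BraidGroup.algStabilize F n).comp (toGroupAlgebra F (n - 1) e) :=
  algHom_ext
    (fun i => by
      rw [AlgHom.comp_apply, AlgHom.comp_apply, BRincl_b, toGroupAlgebra_b, toGroupAlgebra_b,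
        BraidGroup.algStabilize_single, BraidGroup.stabilize_σ])
    (fun i => by
      rw [AlgHom.comp_apply, AlgHom.comp_apply, BRincl_bInv, toGroupAlgebra_bInv,
        toGroupAlgebra_bInv, BraidGroup.algStabilize_single, map_inv, BraidGroup.stabilize_σ])
    (fun j => by
      rw [AlgHom.comp_apply, AlgHom.comp_apply, BRincl_p, toGroupAlgebra_p, toGroupAlgebra_p,
        map_zero])

end ToGroupAlgebra

section FullIdempotent

/-- The idempotent annihilating every diagram with a missing strand, where `c` is an inverse
of `e`. -/
def fullIdempotent (c : F) : BRAlg F n e := prodOneSub c commute_p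

variable {c : F}

theorem BRaug_fullIdempotent : BRaug F n e (fullIdempotent c) = 1 := by
  rw [fullIdempotent, prodOneSub]
  refine Finset.noncommProd_induction _ _ _ (fun x => BRaug F n e x = 1)
    (fun x y hx hy => by rw [map_mul, hx, hy, one_mul]) (map_one _) fun j _ => ?_
  rw [map_sub, map_one, map_smul, BRaug_p, smul_zero, sub_zero]

theorem smul_p_mul_self (hc : c * e = 1) (j : Fin n) :
    c • (p j * p j) = (p j : BRAlg F n e) := by
  rw [p_mul_self, smul_smul, hc, one_smul]

theorem p_mul_fullIdempotent (hc : c * e = 1) (j : Fin n) :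
    (p j * fullIdempotent c : BRAlg F n e) = 0 :=
  mul_prodOneSub_eq_zero commute_p (smul_p_mul_self hc) j

theorem commute_fullIdempotent (hc : c * e = 1) (x : BRAlg F n e) :
    Commute x (fullIdempotent c) := by
  have hb (i : Fin (n - 1)) : Commute (b i : BRAlg F n e) (fullIdempotent c) := by
    refine commute_prodOneSub commute_p (smul_p_mul_self hc) (fun j => ⟨_, b_mul_p i j⟩)
      fun j => ⟨swap i j, ?_⟩
    rw [b_mul_p, swap, Equiv.swap_apply_self]
  induction x using BRAlg.induction with
  | algebraMap r => exact Algebra.commutes r _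
  | b i => exact hb i
  | bInv i => exact (hb i).units_inv_left (u := ⟨b i, bInv i, b_mul_bInv i, bInv_mul_b i⟩)
  | p j => exact commute_prodOneSub_self commute_p j
  | add x y hx hy => exact hx.add_left hy
  | mul x y hx hy => exact hx.mul_left hy

theorem mul_fullIdempotent_eq (hc : c * e = 1) (x : BRAlg F n e) :
    x * fullIdempotent c = fullIdempotent c * ofGroupAlgebra F n e (toGroupAlgebra F n e x) := by
  induction x using BRAlg.induction with
  | algebraMap r => rw [AlgHom.commutes, AlgHom.commutes, Algebra.commutes]
  | b i =>
    rw [toGroupAlgebra_b, ofGroupAlgebra_single, ofBraidGroup_σ]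
    exact commute_fullIdempotent hc _
  | bInv i =>
    rw [toGroupAlgebra_bInv, ofGroupAlgebra_single, map_inv, ofBraidGroup_σ]
    exact commute_fullIdempotent hc _
  | p j => rw [p_mul_fullIdempotent hc, toGroupAlgebra_p, map_zero, mul_zero]
  | add x y hx hy => rw [add_mul, hx, hy, ← mul_add, ← map_add, ← map_add]
  | mul x y hx hy => rw [mul_assoc, hy, ← mul_assoc, hx, mul_assoc, ← map_mul, ← map_mul]

end FullIdempotent

theorem torMap_toGroupAlgebra_bijective (he : IsUnit e) (n q : ℕ) :
    Function.Bijective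
      (torMap F _ _ (toGroupAlgebra F n e) groupAug_comp_toGroupAlgebra q) := by
  obtain ⟨c, hc⟩ := he.exists_left_inv
  exact torMap_bijective_of_section toGroupAlgebra_comp_ofGroupAlgebra (mul_fullIdempotent_eq hc)
    groupAug_comp_toGroupAlgebra BRaug_fullIdempotent q

end BRAlg

/-- **Homological stability for braided rook algebras.**
Let `k` be a commutative unital ring and `ε ∈ k` invertible.  The morphism
`Tor_q^{BR_{n-1}(ε)}(𝟙,𝟙) → Tor_q^{BR_n(ε)}(𝟙,𝟙)` induced by the inclusion
`BR_{n-1}(ε) → BR_n(ε)` is an isomorphism for `n ≥ 2q+1`. -/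
theorem braided_rook_homological_stability (k : Type) [CommRing k] (ε : k)
    (hε : IsUnit ε) (n q : ℕ) (h : 2 * q + 1 ≤ n) :
    Function.Bijective
      (torMap k (BRaug k (n - 1) ε) (BRaug k n ε) (BRincl k n ε) (BRaug_incl k n ε) q) := by
  have hsquare :
      torMap k _ _ _ BRAlg.groupAug_comp_toGroupAlgebra q ∘
          torMap k _ _ _ (BRaug_incl k n ε) q =
        torMap k _ _ _ (BraidGroup.groupAug_comp_algStabilize k n) q ∘
          torMap k _ _ _ BRAlg.groupAug_comp_toGroupAlgebra q := by
    funext t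
    simp only [Function.comp_apply, torMap_torMap, BRAlg.toGroupAlgebra_comp_BRincl]
  have hreduce (m : ℕ) := BRAlg.torMap_toGroupAlgebra_bijective hε m q
  rw [← Function.Bijective.of_comp_iff' (hreduce n), hsquare]
  exact (BraidGroup.torMap_algStabilize_bijective h).comp (hreduce (n - 1))

end
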